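/- Let A be a finite-valued Young function satisfying the Δ₂ condition (there is C > 0 with A(2t) ≤ C·A(t) for all t > 0) and the ∇₂ condition (there is c > 0 with A(t) ≤ (1/(2c))·A(ct) for all t > 0). Then for every measurable f : ℝ → ℝ with ∫_ℝ A(c|f|) < ∞ for some c > 0, one has lim_{n→∞} ∫_ℝ A(|χ_n · S_n(f·χ_n) − f|) = 0. -/

import Mathlib

open MeasureTheory Filter Set

/-- The `k`-th Hermite function
`h_k(x) = (-1)^k π^{-1/4} 2^{-k/2} (k!)^{-1/2} e^{x²/2} (d^k/dx^k)(e^{-x²})`. -/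
noncomputable def hermiteFun (k : ℕ) (x : ℝ) : ℝ :=
  (-1 : ℝ) ^ k *
    (Real.pi ^ (-(1 : ℝ) / 4) * (2 : ℝ) ^ (-(k : ℝ) / 2) *
      ((k.factorial : ℝ)) ^ (-(1 : ℝ) / 2)) *
    Real.exp (x ^ 2 / 2) * iteratedDeriv k (fun y : ℝ => Real.exp (-y ^ 2)) x

/-- The `n`-th partial sum of the Hermite series of `f`:
`S_n f = ∑_{k=0}^n (∫ f h_k) h_k`. -/
noncomputable def hermitePartialSum (n : ℕ) (f : ℝ → ℝ) (x : ℝ) : ℝ :=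
  ∑ k ∈ Finset.range (n + 1), (∫ y : ℝ, f y * hermiteFun k y) * hermiteFun k x

/-- A Young function: `[0,∞] `-valued, convex, left-continuous, vanishing at `0` and
not constant on `(0,∞)`.  (The values on negative reals are irrelevant.) -/
structure YoungFunction where
  toFun : ℝ → ENNReal
  zero' : toFun 0 = 0
  convex' : ∀ ⦃x y a b : ℝ⦄, 0 ≤ x → 0 ≤ y → 0 ≤ a → 0 ≤ b → a + b = 1 →
    toFun (a * x + b * y) ≤ ENNReal.ofReal a * toFun x + ENNReal.ofReal b * toFun y
  leftContinuous' : ∀ t : ℝ, 0 < t →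
    Filter.Tendsto toFun (nhdsWithin t (Set.Iio t)) (nhds (toFun t))
  nonconstant' : ∃ s t : ℝ, 0 < s ∧ 0 < t ∧ toFun s ≠ toFun t

/-- The conjugate Young function `Ã(t) = sup_{τ ≥ 0} (τ·t − A(τ))`. -/
noncomputable def YoungFunction.conj (A : YoungFunction) (t : ℝ) : ENNReal :=
  ⨆ τ : {τ : ℝ // 0 ≤ τ}, ENNReal.ofReal (τ.1 * t) - A.toFun τ.1

/-!
The Christoffel–Darboux formula writes the `n`-th Hermite kernel as a commutator of consecutive
Hermite functions. Both functions solve perturbed oscillators with frequency of order `√n`, so on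
`(-T, T)` they are sinusoids up to an error of order `T³ / √n`, and the Hermite kernel is the sinc
kernel, times an amplitude tending to `1 / π`, up to an error dominated by a small multiple of a
Poisson kernel.

Convolution with a sinc kernel is a combination of modulated Hilbert transforms. Their `Lᵖ` bounds
come, as in M. Riesz's proof, from Cauchy's theorem for powers of the holomorphic extension of a
nonnegative function to the upper half-plane. The `Δ₂` and `∇₂` conditions give a Young function
power growth with exponents strictly between `1` and `∞`, which lets Marcinkiewicz interpolation
apply to the modular itself. The resulting uniform modular bounds reduce convergence to smooth
compactly supported functions.
-/

/-! ### Even Young functions and modulars -/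

/-- Finite Young functions, extended evenly to the line: even convex functions vanishing at the
origin. -/
structure IsEvenYoung (φ : ℝ → ℝ) : Prop where
  convex : ConvexOn ℝ univ φ
  even : ∀ t, φ (-t) = φ t
  zero : φ 0 = 0

/-- Even Young functions satisfying the `Δ₂` condition with constant `D`. -/
structure IsDelta2Young (φ : ℝ → ℝ) (D : ℝ) : Prop extends IsEvenYoung φ where
  one_le : 1 ≤ D
  map_two_mul_le : ∀ t, φ (2 * t) ≤ D * φ t

/-- Even Young functions satisfying the `∇₂` condition with dilation `c`. -/
structure IsNabla2Young (φ : ℝ → ℝ) (c : ℝ) : Prop extends IsEvenYoung φ where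
  one_lt : 1 < c
  two_mul_le_map : ∀ t, 2 * c * φ t ≤ φ (c * t)

/-- Even Young functions satisfying both the `Δ₂` condition with constant `D` and the `∇₂`
condition with dilation `c`. -/
structure IsRegularYoung (φ : ℝ → ℝ) (D c : ℝ) : Prop
  extends IsDelta2Young φ D, IsNabla2Young φ c

/-- The modular `∫ φ(f) dμ` of an Orlicz space. It is meant for nonnegative `φ`: negative values
of `φ` count as zero. -/
noncomputable def modular {α : Type*} [MeasurableSpace α] (φ : ℝ → ℝ) (f : α → ℝ)
    (μ : Measure α := by volume_tac) : ENNReal :=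
  ∫⁻ x, ENNReal.ofReal (φ (f x)) ∂μ

namespace IsEvenYoung

variable {φ : ℝ → ℝ}

theorem nonneg (h : IsEvenYoung φ) (t : ℝ) : 0 ≤ φ t := by
  have hmid := h.convex.2 (mem_univ t) (mem_univ (-t)) (by norm_num : (0 : ℝ) ≤ 1 / 2)
    (by norm_num : (0 : ℝ) ≤ 1 / 2) (by norm_num)
  simp only [smul_eq_mul, h.even] at hmid
  rw [show 1 / 2 * t + 1 / 2 * -t = 0 by ring, h.zero] at hmid
  linarith

theorem continuous (h : IsEvenYoung φ) : Continuous φ :=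
  continuousOn_univ.mp (h.convex.continuousOn isOpen_univ)

theorem map_mul_le (h : IsEvenYoung φ) {k : ℝ} (hk : 0 ≤ k) (hk1 : k ≤ 1) (t : ℝ) :
    φ (k * t) ≤ k * φ t := by
  simpa [h.zero] using h.convex.2 (mem_univ t) (mem_univ 0) hk (sub_nonneg.2 hk1)
    (add_sub_cancel k 1)

theorem map_abs (h : IsEvenYoung φ) (t : ℝ) : φ |t| = φ t := by
  rcases abs_choice t with ht | ht <;> rw [ht]
  exact h.even t

theorem mono (h : IsEvenYoung φ) {s t : ℝ} (hst : |s| ≤ |t|) : φ s ≤ φ t := by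
  rw [← h.map_abs s, ← h.map_abs t]
  rcases (abs_nonneg t).eq_or_lt with ht | ht
  · rw [← ht] at hst
    rw [le_antisymm hst (abs_nonneg s), ← ht]
  · have hratio : |s| / |t| ≤ 1 := (div_le_one ht).2 hst
    calc φ |s| = φ (|s| / |t| * |t|) := by rw [div_mul_cancel₀ _ ht.ne']
      _ ≤ |s| / |t| * φ |t| := h.map_mul_le (by positivity) hratio _
      _ ≤ φ |t| := mul_le_of_le_one_left (h.nonneg _) hratio

theorem map_add_le (h : IsEvenYoung φ) (s t : ℝ) :
    φ (s + t) ≤ φ (2 * s) + φ (2 * t) := by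
  have hmid := h.convex.2 (mem_univ (2 * s)) (mem_univ (2 * t)) (by norm_num : (0 : ℝ) ≤ 1 / 2)
    (by norm_num : (0 : ℝ) ≤ 1 / 2) (by norm_num)
  simp only [smul_eq_mul] at hmid
  rw [show 1 / 2 * (2 * s) + 1 / 2 * (2 * t) = s + t by ring] at hmid
  linarith [h.nonneg (2 * s), h.nonneg (2 * t)]

theorem map_le_div_mul (h : IsEvenYoung φ) {t L : ℝ} (hL : 0 < L) (ht : |t| ≤ L) :
    φ t ≤ φ L / L * |t| := by
  have hchord := h.map_mul_le (k := |t| / L) (by positivity) ((div_le_one hL).2 ht) L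
  rw [div_mul_cancel₀ _ hL.ne', h.map_abs] at hchord
  exact hchord.trans_eq (by ring)

end IsEvenYoung

theorem isEvenYoung_rpow {p : ℝ} (hp : 1 ≤ p) : IsEvenYoung fun t => |t| ^ p where
  convex := by
    have habs : ConvexOn ℝ univ fun t : ℝ => |t| := convexOn_univ_norm
    have himage : (fun t : ℝ => |t|) '' univ = Ici 0 := by
      ext x
      exact ⟨fun ⟨y, _, hy⟩ => hy ▸ abs_nonneg y, fun hx => ⟨x, mem_univ _, abs_of_nonneg hx⟩⟩
    refine ConvexOn.comp (g := fun t : ℝ => t ^ p) ?_ habs ?_ <;> rw [himage]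
    · exact convexOn_rpow hp
    · exact fun x hx y _ hxy => Real.rpow_le_rpow hx hxy (by linarith)
  even t := by simp
  zero := by simp [Real.zero_rpow (by linarith : p ≠ 0)]

section Growth

variable {φ : ℝ → ℝ} {D c : ℝ}

theorem IsDelta2Young.nonneg_const (h : IsDelta2Young φ D) : 0 ≤ D := zero_le_one.trans h.one_le

theorem IsDelta2Young.map_two_pow_mul_le (h : IsDelta2Young φ D) (k : ℕ) (t : ℝ) :
    φ (2 ^ k * t) ≤ D ^ k * φ t := by
  induction k with
  | zero => simp
  | succ k ih =>
    calc φ (2 ^ (k + 1) * t) = φ (2 * (2 ^ k * t)) := by ring_nf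
      _ ≤ D * (D ^ k * φ t) :=
        (h.map_two_mul_le _).trans (mul_le_mul_of_nonneg_left ih h.nonneg_const)
      _ = D ^ (k + 1) * φ t := by ring

theorem IsNabla2Young.pow_mul_le_map (h : IsNabla2Young φ c) (k : ℕ) (t : ℝ) :
    (2 * c) ^ k * φ t ≤ φ (c ^ k * t) := by
  have hc : 0 < c := one_pos.trans h.one_lt
  induction k with
  | zero => simp
  | succ k ih =>
    calc (2 * c) ^ (k + 1) * φ t = (2 * c) * ((2 * c) ^ k * φ t) := by ring
      _ ≤ (2 * c) * φ (c ^ k * t) := by gcongr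
      _ ≤ φ (c * (c ^ k * t)) := h.two_mul_le_map _
      _ = φ (c ^ (k + 1) * t) := by ring_nf

theorem IsDelta2Young.exists_map_mul_le (h : IsDelta2Young φ D) (a : ℝ) :
    ∃ K, 0 ≤ K ∧ ∀ t, φ (a * t) ≤ K * φ t := by
  obtain ⟨k, hk⟩ := pow_unbounded_of_one_lt |a| (one_lt_two (α := ℝ))
  refine ⟨D ^ k, pow_nonneg h.nonneg_const k, fun t =>
    (h.mono ?_).trans (h.map_two_pow_mul_le k t)⟩
  rw [abs_mul, abs_mul, abs_of_pos (by positivity : (0 : ℝ) < 2 ^ k)]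
  gcongr

theorem IsDelta2Young.pos_of_ne_zero (h : IsDelta2Young φ D) {s t : ℝ} (hs : φ s ≠ 0)
    (ht : t ≠ 0) : 0 < φ t := by
  obtain ⟨K, hK, hKφ⟩ := h.exists_map_mul_le (s / t)
  have hst := hKφ t
  rw [div_mul_cancel₀ _ ht] at hst
  exact pos_of_mul_pos_right (((h.nonneg s).lt_of_ne' hs).trans_le hst) hK

theorem IsDelta2Young.exists_upper_growth (h : IsDelta2Young φ D) :
    ∃ q : ℝ, ∀ r t : ℝ, 1 ≤ r → φ (r * t) ≤ D * r ^ q * φ t := by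
  have hD : 0 < D := one_pos.trans_le h.one_le
  refine ⟨Real.logb 2 D, fun r t hr => ?_⟩
  obtain ⟨k, hkr, hrk⟩ := exists_nat_pow_near hr (by norm_num : (1 : ℝ) < 2)
  have hDk : D ^ k ≤ r ^ Real.logb 2 D := by
    calc D ^ k = ((2 : ℝ) ^ Real.logb 2 D) ^ k := by
          rw [Real.rpow_logb (by norm_num) (by norm_num) hD]
      _ = ((2 : ℝ) ^ k) ^ Real.logb 2 D := by
          rw [← Real.rpow_natCast, ← Real.rpow_natCast, ← Real.rpow_mul (by norm_num),
            ← Real.rpow_mul (by norm_num), mul_comm]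
      _ ≤ r ^ Real.logb 2 D :=
          Real.rpow_le_rpow (by positivity) hkr (Real.logb_nonneg (by norm_num) h.one_le)
  calc φ (r * t) ≤ φ (2 ^ (k + 1) * t) := h.mono (by
        rw [abs_mul, abs_mul, abs_of_pos (by linarith : 0 < r),
          abs_of_pos (by positivity : (0 : ℝ) < 2 ^ (k + 1))]
        gcongr)
    _ ≤ D ^ (k + 1) * φ t := h.map_two_pow_mul_le _ _
    _ = D * D ^ k * φ t := by ring
    _ ≤ D * r ^ Real.logb 2 D * φ t := by
        have := h.nonneg t
        gcongr

theorem IsNabla2Young.exists_lower_growth (h : IsNabla2Young φ c) :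
    ∃ p : ℝ, 1 < p ∧ ∀ r t : ℝ, 1 ≤ r → r ^ p * φ t ≤ 2 * c * φ (r * t) := by
  have hc1 := h.one_lt
  have hc : 0 < c := one_pos.trans hc1
  have hp : 1 < Real.logb c (2 * c) := by
    rw [Real.lt_logb_iff_rpow_lt hc1 (by positivity), Real.rpow_one]
    linarith
  refine ⟨Real.logb c (2 * c), hp, fun r t hr => ?_⟩
  obtain ⟨k, hkr, hrk⟩ := exists_nat_pow_near hr hc1
  have hck : r ^ Real.logb c (2 * c) ≤ (2 * c) ^ (k + 1) := by
    calc r ^ Real.logb c (2 * c) ≤ (c ^ (k + 1)) ^ Real.logb c (2 * c) :=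
          Real.rpow_le_rpow (by linarith) hrk.le (by linarith)
      _ = (c ^ Real.logb c (2 * c)) ^ (k + 1) := by
          rw [← Real.rpow_natCast, ← Real.rpow_natCast, ← Real.rpow_mul hc.le,
            ← Real.rpow_mul hc.le, mul_comm]
      _ = (2 * c) ^ (k + 1) := by rw [Real.rpow_logb hc hc1.ne' (by positivity)]
  calc r ^ Real.logb c (2 * c) * φ t ≤ (2 * c) ^ (k + 1) * φ t :=
        mul_le_mul_of_nonneg_right hck (h.nonneg t)
    _ = 2 * c * ((2 * c) ^ k * φ t) := by ring
    _ ≤ 2 * c * φ (c ^ k * t) := by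
        gcongr
        exact h.pow_mul_le_map k t
    _ ≤ 2 * c * φ (r * t) := by
        gcongr
        refine h.mono ?_
        rw [abs_mul, abs_mul, abs_of_pos (by linarith : 0 < r), abs_of_pos (by positivity)]
        gcongr

end Growth

section Modular

variable {α β : Type*} [MeasurableSpace α] [MeasurableSpace β] {μ : Measure α} {ν : Measure β}
  {φ : ℝ → ℝ} {D : ℝ} {f g : α → ℝ}

theorem IsEvenYoung.measurable_ofReal_comp (h : IsEvenYoung φ) (hf : Measurable f) :
    Measurable fun x => ENNReal.ofReal (φ (f x)) :=
  (h.continuous.measurable.comp hf).ennreal_ofReal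

theorem IsEvenYoung.modular_mono (h : IsEvenYoung φ) (hfg : ∀ x, |f x| ≤ |g x|) :
    modular φ f μ ≤ modular φ g μ :=
  lintegral_mono fun x => ENNReal.ofReal_le_ofReal (h.mono (hfg x))

theorem IsDelta2Young.modular_add_le (h : IsDelta2Young φ D) (hf : Measurable f) :
    modular φ (fun x => f x + g x) μ ≤
      ENNReal.ofReal D * (modular φ f μ + modular φ g μ) := by
  rw [modular, modular, modular, ← lintegral_add_left (h.measurable_ofReal_comp hf),
    ← lintegral_const_mul' _ _ ENNReal.ofReal_ne_top]
  refine lintegral_mono fun x => ?_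
  rw [← ENNReal.ofReal_add (h.nonneg _) (h.nonneg _), ← ENNReal.ofReal_mul h.nonneg_const, mul_add]
  exact ENNReal.ofReal_le_ofReal
    ((h.map_add_le _ _).trans (add_le_add (h.map_two_mul_le _) (h.map_two_mul_le _)))

theorem modular_mul_le {a K : ℝ} (hK : 0 ≤ K) (hφ : ∀ t, φ (a * t) ≤ K * φ t) :
    modular φ (fun x => a * f x) μ ≤ ENNReal.ofReal K * modular φ f μ := by
  rw [modular, modular, ← lintegral_const_mul' _ _ ENNReal.ofReal_ne_top]
  exact lintegral_mono fun x =>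
    (ENNReal.ofReal_le_ofReal (hφ _)).trans_eq (ENNReal.ofReal_mul hK)

theorem IsDelta2Young.modular_ne_top_of_mul (h : IsDelta2Young φ D) {a : ℝ} (ha : a ≠ 0)
    (hf : modular φ (fun x => a * f x) μ ≠ ⊤) : modular φ f μ ≠ ⊤ := by
  obtain ⟨K, hK, hKφ⟩ := h.exists_map_mul_le a⁻¹
  have hle := modular_mul_le (μ := μ) (f := fun x => a * f x) hK hKφ
  simp only [inv_mul_cancel_left₀ ha] at hle
  exact ne_top_of_le_ne_top (ENNReal.mul_ne_top ENNReal.ofReal_ne_top hf) hle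

theorem IsEvenYoung.integrable_indicator_of_modular_ne_top (h : IsEvenYoung φ) (h1 : 0 < φ 1)
    (hm : Measurable f) (hf : modular φ f μ ≠ ⊤) {s : Set α} (hs : MeasurableSet s)
    (hμs : μ s ≠ ⊤) : Integrable (indicator s f) μ := by
  rw [integrable_indicator_iff hs]
  have hφ : Integrable (fun x => φ (f x)) μ :=
    (lintegral_ofReal_ne_top_iff_integrable (h.continuous.measurable.comp hm).aestronglyMeasurable
      (ae_of_all _ fun x => h.nonneg _)).1 hf
  have hlinear : ∀ t, |t| ≤ 1 + (φ 1)⁻¹ * φ t := fun t => by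
    have ht0 := h.nonneg t
    rcases le_total |t| 1 with ht | ht
    · exact ht.trans (le_add_of_nonneg_right (by positivity))
    · have hL : 0 < |t| := one_pos.trans_le ht
      have hchord := h.map_le_div_mul (t := 1) hL (by simpa using ht)
      rw [h.map_abs, abs_one, mul_one, le_div_iff₀ hL, mul_comm, ← le_div_iff₀ h1,
        ← inv_mul_eq_div] at hchord
      linarith
  exact ((integrableOn_const (C := (1 : ℝ)) hμs).add
    (hφ.integrableOn.const_mul (φ 1)⁻¹)).mono' hm.aestronglyMeasurable
      (ae_of_all _ fun x => hlinear (f x))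

theorem IsEvenYoung.map_integral_le_modular [IsProbabilityMeasure μ] (h : IsEvenYoung φ)
    (hf : AEStronglyMeasurable f μ) :
    ENNReal.ofReal (φ (∫ x, f x ∂μ)) ≤ modular φ f μ := by
  by_cases hfi : Integrable f μ
  swap
  · simp [integral_undef hfi, h.zero]
  by_cases hφf : Integrable (φ ∘ f) μ
  · exact (ENNReal.ofReal_le_ofReal (h.convex.map_integral_le h.continuous.continuousOn
      isClosed_univ (by simp) hfi hφf)).trans_eq
        (ofReal_integral_eq_lintegral_ofReal hφf (ae_of_all _ fun x => h.nonneg _))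
  · have htop : modular φ f μ = ⊤ := by
      by_contra hne
      exact hφf ((lintegral_ofReal_ne_top_iff_integrable
        (h.continuous.comp_aestronglyMeasurable hf) (ae_of_all _ fun x => h.nonneg _)).1 hne)
    exact htop ▸ le_top

theorem IsEvenYoung.modular_integral_mul_le [SFinite μ] [SFinite ν] (h : IsEvenYoung φ)
    {k : β → α → ℝ} (hk : Measurable fun z : β × α => k z.1 z.2) (hk0 : ∀ x y, 0 ≤ k x y)
    (hk1 : ∀ x, ∫⁻ y, ENNReal.ofReal (k x y) ∂μ = 1)
    (hk1' : ∀ y, ∫⁻ x, ENNReal.ofReal (k x y) ∂ν ≤ 1) (hf : Measurable f) :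
    modular φ (fun x => ∫ y, k x y * f y ∂μ) ν ≤ modular φ f μ := by
  have hφf := h.measurable_ofReal_comp hf
  have hkx : ∀ x, Measurable fun y => ENNReal.ofReal (k x y) := fun x =>
    (hk.comp measurable_prodMk_left).ennreal_ofReal
  have hjensen : ∀ x, ENNReal.ofReal (φ (∫ y, k x y * f y ∂μ)) ≤
      ∫⁻ y, ENNReal.ofReal (k x y) * ENNReal.ofReal (φ (f y)) ∂μ := fun x => by
    have : IsProbabilityMeasure (μ.withDensity fun y => ENNReal.ofReal (k x y)) :=
      ⟨by simpa using hk1 x⟩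
    have hle := h.map_integral_le_modular
      (μ := μ.withDensity fun y => ENNReal.ofReal (k x y)) hf.aestronglyMeasurable
    rw [modular, lintegral_withDensity_eq_lintegral_mul _ (hkx x) hφf,
      integral_withDensity_eq_integral_toReal_smul (hkx x) (by simp)] at hle
    simpa [ENNReal.toReal_ofReal, hk0] using hle
  calc modular φ (fun x => ∫ y, k x y * f y ∂μ) ν
      ≤ ∫⁻ x, ∫⁻ y, ENNReal.ofReal (k x y) * ENNReal.ofReal (φ (f y)) ∂μ ∂ν :=
        lintegral_mono hjensen
    _ = ∫⁻ y, (∫⁻ x, ENNReal.ofReal (k x y) ∂ν) * ENNReal.ofReal (φ (f y)) ∂μ := by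
        rw [lintegral_lintegral_swap
          (hk.ennreal_ofReal.mul (hφf.comp measurable_snd)).aemeasurable]
        exact lintegral_congr fun y =>
          lintegral_mul_const _ (hk.comp measurable_prodMk_right).ennreal_ofReal
    _ ≤ modular φ f μ := lintegral_mono fun y => mul_le_of_le_one_left' (hk1' y)

end Modular

/-! ### Marcinkiewicz interpolation for modulars -/

/-- Even Young functions which, up to the constant `C`, grow at least like the power `p` and at
most like the power `q`. -/
structure HasPowerGrowth (φ : ℝ → ℝ) (p q C : ℝ) : Prop extends IsEvenYoung φ where
  const_nonneg : 0 ≤ C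
  rpow_mul_le_map : ∀ r t : ℝ, 1 ≤ r → r ^ p * φ t ≤ C * φ (r * t)
  map_mul_le_rpow : ∀ r t : ℝ, 1 ≤ r → φ (r * t) ≤ C * r ^ q * φ t

theorem IsRegularYoung.exists_hasPowerGrowth {φ : ℝ → ℝ} {D c : ℝ} (h : IsRegularYoung φ D c) :
    ∃ p q C : ℝ, 1 < p ∧ HasPowerGrowth φ p q C := by
  obtain ⟨q, hup⟩ := h.exists_upper_growth
  obtain ⟨p, hp, hlow⟩ := h.exists_lower_growth
  refine ⟨p, q, max D (2 * c), hp, h.toIsEvenYoung, h.nonneg_const.trans (le_max_left _ _),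
    fun r t hr => (hlow r t hr).trans ?_, fun r t hr => (hup r t hr).trans ?_⟩
  · exact mul_le_mul_of_nonneg_right (le_max_right _ _) (h.nonneg _)
  · have := h.nonneg t
    gcongr
    exact le_max_left _ _

/-- The gauge comparing `t` with the level `s`: a `p`-th power above the level and a `q`-th power
below it. Its integral bounds the distribution function of operators of types `(p, p)` and
`(q, q)`. -/
noncomputable def levelGauge (p q s t : ℝ) : ℝ :=
  if s < |t| then (|t| / s) ^ p else (|t| / s) ^ q

theorem measurable_levelGauge (p q s : ℝ) : Measurable (levelGauge p q s) := by
  unfold levelGauge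
  refine Measurable.ite (measurableSet_lt measurable_const (by fun_prop)) ?_ ?_ <;> fun_prop

theorem HasPowerGrowth.map_mul_levelGauge_le {φ : ℝ → ℝ} {p q p₁ q₁ C δ s t : ℝ}
    (h : HasPowerGrowth φ p₁ q₁ C) (hp : δ ≤ p₁ - p) (hq : δ ≤ q - q₁) (hs : 0 < s) (ht : t ≠ 0) :
    φ s * levelGauge p q s t ≤ C * φ t * max (|t| / s) (s / |t|) ^ (-δ) := by
  have ht0 : 0 < |t| := abs_pos.2 ht
  have hC := h.const_nonneg
  have hφt := h.nonneg t
  rw [levelGauge]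
  split_ifs with hst
  · have hr1 : 1 ≤ |t| / s := (one_le_div hs).2 hst.le
    have hmax : max (|t| / s) (s / |t|) = |t| / s :=
      max_eq_left (((div_le_one ht0).2 hst.le).trans hr1)
    have hlow := h.rpow_mul_le_map (|t| / s) s hr1
    rw [div_mul_cancel₀ _ hs.ne', h.map_abs] at hlow
    calc φ s * (|t| / s) ^ p = (|t| / s) ^ p₁ * φ s * (|t| / s) ^ (p - p₁) := by
          rw [Real.rpow_sub (by positivity)]
          field_simp
      _ ≤ C * φ t * (|t| / s) ^ (-δ) := by
          gcongr
          linarith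
      _ = _ := by rw [hmax]
  · have hts := not_lt.1 hst
    have hr1 : 1 ≤ s / |t| := (one_le_div ht0).2 hts
    have hmax : max (|t| / s) (s / |t|) = s / |t| :=
      max_eq_right (((div_le_one hs).2 hts).trans hr1)
    have hup := h.map_mul_le_rpow (s / |t|) |t| hr1
    rw [div_mul_cancel₀ _ ht0.ne', h.map_abs] at hup
    calc φ s * (|t| / s) ^ q ≤ C * (s / |t|) ^ q₁ * φ t * (|t| / s) ^ q := by gcongr
      _ = C * φ t * (s / |t|) ^ (q₁ - q) := by
          rw [← inv_div s |t|, Real.inv_rpow (by positivity), Real.rpow_sub (by positivity)]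
          field_simp
      _ ≤ C * φ t * (s / |t|) ^ (-δ) := by
          gcongr
          linarith
      _ = _ := by rw [hmax]

theorem two_pow_natAbs_sub_le {t : ℝ} {j j₀ : ℤ} (hlow : (2 : ℝ) ^ j₀ ≤ t)
    (hup : t < (2 : ℝ) ^ (j₀ + 1)) :
    (2 : ℝ) ^ (j - j₀).natAbs ≤ 2 * max (t / 2 ^ j) (2 ^ j / t) := by
  have ht : 0 < t := lt_of_lt_of_le (by positivity) hlow
  rcases le_total j j₀ with hj | hj
  · obtain ⟨m, hm⟩ := Int.le.dest hj
    rw [show (j - j₀).natAbs = m by omega]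
    have hle : (2 : ℝ) ^ m ≤ t / 2 ^ j := by
      rw [le_div_iff₀ (by positivity), ← zpow_natCast, ← zpow_add₀ two_ne_zero, add_comm, hm]
      exact hlow
    linarith [le_max_left (t / 2 ^ j) (2 ^ j / t), pow_pos (zero_lt_two (α := ℝ)) m]
  · obtain ⟨m, hm⟩ := Int.le.dest hj
    rw [show (j - j₀).natAbs = m by omega]
    refine le_trans ?_ (mul_le_mul_of_nonneg_left (le_max_right _ _) zero_le_two)
    rw [← mul_div_assoc, le_div_iff₀ ht]
    calc (2 : ℝ) ^ m * t ≤ 2 ^ m * 2 ^ (j₀ + 1) := by gcongr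
      _ = 2 * 2 ^ j := by
        rw [← hm, zpow_add₀ two_ne_zero, zpow_add₀ two_ne_zero, zpow_natCast]
        ring

theorem tsum_ofReal_pow_natAbs_sub {ρ : ℝ} (hρ0 : 0 ≤ ρ) (hρ1 : ρ < 1) (j₀ : ℤ) :
    ∑' j : ℤ, ENNReal.ofReal (ρ ^ (j - j₀).natAbs) =
      ENNReal.ofReal (∑' m : ℤ, ρ ^ m.natAbs) := by
  have hgeo := summable_geometric_of_lt_one hρ0 hρ1
  have hsum : Summable fun m : ℤ => ρ ^ m.natAbs :=
    Summable.of_nat_of_neg (by simpa using hgeo) (by simpa using hgeo)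
  rw [ENNReal.ofReal_tsum_of_nonneg (fun _ => by positivity) hsum]
  exact (Equiv.subRight j₀).tsum_eq fun m : ℤ => ENNReal.ofReal (ρ ^ m.natAbs)

theorem HasPowerGrowth.exists_tsum_levelGauge_le {φ : ℝ → ℝ} {p q p₁ q₁ C : ℝ}
    (h : HasPowerGrowth φ p₁ q₁ C) (hp : p < p₁) (hq : q₁ < q) (hq0 : 0 < q) :
    ∃ S : ℝ, ∀ t : ℝ, ∑' j : ℤ, ENNReal.ofReal (φ (2 ^ j) * levelGauge p q (2 ^ j) t) ≤
      ENNReal.ofReal S * ENNReal.ofReal (φ t) := by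
  obtain ⟨δ, hδ0, hδm⟩ := exists_between (lt_min (sub_pos.2 hp) (sub_pos.2 hq))
  obtain ⟨hδp, hδq⟩ := lt_min_iff.1 hδm
  have hC := h.const_nonneg
  set ρ : ℝ := 2 ^ (-δ) with hρ
  have hρ0 : 0 < ρ := by positivity
  have hρ1 : ρ < 1 := Real.rpow_lt_one_of_one_lt_of_neg one_lt_two (by linarith)
  have : 0 ≤ ∑' m : ℤ, ρ ^ m.natAbs := tsum_nonneg fun _ => by positivity
  refine ⟨C * ρ⁻¹ * ∑' m : ℤ, ρ ^ m.natAbs, fun t => ?_⟩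
  rcases eq_or_ne t 0 with rfl | ht
  · have hzero : ∀ j : ℤ, levelGauge p q (2 ^ j) 0 = 0 := fun j => by
      have hj : ¬ ((2 : ℝ) ^ j < 0) := not_lt.2 (by positivity)
      simp [levelGauge, hj, Real.zero_rpow hq0.ne']
    simp [hzero]
  obtain ⟨j₀, hj₀, hj₀'⟩ := exists_mem_Ico_zpow (y := (2 : ℝ)) (abs_pos.2 ht) one_lt_two
  have hφt := h.nonneg t
  have hdecay : ∀ j : ℤ, φ (2 ^ j) * levelGauge p q (2 ^ j) t ≤
      C * ρ⁻¹ * φ t * ρ ^ (j - j₀).natAbs := fun j => by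
    have hmax := two_pow_natAbs_sub_le (j := j) hj₀ hj₀'
    set m := max (|t| / 2 ^ j) (2 ^ j / |t|)
    have hm : 0 < m := by linarith [pow_pos (zero_lt_two (α := ℝ)) (j - j₀).natAbs]
    calc φ (2 ^ j) * levelGauge p q (2 ^ j) t ≤ C * φ t * m ^ (-δ) :=
          h.map_mul_levelGauge_le hδp.le hδq.le (by positivity) ht
      _ = C * ρ⁻¹ * φ t * (2 * m) ^ (-δ) := by
          rw [Real.mul_rpow zero_le_two hm.le, ← hρ]
          field_simp
      _ ≤ C * ρ⁻¹ * φ t * ((2 : ℝ) ^ (j - j₀).natAbs) ^ (-δ) :=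
          mul_le_mul_of_nonneg_left (Real.rpow_le_rpow_of_nonpos (by positivity) hmax
            (by linarith)) (by positivity)
      _ = C * ρ⁻¹ * φ t * ρ ^ (j - j₀).natAbs := by
          rw [hρ, ← Real.rpow_pow_comm zero_le_two]
  calc ∑' j : ℤ, ENNReal.ofReal (φ (2 ^ j) * levelGauge p q (2 ^ j) t)
      ≤ ∑' j : ℤ, ENNReal.ofReal (C * ρ⁻¹ * φ t) * ENNReal.ofReal (ρ ^ (j - j₀).natAbs) :=
        ENNReal.tsum_le_tsum fun j => (ENNReal.ofReal_le_ofReal (hdecay j)).trans_eq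
          (ENNReal.ofReal_mul (by positivity))
    _ = ENNReal.ofReal (C * ρ⁻¹ * φ t) * ENNReal.ofReal (∑' m : ℤ, ρ ^ m.natAbs) := by
        rw [ENNReal.tsum_mul_left, tsum_ofReal_pow_natAbs_sub hρ0.le hρ1]
    _ = ENNReal.ofReal (C * ρ⁻¹ * ∑' m : ℤ, ρ ^ m.natAbs) * ENNReal.ofReal (φ t) := by
        rw [← ENNReal.ofReal_mul (by positivity), ← ENNReal.ofReal_mul (by positivity)]
        ring_nf

theorem IsEvenYoung.modular_le_tsum {α : Type*} [MeasurableSpace α] {μ : Measure α} {φ : ℝ → ℝ}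
    (h : IsEvenYoung φ) {g : α → ℝ} (hg : Measurable g) :
    modular φ g μ ≤
      ∑' j : ℤ, ENNReal.ofReal (φ (4 * 2 ^ j)) * μ {x | 2 * (2 : ℝ) ^ j < |g x|} := by
  have hset : ∀ j : ℤ, MeasurableSet {x | 2 * (2 : ℝ) ^ j < |g x|} := fun j =>
    measurableSet_lt measurable_const (by fun_prop)
  have hlayer : ∀ x, ENNReal.ofReal (φ (g x)) ≤ ∑' j : ℤ,
      {x | 2 * (2 : ℝ) ^ j < |g x|}.indicator (fun _ => ENNReal.ofReal (φ (4 * 2 ^ j))) x := by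
    intro x
    rcases eq_or_ne (g x) 0 with hgx | hgx
    · simp [hgx, h.zero]
    obtain ⟨i, hlow, hup⟩ := exists_mem_Ioc_zpow (y := (2 : ℝ)) (abs_pos.2 hgx) one_lt_two
    have hdouble : 2 * (2 : ℝ) ^ (i - 1) = 2 ^ i := by
      rw [← zpow_one_add₀ two_ne_zero, add_sub_cancel]
    have hquad : 4 * (2 : ℝ) ^ (i - 1) = 2 ^ (i + 1) := by
      rw [zpow_add_one₀ two_ne_zero, ← hdouble]
      ring
    refine le_trans ?_ (ENNReal.le_tsum (i - 1))
    rw [indicator_of_mem (by simpa [hdouble] using hlow), hquad]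
    refine ENNReal.ofReal_le_ofReal (h.mono ?_)
    rwa [abs_of_pos (by positivity : (0 : ℝ) < 2 ^ (i + 1))]
  calc modular φ g μ ≤ ∫⁻ x, ∑' j : ℤ, {x | 2 * (2 : ℝ) ^ j < |g x|}.indicator
          (fun _ => ENNReal.ofReal (φ (4 * 2 ^ j))) x ∂μ := lintegral_mono hlayer
    _ = _ := by
        rw [lintegral_tsum fun j => (measurable_const.indicator (hset j)).aemeasurable]
        exact tsum_congr fun j => lintegral_indicator_const (hset j) _

section Interpolation

variable {α β : Type*} [MeasurableSpace α] [MeasurableSpace β] {μ : Measure α} {ν : Measure β}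
  {f : α → ℝ}

theorem HasPowerGrowth.exists_modular_le_of_measure_le {φ : ℝ → ℝ} {p q p₁ q₁ C : ℝ}
    (h : HasPowerGrowth φ p₁ q₁ C) (hp : p < p₁) (hq : q₁ < q) (hq0 : 0 < q) (K : ENNReal) :
    ∃ B : NNReal, ∀ (f : α → ℝ) (g : β → ℝ), Measurable f → Measurable g →
      (∀ s : ℝ, 0 < s → ν {x | 2 * s < |g x|} ≤
        K * ∫⁻ x, ENNReal.ofReal (levelGauge p q s (f x)) ∂μ) →
      modular φ g ν ≤ K * B * modular φ f μ := by
  obtain ⟨S, hsum⟩ := h.exists_tsum_levelGauge_le hp hq hq0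
  have hC := h.const_nonneg
  refine ⟨(C * 4 ^ q₁ * S).toNNReal, fun f g hf hg hfg => ?_⟩
  have hmeas : ∀ j : ℤ, Measurable fun x =>
      ENNReal.ofReal (φ (2 ^ j) * levelGauge p q (2 ^ j) (f x)) := fun j =>
    (((measurable_levelGauge p q _).comp hf).const_mul _).ennreal_ofReal
  have hterm : ∀ j : ℤ, ENNReal.ofReal (φ (4 * 2 ^ j)) * ν {x | 2 * (2 : ℝ) ^ j < |g x|} ≤
      K * ENNReal.ofReal (C * 4 ^ q₁) *
        ∫⁻ x, ENNReal.ofReal (φ (2 ^ j) * levelGauge p q (2 ^ j) (f x)) ∂μ := fun j => by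
    simp only [ENNReal.ofReal_mul (h.nonneg (2 ^ j))]
    calc ENNReal.ofReal (φ (4 * 2 ^ j)) * ν {x | 2 * (2 : ℝ) ^ j < |g x|}
        ≤ ENNReal.ofReal (C * 4 ^ q₁ * φ (2 ^ j)) * (K *
          ∫⁻ x, ENNReal.ofReal (levelGauge p q (2 ^ j) (f x)) ∂μ) :=
          mul_le_mul' (ENNReal.ofReal_le_ofReal (h.map_mul_le_rpow 4 _ (by norm_num)))
            (hfg _ (by positivity))
      _ = _ := by
          rw [lintegral_const_mul' _ _ ENNReal.ofReal_ne_top, ENNReal.ofReal_mul (by positivity)]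
          ring
  calc modular φ g ν
      ≤ ∑' j : ℤ, ENNReal.ofReal (φ (4 * 2 ^ j)) * ν {x | 2 * (2 : ℝ) ^ j < |g x|} :=
        h.modular_le_tsum hg
    _ ≤ K * ENNReal.ofReal (C * 4 ^ q₁) *
          ∫⁻ x, ∑' j : ℤ, ENNReal.ofReal (φ (2 ^ j) * levelGauge p q (2 ^ j) (f x)) ∂μ := by
        rw [lintegral_tsum fun j => (hmeas j).aemeasurable, ← ENNReal.tsum_mul_left]
        exact ENNReal.tsum_le_tsum hterm
    _ ≤ K * ENNReal.ofReal (C * 4 ^ q₁) *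
          ∫⁻ x, ENNReal.ofReal S * ENNReal.ofReal (φ (f x)) ∂μ := by
        gcongr
        exact hsum _
    _ = K * ENNReal.ofReal (C * 4 ^ q₁ * S) * modular φ f μ := by
        rw [lintegral_const_mul' _ _ ENNReal.ofReal_ne_top,
          ENNReal.ofReal_mul (p := C * 4 ^ q₁) (by positivity), modular]
        ring

theorem lintegral_levelGauge {p q s : ℝ} (hp : p ≠ 0) (hq : q ≠ 0) (hs : 0 < s)
    (hf : Measurable f) :
    ∫⁻ x, ENNReal.ofReal (levelGauge p q s (f x)) ∂μ =
      (ENNReal.ofReal (s ^ p))⁻¹ * modular (|·| ^ p) ({x | s < |f x|}.indicator f) μ +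
      (ENNReal.ofReal (s ^ q))⁻¹ * modular (|·| ^ q) ({x | s < |f x|}ᶜ.indicator f) μ := by
  have hS : MeasurableSet {x | s < |f x|} := measurableSet_lt measurable_const (by fun_prop)
  have hsplit : ∀ x, ENNReal.ofReal (levelGauge p q s (f x)) =
      ENNReal.ofReal (s ^ p)⁻¹ * ENNReal.ofReal (|{x | s < |f x|}.indicator f x| ^ p) +
      ENNReal.ofReal (s ^ q)⁻¹ * ENNReal.ofReal (|{x | s < |f x|}ᶜ.indicator f x| ^ q) := by
    intro x
    rw [← ENNReal.ofReal_mul (by positivity), ← ENNReal.ofReal_mul (by positivity), levelGauge,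
      Real.div_rpow (abs_nonneg _) hs.le, Real.div_rpow (abs_nonneg _) hs.le]
    by_cases hx : s < |f x|
    · simp [hx, Real.zero_rpow hq, div_eq_inv_mul]
    · simp [hx, Real.zero_rpow hp, div_eq_inv_mul]
  have : Measurable ({x | s < |f x|}.indicator f) := hf.indicator hS
  rw [lintegral_congr hsplit, lintegral_add_left (by fun_prop),
    lintegral_const_mul' _ _ ENNReal.ofReal_ne_top, lintegral_const_mul' _ _ ENNReal.ofReal_ne_top,
    ENNReal.ofReal_inv_of_pos (by positivity), ENNReal.ofReal_inv_of_pos (by positivity)]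
  rfl

theorem measure_lt_abs_le_modular_rpow {s p : ℝ} (hs : 0 < s) (hp : 0 < p) (hf : Measurable f) :
    μ {x | s < |f x|} ≤ (ENNReal.ofReal (s ^ p))⁻¹ * modular (|·| ^ p) f μ := by
  have hsp : 0 < s ^ p := by positivity
  rw [mul_comm, ← div_eq_mul_inv]
  refine (measure_mono fun x hx => ?_).trans
    (meas_ge_le_lintegral_div (by fun_prop) (by simpa using hsp) ENNReal.ofReal_ne_top)
  exact ENNReal.ofReal_le_ofReal (Real.rpow_le_rpow hs.le (le_of_lt hx) hp.le)

theorem measure_two_mul_lt_abs_le {p q s : ℝ} {K : ENNReal} (hp : 0 < p) (hq : 0 < q) (hs : 0 < s)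
    (hf : Measurable f) {g g₁ g₂ : β → ℝ} (hg₁ : Measurable g₁) (hg₂ : Measurable g₂)
    (hg : ∀ x, g x = g₁ x + g₂ x)
    (h₁ : modular (|·| ^ p) g₁ ν ≤ K * modular (|·| ^ p) ({x | s < |f x|}.indicator f) μ)
    (h₂ : modular (|·| ^ q) g₂ ν ≤ K * modular (|·| ^ q) ({x | s < |f x|}ᶜ.indicator f) μ) :
    ν {x | 2 * s < |g x|} ≤ K * ∫⁻ x, ENNReal.ofReal (levelGauge p q s (f x)) ∂μ := by
  have hsub : {x | 2 * s < |g x|} ⊆ {x | s < |g₁ x|} ∪ {x | s < |g₂ x|} := by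
    intro x hx
    by_contra hcon
    simp only [mem_union, mem_ofPred_eq, not_or, not_lt] at hcon hx
    rw [hg] at hx
    linarith [abs_add_le (g₁ x) (g₂ x)]
  calc ν {x | 2 * s < |g x|} ≤ ν {x | s < |g₁ x|} + ν {x | s < |g₂ x|} :=
        (measure_mono hsub).trans (measure_union_le _ _)
    _ ≤ (ENNReal.ofReal (s ^ p))⁻¹ *
          (K * modular (|·| ^ p) ({x | s < |f x|}.indicator f) μ) +
        (ENNReal.ofReal (s ^ q))⁻¹ *
          (K * modular (|·| ^ q) ({x | s < |f x|}ᶜ.indicator f) μ) :=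
        add_le_add ((measure_lt_abs_le_modular_rpow hs hp hg₁).trans (by gcongr))
          ((measure_lt_abs_le_modular_rpow hs hq hg₂).trans (by gcongr))
    _ = K * ∫⁻ x, ENNReal.ofReal (levelGauge p q s (f x)) ∂μ := by
        rw [lintegral_levelGauge hp.ne' hq.ne' hs hf]
        ring

end Interpolation

/-! ### Poisson and conjugate Poisson extensions -/

/-- The Poisson kernel of the upper half plane at height `η`. -/
noncomputable def poissonDensity (η u : ℝ) : ℝ := Real.pi⁻¹ * (η / (u ^ 2 + η ^ 2))

/-- The conjugate Poisson kernel of the upper half plane at height `η`. -/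
noncomputable def conjPoissonKernel (η u : ℝ) : ℝ := Real.pi⁻¹ * (u / (u ^ 2 + η ^ 2))

/-- The Poisson extension of `f` at height `η`. -/
noncomputable def poissonExt (η : ℝ) (f : ℝ → ℝ) (x : ℝ) : ℝ :=
  ∫ y, poissonDensity η (x - y) * f y

/-- The conjugate Poisson extension of `f` at height `η`. -/
noncomputable def conjPoissonExt (η : ℝ) (f : ℝ → ℝ) (x : ℝ) : ℝ :=
  ∫ y, conjPoissonKernel η (x - y) * f y

theorem poissonDensity_pos {η : ℝ} (hη : 0 < η) (u : ℝ) : 0 < poissonDensity η u := by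
  have := Real.pi_pos
  unfold poissonDensity
  positivity

theorem measurable_poissonDensity (η : ℝ) : Measurable (poissonDensity η) := by
  unfold poissonDensity
  fun_prop

theorem poissonDensity_neg (η u : ℝ) : poissonDensity η (-u) = poissonDensity η u := by
  simp only [poissonDensity, neg_sq]

theorem lintegral_poissonDensity_sub_right {η : ℝ} (hη : 0 < η) (y : ℝ) :
    ∫⁻ x, ENNReal.ofReal (poissonDensity η (x - y)) = 1 := by
  lift η to NNReal using hη.le
  rw [← ProbabilityTheory.lintegral_cauchyPDF_eq_one y (γ := η) (by exact_mod_cast hη.ne')]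
  refine lintegral_congr fun x => ?_
  rw [ProbabilityTheory.cauchyPDF_def, ProbabilityTheory.cauchyPDFReal_def]
  simp only [poissonDensity, div_eq_mul_inv, mul_assoc]

theorem lintegral_poissonDensity_sub_left {η : ℝ} (hη : 0 < η) (x : ℝ) :
    ∫⁻ y, ENNReal.ofReal (poissonDensity η (x - y)) = 1 := by
  rw [← lintegral_poissonDensity_sub_right hη x]
  exact lintegral_congr fun y => by rw [← poissonDensity_neg, neg_sub]

theorem IsEvenYoung.modular_poissonExt_le {φ : ℝ → ℝ} (h : IsEvenYoung φ) {η : ℝ} (hη : 0 < η)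
    {f : ℝ → ℝ} (hf : Measurable f) :
    modular φ (poissonExt η f) ≤ modular φ f :=
  h.modular_integral_mul_le
    ((measurable_poissonDensity η).comp (measurable_fst.sub measurable_snd))
    (fun _ _ => (poissonDensity_pos hη _).le) (lintegral_poissonDensity_sub_left hη)
    (fun y => (lintegral_poissonDensity_sub_right hη y).le) hf

/-- The Cauchy kernel `i / (π (z - y))`; its real and imaginary parts are the Poisson kernel and
the conjugate Poisson kernel. -/
noncomputable def cauchyKernel (z : ℂ) (y : ℝ) : ℂ := (Real.pi⁻¹ : ℂ) * (Complex.I / (z - y))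

/-- The holomorphic function on the upper half plane with boundary data `f`; its real and imaginary
parts are the Poisson and conjugate Poisson extensions of `f`. -/
noncomputable def cauchyExt (f : ℝ → ℝ) (z : ℂ) : ℂ := ∫ y, cauchyKernel z y * f y

theorem measurable_cauchyKernel (z : ℂ) : Measurable (cauchyKernel z) := by
  unfold cauchyKernel
  fun_prop

theorem norm_cauchyKernel (z : ℂ) (y : ℝ) : ‖cauchyKernel z y‖ = Real.pi⁻¹ * ‖z - y‖⁻¹ := by
  rw [cauchyKernel, norm_mul, norm_div, Complex.norm_I, norm_inv, Complex.norm_real,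
    Real.norm_of_nonneg Real.pi_pos.le, one_div]

theorem norm_cauchyKernel_le {z : ℂ} {r : ℝ} (hr : 0 < r) (hz : r ≤ z.im) (y : ℝ) :
    ‖cauchyKernel z y‖ ≤ Real.pi⁻¹ * r⁻¹ := by
  rw [norm_cauchyKernel]
  gcongr
  exact hz.trans ((le_abs_self _).trans (by simpa using Complex.abs_im_le_norm (z - y)))

theorem hasDerivAt_cauchyKernel {z : ℂ} (hz : 0 < z.im) (y : ℝ) :
    HasDerivAt (fun w => cauchyKernel w y) (Real.pi * Complex.I * cauchyKernel z y ^ 2) z := by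
  have hne : z - y ≠ 0 := fun h0 => hz.ne' (by simpa using congrArg Complex.im h0)
  have hinv := (((hasDerivAt_id z).sub_const (y : ℂ)).inv hne).const_mul
    ((Real.pi⁻¹ : ℂ) * Complex.I)
  have hpi : (Real.pi : ℂ) ≠ 0 := by exact_mod_cast Real.pi_ne_zero
  refine (hinv.congr_deriv ?_).congr_of_eventuallyEq (Eventually.of_forall fun w => ?_)
  · simp only [cauchyKernel, id_eq]
    field_simp
    rw [Complex.I_sq]
  · simp only [cauchyKernel, id_eq, Pi.inv_apply, div_eq_mul_inv, mul_assoc]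

theorem re_cauchyKernel (x η y : ℝ) :
    (cauchyKernel (x + η * Complex.I) y).re = poissonDensity η (x - y) := by
  rw [cauchyKernel, ← Complex.ofReal_inv, Complex.re_ofReal_mul, poissonDensity, Complex.div_re]
  simp [Complex.normSq_apply, sq]

theorem im_cauchyKernel (x η y : ℝ) :
    (cauchyKernel (x + η * Complex.I) y).im = conjPoissonKernel η (x - y) := by
  rw [cauchyKernel, ← Complex.ofReal_inv, Complex.im_ofReal_mul, conjPoissonKernel, Complex.div_im]
  simp [Complex.normSq_apply, sq]

section CauchyExt

variable {f : ℝ → ℝ}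

theorem aestronglyMeasurable_cauchyKernel_mul (hf : Integrable f) (z : ℂ) :
    AEStronglyMeasurable fun y : ℝ => cauchyKernel z y * f y :=
  (measurable_cauchyKernel z).aestronglyMeasurable.mul hf.ofReal.aestronglyMeasurable

theorem integrable_cauchyKernel_mul (hf : Integrable f) {z : ℂ} (hz : 0 < z.im) :
    Integrable fun y : ℝ => cauchyKernel z y * f y :=
  hf.ofReal.bdd_mul (measurable_cauchyKernel z).aestronglyMeasurable
    (ae_of_all _ (norm_cauchyKernel_le hz le_rfl))

theorem differentiableOn_cauchyExt (hf : Integrable f) :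
    DifferentiableOn ℂ (cauchyExt f) {z | 0 < z.im} := by
  intro z₀ (hz₀ : 0 < z₀.im)
  have him : ∀ z ∈ Metric.ball z₀ (z₀.im / 2), z₀.im / 2 ≤ z.im := fun z hz => by
    have := (Complex.abs_im_le_norm (z - z₀)).trans_lt (mem_ball_iff_norm.1 hz)
    rw [Complex.sub_im, abs_lt] at this
    linarith [this.1]
  refine ((hasDerivAt_integral_of_dominated_loc_of_deriv_le
    (F' := fun (z : ℂ) (y : ℝ) => Real.pi * Complex.I * cauchyKernel z y ^ 2 * f y)
    (bound := fun y => Real.pi * (Real.pi⁻¹ * (z₀.im / 2)⁻¹) ^ 2 * ‖f y‖)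
    (Metric.ball_mem_nhds z₀ (half_pos hz₀))
    (Eventually.of_forall (aestronglyMeasurable_cauchyKernel_mul hf))
    (integrable_cauchyKernel_mul hf hz₀) ?_ (ae_of_all _ fun y z hz => ?_)
    (hf.norm.const_mul _)
    (ae_of_all _ fun y z hz => ?_)).2.differentiableAt).differentiableWithinAt
  · exact (((measurable_cauchyKernel z₀).pow_const 2).const_mul _).aestronglyMeasurable.mul
      hf.ofReal.aestronglyMeasurable
  · rw [norm_mul, norm_mul, norm_mul, norm_pow, Complex.norm_I, Complex.norm_real, mul_one,
      Complex.norm_real, Real.norm_of_nonneg Real.pi_pos.le]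
    gcongr
    exact norm_cauchyKernel_le (half_pos hz₀) (him z hz) y
  · exact (hasDerivAt_cauchyKernel ((half_pos hz₀).trans_le (him z hz)) y).mul_const _

theorem re_cauchyExt (hf : Integrable f) {η : ℝ} (hη : 0 < η) (x : ℝ) :
    (cauchyExt f (x + η * Complex.I)).re = poissonExt η f x := by
  have := integral_re (integrable_cauchyKernel_mul hf (z := x + η * Complex.I) (by simpa))
  simp only [RCLike.re_to_complex, Complex.re_mul_ofReal, re_cauchyKernel] at this
  exact this.symm

theorem im_cauchyExt (hf : Integrable f) {η : ℝ} (hη : 0 < η) (x : ℝ) :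
    (cauchyExt f (x + η * Complex.I)).im = conjPoissonExt η f x := by
  have := integral_im (integrable_cauchyKernel_mul hf (z := x + η * Complex.I) (by simpa))
  simp only [RCLike.im_to_complex, Complex.im_mul_ofReal, im_cauchyKernel] at this
  exact this.symm

theorem norm_cauchyExt_le (hf : Integrable f) {M : ℝ} (hM : ∀ y, M ≤ |y| → f y = 0) {z : ℂ}
    (hz : 0 < ‖z‖) (hzM : 2 * M ≤ ‖z‖) :
    ‖cauchyExt f z‖ ≤ 2 * (∫ y, |f y|) * ‖z‖⁻¹ := by
  have hdist : ∀ y : ℝ, |y| < M → ‖z‖ / 2 ≤ ‖z - y‖ := fun y hy => by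
    have := norm_sub_norm_le z (y : ℂ)
    rw [Complex.norm_real, Real.norm_eq_abs] at this
    linarith
  have hpi : Real.pi⁻¹ ≤ 1 := inv_le_one_of_one_le₀ (by linarith [Real.pi_gt_three])
  have hle : ‖cauchyExt f z‖ ≤ ∫ y, 2 * ‖z‖⁻¹ * |f y| := by
    refine norm_integral_le_of_norm_le (hf.abs.const_mul _) (ae_of_all _ fun y => ?_)
    rcases le_or_gt M |y| with hy | hy
    · simp [hM y hy]
    rw [norm_mul, Complex.norm_real, Real.norm_eq_abs, norm_cauchyKernel]
    refine mul_le_mul_of_nonneg_right ?_ (abs_nonneg _)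
    calc Real.pi⁻¹ * ‖z - y‖⁻¹ ≤ 1 * (‖z‖ / 2)⁻¹ := by
          gcongr
          exact hdist y hy
      _ = 2 * ‖z‖⁻¹ := by field_simp
  rw [integral_const_mul] at hle
  linarith

theorem re_cauchyExt_pos (hf : Integrable f) (hf0 : ∀ y, 0 ≤ f y) (hpos : 0 < ∫ y, f y) {z : ℂ}
    (hz : 0 < z.im) : 0 < (cauchyExt f z).re := by
  rw [← Complex.re_add_im z] at hz ⊢
  simp only [Complex.add_im, Complex.ofReal_im, Complex.mul_im, Complex.ofReal_re, Complex.I_im,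
    Complex.I_re, mul_zero, mul_one, zero_add, add_zero] at hz
  have hint := (integrable_cauchyKernel_mul hf (z := z.re + z.im * Complex.I) (by simpa)).re
  simp only [RCLike.re_to_complex, Complex.re_mul_ofReal, re_cauchyKernel] at hint
  rw [re_cauchyExt hf hz, poissonExt, integral_pos_iff_support_of_nonneg
    (fun y => mul_nonneg (poissonDensity_pos hz _).le (hf0 y)) hint]
  rw [integral_pos_iff_support_of_nonneg hf0 hf] at hpos
  convert hpos using 2
  ext y
  simp [(poissonDensity_pos hz _).ne']

theorem continuous_horizontal_line {G : ℂ → ℂ} (hG : DifferentiableOn ℂ G {z | 0 < z.im}) {η : ℝ}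
    (hη : 0 < η) : Continuous fun x : ℝ => G (x + η * Complex.I) :=
  hG.continuousOn.comp_continuous (by fun_prop) fun x => by simpa

theorem continuous_poissonExt (hf : Integrable f) {η : ℝ} (hη : 0 < η) :
    Continuous (poissonExt η f) := by
  simpa only [Function.comp_def, re_cauchyExt hf hη] using
    Complex.continuous_re.comp (continuous_horizontal_line (differentiableOn_cauchyExt hf) hη)

theorem continuous_conjPoissonExt (hf : Integrable f) {η : ℝ} (hη : 0 < η) :
    Continuous (conjPoissonExt η f) := by
  simpa only [Function.comp_def, im_cauchyExt hf hη] using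
    Complex.continuous_im.comp (continuous_horizontal_line (differentiableOn_cauchyExt hf) hη)

end CauchyExt

/-! ### M. Riesz's inequality for nonnegative functions -/

theorem exists_one_le_cos_rpow_add {p : ℝ} (hp : 0 < p) (hcos : Real.cos (p * (Real.pi / 2)) ≠ 0) :
    ∃ C K : ℝ, 0 ≤ C ∧ ∀ θ : ℝ, |θ| < Real.pi / 2 →
      1 ≤ C * Real.cos θ ^ p + K * Real.cos (p * θ) := by
  set K := 2 / Real.cos (p * (Real.pi / 2)) with hK
  have hlim : Tendsto (fun θ => K * Real.cos (p * θ)) (nhds (Real.pi / 2)) (nhds 2) := by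
    have : Continuous fun θ => K * Real.cos (p * θ) := by fun_prop
    simpa only [hK, div_mul_cancel₀ _ hcos] using this.tendsto (Real.pi / 2)
  obtain ⟨δ, hδ, hnear⟩ := Metric.eventually_nhds_iff.1
    (hlim.eventually (lt_mem_nhds (by norm_num : (1 : ℝ) < 2)))
  have := Real.pi_pos
  set ε := min δ (Real.pi / 2)
  have hε : 0 < ε := lt_min hδ (by positivity)
  have hεpi : ε ≤ Real.pi / 2 := min_le_right _ _
  have hsin : 0 < Real.sin ε := Real.sin_pos_of_pos_of_lt_pi hε (by linarith)
  refine ⟨(1 + |K|) / Real.sin ε ^ p, K, by positivity, fun θ hθ => ?_⟩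
  have hcosθ : 0 < Real.cos θ := Real.cos_pos_of_mem_Ioo (abs_lt.1 hθ)
  have habs : Real.cos (p * |θ|) = Real.cos (p * θ) := by
    rw [← Real.cos_abs (p * θ), abs_mul, abs_of_pos hp]
  rcases lt_or_ge (Real.pi / 2 - |θ|) ε with hc | hc
  · have hone : 1 < K * Real.cos (p * |θ|) := hnear (by
      rw [Real.dist_eq, abs_lt]
      constructor <;> linarith [min_le_left δ (Real.pi / 2)])
    rw [habs] at hone
    exact hone.le.trans (le_add_of_nonneg_left (by positivity))
  · have hle : Real.sin ε ≤ Real.cos θ := by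
      rw [← Real.cos_abs θ, ← Real.sin_pi_div_two_sub]
      exact Real.sin_le_sin_of_le_of_le_pi_div_two (by linarith) (by linarith [abs_nonneg θ]) hc
    have hmain : 1 + |K| ≤ (1 + |K|) / Real.sin ε ^ p * Real.cos θ ^ p := by
      rw [div_mul_eq_mul_div, le_div_iff₀ (by positivity)]
      gcongr
    have hK' : |K * Real.cos (p * θ)| ≤ |K| := by
      rw [abs_mul]
      exact mul_le_of_le_one_right (abs_nonneg K) (Real.abs_cos_le_one _)
    linarith [neg_abs_le (K * Real.cos (p * θ))]

theorem exists_norm_rpow_le_re_rpow_add {p : ℝ} (hp : 0 < p)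
    (hcos : Real.cos (p * (Real.pi / 2)) ≠ 0) :
    ∃ C K : ℝ, 0 ≤ C ∧ ∀ z : ℂ, 0 < z.re → ‖z‖ ^ p ≤ C * z.re ^ p + K * (z ^ (p : ℂ)).re := by
  obtain ⟨C, K, hC, h⟩ := exists_one_le_cos_rpow_add hp hcos
  refine ⟨C, K, hC, fun z hz => ?_⟩
  have hre : z.re = ‖z‖ * Real.cos z.arg := (Complex.norm_mul_cos_arg z).symm
  have hnorm : 0 < ‖z‖ := norm_pos_iff.2 fun h0 => by simp [h0] at hz
  have hc : 0 < Real.cos z.arg := (pos_iff_pos_of_mul_pos (hre ▸ hz)).1 hnorm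
  rw [Complex.cpow_ofReal_re, hre, Real.mul_rpow hnorm.le hc.le, mul_comm z.arg p]
  have := mul_le_mul_of_nonneg_left (h z.arg (Complex.abs_arg_lt_pi_div_two_iff.2 (Or.inl hz)))
    (Real.rpow_nonneg hnorm.le p)
  linarith

section HorizontalLine

variable {G : ℂ → ℂ} {η R : ℝ}

theorem integral_horizontal_line_eq (hη : 0 < η) (hR : 0 ≤ R)
    (hG : DifferentiableOn ℂ G {z | 0 < z.im}) :
    ∫ x in (-R)..R, G (x + η * Complex.I) =
      (∫ x in (-R)..R, G (x + (η + R : ℝ) * Complex.I)) -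
      Complex.I • (∫ y in η..(η + R), G ((R : ℝ) + y * Complex.I)) +
      Complex.I • (∫ y in η..(η + R), G ((-R : ℝ) + y * Complex.I)) := by
  have hrect := Complex.integral_boundary_rect_eq_zero_of_differentiableOn G
    (⟨-R, η⟩ : ℂ) (⟨R, η + R⟩ : ℂ) (hG.mono fun z hz => by
      have := hz.2
      rw [mem_preimage, uIcc_of_le (by linarith)] at this
      exact hη.trans_le this.1)
  linear_combination hrect

theorem norm_integral_horizontal_line_le {b : ℝ} (hη : 0 < η) (hR : 0 ≤ R)
    (hG : DifferentiableOn ℂ G {z | 0 < z.im})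
    (hb : ∀ z : ℂ, 0 < z.im → R ≤ ‖z‖ → ‖G z‖ ≤ b) :
    ‖∫ x in (-R)..R, G (x + η * Complex.I)‖ ≤ 4 * b * R := by
  have htop : ‖∫ x in (-R)..R, G (x + (η + R : ℝ) * Complex.I)‖ ≤ b * |R - -R| := by
    refine intervalIntegral.norm_integral_le_of_norm_le_const fun x _ => hb _ ?_ ?_
    · simpa using by linarith
    · refine le_trans ?_ ((le_abs_self _).trans (Complex.abs_im_le_norm _))
      simpa using hη.le
  have hside : ∀ s : ℝ, |s| = R →
      ‖∫ y in η..(η + R), G (s + y * Complex.I)‖ ≤ b * |η + R - η| := fun s hs => by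
    refine intervalIntegral.norm_integral_le_of_norm_le_const fun y hy => hb _ ?_ ?_
    · rw [uIoc_of_le (by linarith)] at hy
      simpa using hη.trans hy.1
    · exact le_trans (by simp [hs]) (Complex.abs_re_le_norm _)
  have hright := hside R (abs_of_nonneg hR)
  have hleft := hside (-R) (by rw [abs_neg, abs_of_nonneg hR])
  rw [sub_neg_eq_add, ← two_mul, abs_of_nonneg (by positivity)] at htop
  rw [add_sub_cancel_left, abs_of_nonneg hR] at hright hleft
  rw [integral_horizontal_line_eq hη hR hG]
  refine (norm_add_le _ _).trans ((add_le_add_left (norm_sub_le _ _) _).trans ?_)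
  rw [norm_smul, norm_smul, Complex.norm_I, one_mul, one_mul]
  linarith

theorem tendsto_integral_horizontal_line {p B R₀ : ℝ} (hη : 0 < η) (hp : 1 < p) (hB : 0 ≤ B)
    (hG : DifferentiableOn ℂ G {z | 0 < z.im})
    (hdecay : ∀ z : ℂ, 0 < z.im → R₀ ≤ ‖z‖ → ‖G z‖ ≤ B * ‖z‖ ^ (-p)) :
    Tendsto (fun R : ℝ => ∫ x in (-R)..R, G (x + η * Complex.I)) atTop (nhds 0) := by
  have hlim : Tendsto (fun R : ℝ => 4 * B * R ^ (-(p - 1))) atTop (nhds 0) := by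
    simpa using (tendsto_rpow_neg_atTop (by linarith : 0 < p - 1)).const_mul (4 * B)
  refine squeeze_zero_norm' ?_ hlim
  filter_upwards [eventually_ge_atTop R₀, eventually_gt_atTop 0] with R hR hR0
  refine (norm_integral_horizontal_line_le (b := B * R ^ (-p)) hη hR0.le hG
    fun z hz hz' => (hdecay z hz (hR.trans hz')).trans ?_).trans_eq ?_
  · exact mul_le_mul_of_nonneg_left (Real.rpow_le_rpow_of_nonpos hR0 hz' (by linarith)) hB
  · rw [show -(p - 1) = -p + 1 by ring, Real.rpow_add_one hR0.ne']
    ring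

end HorizontalLine

theorem lintegral_le_of_le_add_of_tendsto_integral {u v w : ℝ → ℝ} (hu : Measurable u)
    (hu0 : ∀ x, 0 ≤ u x) (hv : ∀ R, IntervalIntegrable v volume (-R) R) (hv0 : ∀ x, 0 ≤ v x)
    (hw : ∀ R, IntervalIntegrable w volume (-R) R) (hle : ∀ x, u x ≤ v x + w x)
    (hlim : Tendsto (fun R => ∫ x in (-R)..R, w x) atTop (nhds 0)) :
    ∫⁻ x, ENNReal.ofReal (u x) ≤ ∫⁻ x, ENNReal.ofReal (v x) := by
  have hbound : ∀ R : ℝ, 0 < R → ∫⁻ x in Ioc (-R) R, ENNReal.ofReal (u x) ≤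
      (∫⁻ x, ENNReal.ofReal (v x)) + ENNReal.ofReal (∫ x in (-R)..R, w x) := fun R hR => by
    have hRR : -R ≤ R := by linarith
    calc ∫⁻ x in Ioc (-R) R, ENNReal.ofReal (u x)
        ≤ ∫⁻ x in Ioc (-R) R, ENNReal.ofReal (v x + w x) :=
          lintegral_mono fun x => ENNReal.ofReal_le_ofReal (hle x)
      _ = ENNReal.ofReal ((∫ x in (-R)..R, v x) + ∫ x in (-R)..R, w x) := by
          rw [← intervalIntegral.integral_add (hv R) (hw R), intervalIntegral.integral_of_le hRR,
            ofReal_integral_eq_lintegral_ofReal ((hv R).add (hw R)).1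
              (ae_of_all _ fun x => (hu0 x).trans (hle x))]
      _ ≤ ENNReal.ofReal (∫ x in (-R)..R, v x) + ENNReal.ofReal (∫ x in (-R)..R, w x) :=
          ENNReal.ofReal_add_le
      _ ≤ _ := by
          gcongr
          rw [intervalIntegral.integral_of_le hRR,
            ofReal_integral_eq_lintegral_ofReal (hv R).1 (ae_of_all _ hv0)]
          exact setLIntegral_le_lintegral _ _
  have hcover : AECover volume atTop fun R : ℝ => Ioc (-R) R :=
    aecover_Ioc tendsto_neg_atTop_atBot tendsto_id
  refine le_of_tendsto_of_tendsto
    (hcover.lintegral_tendsto_of_countably_generated hu.ennreal_ofReal.aemeasurable)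
    ?_ ((eventually_gt_atTop 0).mono hbound)
  simpa using tendsto_const_nhds.add (ENNReal.tendsto_ofReal hlim)

theorem tendsto_integral_re_cauchyExt_cpow {f : ℝ → ℝ} {p η : ℝ} (hp : 1 < p) (hη : 0 < η)
    (hf : Integrable f) (hs : HasCompactSupport f) (hf0 : ∀ y, 0 ≤ f y) (hpos : 0 < ∫ y, f y) :
    Tendsto (fun R : ℝ => ∫ x in (-R)..R, (cauchyExt f (x + η * Complex.I) ^ (p : ℂ)).re)
      atTop (nhds 0) := by
  obtain ⟨M, hM0, hM⟩ := hs.exists_pos_le_norm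
  have hF := differentiableOn_cauchyExt hf
  have hG : DifferentiableOn ℂ (fun z => cauchyExt f z ^ (p : ℂ)) {z | 0 < z.im} :=
    hF.cpow_const fun z hz => Or.inl (re_cauchyExt_pos hf hf0 hpos hz)
  have hlim := tendsto_integral_horizontal_line (B := (2 * ∫ y, |f y|) ^ p) (R₀ := 2 * M) hη hp
    (by positivity) hG fun z _ hR => by
      have hz : 0 < ‖z‖ := by linarith
      rw [Complex.norm_cpow_real, Real.rpow_neg hz.le, ← Real.inv_rpow hz.le,
        ← Real.mul_rpow (by positivity) (by positivity)]
      exact Real.rpow_le_rpow (norm_nonneg _) (norm_cauchyExt_le hf hM hz hR) (by linarith)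
  refine ((Complex.continuous_re.tendsto _).comp hlim).congr fun R => ?_
  have := intervalIntegral.intervalIntegral_re (𝕜 := ℂ) (μ := volume)
    ((continuous_horizontal_line hG hη).intervalIntegrable (-R) R)
  simpa using this.symm

theorem exists_modular_rpow_conjPoissonExt_le_of_nonneg {p : ℝ} (hp : 1 < p)
    (hcos : Real.cos (p * (Real.pi / 2)) ≠ 0) :
    ∃ C : NNReal, ∀ (η : ℝ) (f : ℝ → ℝ), 0 < η → Measurable f → Integrable f →
      HasCompactSupport f → (∀ y, 0 ≤ f y) →
      modular (|·| ^ p) (conjPoissonExt η f) ≤ C * modular (|·| ^ p) f := by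
  have hp0 : 0 < p := by linarith
  obtain ⟨C, K, hC, hCK⟩ := exists_norm_rpow_le_re_rpow_add hp0 hcos
  refine ⟨C.toNNReal, fun η f hη hmeas hf hs hf0 => ?_⟩
  rcases (integral_nonneg (μ := volume) (f := f) hf0).eq_or_lt with h0 | hpos
  · have hzero : ∀ x, conjPoissonExt η f x = 0 := fun x => integral_eq_zero_of_ae <| by
      filter_upwards [(integral_eq_zero_iff_of_nonneg hf0 hf).1 h0.symm] with y hy
      simp [hy]
    simp [modular, hzero, Real.zero_rpow hp0.ne']
  set F : ℝ → ℂ := fun x => cauchyExt f (x + η * Complex.I)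
  have hre : ∀ x, (F x).re = poissonExt η f x := re_cauchyExt hf hη
  have him : ∀ x, (F x).im = conjPoissonExt η f x := im_cauchyExt hf hη
  have hFpos : ∀ x, 0 < (F x).re := fun x => re_cauchyExt_pos hf hf0 hpos (by simpa)
  have hFc : Continuous F := continuous_horizontal_line (differentiableOn_cauchyExt hf) hη
  have hPc : Continuous fun x => C * |poissonExt η f x| ^ p :=
    ((continuous_poissonExt hf hη).abs.rpow_const fun _ => Or.inr hp0.le).const_mul C
  have hGc : Continuous fun x => K * (F x ^ (p : ℂ)).re :=
    (Complex.continuous_re.comp (hFc.cpow continuous_const fun x => Or.inl (hFpos x))).const_mul K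
  have hpt : ∀ x, |conjPoissonExt η f x| ^ p ≤
      C * |poissonExt η f x| ^ p + K * (F x ^ (p : ℂ)).re := fun x => by
    rw [← him, ← hre, abs_of_pos (hFpos x)]
    exact (Real.rpow_le_rpow (abs_nonneg _) (Complex.abs_im_le_norm _) hp0.le).trans
      (hCK _ (hFpos x))
  have hlim : Tendsto (fun R => ∫ x in (-R)..R, K * (F x ^ (p : ℂ)).re) atTop (nhds 0) := by
    simpa using (tendsto_integral_re_cauchyExt_cpow hp hη hf hs hf0 hpos).const_mul K
  refine (lintegral_le_of_le_add_of_tendsto_integral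
    ((continuous_conjPoissonExt hf hη).measurable.abs.pow_const p) (fun _ => by positivity)
    (fun _ => hPc.intervalIntegrable _ _) (fun _ => by positivity)
    (fun _ => hGc.intervalIntegrable _ _) hpt hlim).trans ?_
  simp only [ENNReal.ofReal_mul hC]
  rw [lintegral_const_mul' _ _ ENNReal.ofReal_ne_top]
  exact mul_le_mul_right ((isEvenYoung_rpow hp.le).modular_poissonExt_le hη hmeas) _

/-! ### The conjugate Poisson extension and the sinc operator on Orlicz classes -/

section ConjPoissonExt

variable {η : ℝ} {f g : ℝ → ℝ}

theorem integrable_conjPoissonKernel_mul (hη : 0 < η) (hf : Integrable f) (x : ℝ) :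
    Integrable fun y => conjPoissonKernel η (x - y) * f y := by
  have := (integrable_cauchyKernel_mul hf (z := x + η * Complex.I) (by simpa)).im
  simpa only [RCLike.im_to_complex, Complex.im_mul_ofReal, im_cauchyKernel] using this

theorem integrable_poissonDensity_mul (hη : 0 < η) (hf : Integrable f) (x : ℝ) :
    Integrable fun y => poissonDensity η (x - y) * f y := by
  have := (integrable_cauchyKernel_mul hf (z := x + η * Complex.I) (by simpa)).re
  simpa only [RCLike.re_to_complex, Complex.re_mul_ofReal, re_cauchyKernel] using this

theorem conjPoissonExt_add (hη : 0 < η) (hf : Integrable f) (hg : Integrable g) (x : ℝ) :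
    conjPoissonExt η (fun y => f y + g y) x = conjPoissonExt η f x + conjPoissonExt η g x := by
  simp only [conjPoissonExt, mul_add]
  exact integral_add (integrable_conjPoissonKernel_mul hη hf x)
    (integrable_conjPoissonKernel_mul hη hg x)

theorem conjPoissonExt_neg (x : ℝ) :
    conjPoissonExt η (fun y => -f y) x = -conjPoissonExt η f x := by
  simp only [conjPoissonExt, mul_neg, integral_neg]

theorem volume_two_mul_lt_abs_conjPoissonExt_le {p q s : ℝ} {C : ENNReal} (hp : 0 < p) (hq : 0 < q)
    (hs : 0 < s) (hη : 0 < η)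
    (hC : ∀ r ∈ ({p, q} : Set ℝ), ∀ g : ℝ → ℝ, Measurable g → Integrable g → HasCompactSupport g →
      (∀ y, 0 ≤ g y) → modular (|·| ^ r) (conjPoissonExt η g) ≤ C * modular (|·| ^ r) g)
    (hf : Measurable f) (hfi : Integrable f) (hfs : HasCompactSupport f) (hf0 : ∀ y, 0 ≤ f y) :
    volume {x | 2 * s < |conjPoissonExt η f x|} ≤
      C * ∫⁻ x, ENNReal.ofReal (levelGauge p q s (f x)) := by
  have hS : MeasurableSet {x | s < |f x|} := measurableSet_lt measurable_const (by fun_prop)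
  have hind : ∀ r ∈ ({p, q} : Set ℝ), ∀ {S : Set ℝ}, MeasurableSet S →
      modular (|·| ^ r) (conjPoissonExt η (S.indicator f)) ≤
        C * modular (|·| ^ r) (S.indicator f) := fun r hr S hS =>
    hC r hr _ (hf.indicator hS) (hfi.indicator hS)
      (hfs.mono (support_indicator.trans_subset inter_subset_right))
      fun y => indicator_nonneg (fun y _ => hf0 y) y
  refine measure_two_mul_lt_abs_le hp hq hs hf
    (continuous_conjPoissonExt (hfi.indicator hS) hη).measurable
    (continuous_conjPoissonExt (hfi.indicator hS.compl) hη).measurable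
    (fun x => ?_) (hind p (by simp) hS) (hind q (by simp) hS.compl)
  rw [← conjPoissonExt_add hη (hfi.indicator hS) (hfi.indicator hS.compl)]
  exact congrArg (conjPoissonExt η · x) (indicator_self_add_compl _ f).symm

end ConjPoissonExt

namespace IsRegularYoung

variable {φ : ℝ → ℝ} {D c : ℝ}

-- The exponents `p ∈ (1, 2)` and `q = 4 m` are admissible in Riesz's inequality because
-- `cos (p π / 2) < 0` and `cos (q π / 2) = 1`.
theorem exists_modular_conjPoissonExt_le_of_nonneg (h : IsRegularYoung φ D c) :
    ∃ B : NNReal, ∀ (η : ℝ) (f : ℝ → ℝ), 0 < η → Measurable f → Integrable f →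
      HasCompactSupport f → (∀ y, 0 ≤ f y) →
      modular φ (conjPoissonExt η f) ≤ B * modular φ f := by
  obtain ⟨p₁, q₁, C, hp₁, hgrowth⟩ := h.exists_hasPowerGrowth
  obtain ⟨p, hp1, hpm⟩ := exists_between (lt_min hp₁ one_lt_two)
  obtain ⟨hpp₁, hp2⟩ := lt_min_iff.1 hpm
  obtain ⟨m, hm⟩ := exists_nat_gt (max 1 q₁)
  obtain ⟨hm1, hmq⟩ := max_lt_iff.1 hm
  have hcosp : Real.cos (p * (Real.pi / 2)) ≠ 0 := by
    refine (Real.cos_neg_of_pi_div_two_lt_of_lt ?_ ?_).ne <;> nlinarith [Real.pi_pos]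
  have hcosq : Real.cos ((4 * m : ℝ) * (Real.pi / 2)) ≠ 0 := by
    rw [show (4 * m : ℝ) * (Real.pi / 2) = m * (2 * Real.pi) by ring, Real.cos_nat_mul_two_pi]
    exact one_ne_zero
  obtain ⟨Cp, hCp⟩ := exists_modular_rpow_conjPoissonExt_le_of_nonneg hp1 hcosp
  obtain ⟨Cq, hCq⟩ :=
    exists_modular_rpow_conjPoissonExt_le_of_nonneg (by linarith : (1 : ℝ) < 4 * m) hcosq
  obtain ⟨B, hB⟩ := hgrowth.exists_modular_le_of_measure_le (μ := (volume : Measure ℝ))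
    (ν := (volume : Measure ℝ)) hpp₁ (by linarith : q₁ < 4 * m) (by linarith) (Cp + Cq)
  refine ⟨(Cp + Cq) * B, fun η f hη hf hfi hfs hf0 => ?_⟩
  push_cast
  refine hB f _ hf (continuous_conjPoissonExt hfi hη).measurable fun s hs =>
    volume_two_mul_lt_abs_conjPoissonExt_le (by linarith) (by linarith) hs hη ?_ hf hfi hfs hf0
  rintro r (rfl | rfl) g hg hgi hgs hg0
  · exact (hCp η g hη hg hgi hgs hg0).trans (mul_le_mul_left le_self_add _)
  · exact (hCq η g hη hg hgi hgs hg0).trans (mul_le_mul_left le_add_self _)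

theorem exists_modular_conjPoissonExt_le (h : IsRegularYoung φ D c) :
    ∃ B : NNReal, ∀ (η : ℝ) (f : ℝ → ℝ), 0 < η → Measurable f → Integrable f →
      HasCompactSupport f → modular φ (conjPoissonExt η f) ≤ B * modular φ f := by
  obtain ⟨B, hB⟩ := h.exists_modular_conjPoissonExt_le_of_nonneg
  refine ⟨D.toNNReal * (2 * B), fun η f hη hf hfi hfs => ?_⟩
  have hpos : modular φ (conjPoissonExt η fun y => max (f y) 0) ≤ B * modular φ f :=
    (hB η _ hη (by fun_prop) hfi.pos_part (hfs.comp_left (g := fun t => max t 0) (by simp))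
      fun y => le_max_right _ _).trans (mul_le_mul_right (h.modular_mono fun x => by
        rw [abs_of_nonneg (le_max_right _ _)]
        exact max_le (le_abs_self _) (abs_nonneg _)) _)
  have hneg : modular φ (conjPoissonExt η fun y => max (-f y) 0) ≤ B * modular φ f :=
    (hB η _ hη (by fun_prop) hfi.neg_part (hfs.comp_left (g := fun t => max (-t) 0) (by simp))
      fun y => le_max_right _ _).trans (mul_le_mul_right (h.modular_mono fun x => by
        rw [abs_of_nonneg (le_max_right _ _)]
        exact max_le (neg_le_abs _) (abs_nonneg _)) _)
  have hdec : conjPoissonExt η f = fun x => conjPoissonExt η (fun y => max (f y) 0) x +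
      -conjPoissonExt η (fun y => max (-f y) 0) x := by
    ext x
    rw [← conjPoissonExt_neg, ← conjPoissonExt_add hη hfi.pos_part
      (g := fun y => -max (-f y) 0) hfi.neg_part.neg]
    congr 1
    ext y
    linarith [max_zero_sub_max_neg_zero_eq_self (f y)]
  rw [hdec]
  refine (h.modular_add_le (continuous_conjPoissonExt hfi.pos_part hη).measurable).trans ?_
  rw [ENNReal.coe_mul, mul_assoc]
  refine mul_le_mul_right ?_ _
  rw [ENNReal.coe_mul, ENNReal.coe_ofNat, mul_assoc, two_mul]
  exact add_le_add hpos ((h.modular_mono fun x => (abs_neg _).le).trans hneg)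

end IsRegularYoung

/-- Convolution with the Dirichlet kernel `sin (N u) / u` of the line. -/
noncomputable def dirichletOp (N : ℝ) (f : ℝ → ℝ) (x : ℝ) : ℝ :=
  ∫ y, N * Real.sinc (N * (x - y)) * f y

section DirichletOp

variable {N : ℝ} {f : ℝ → ℝ}

theorem integrable_mul_sinc_mul (N : ℝ) (hf : Integrable f) (x : ℝ) :
    Integrable fun y => N * Real.sinc (N * (x - y)) * f y := by
  simp only [mul_assoc]
  exact (hf.bdd_mul (Real.continuous_sinc.comp (by fun_prop)).aestronglyMeasurable
    (ae_of_all _ fun y => Real.abs_sinc_le_one _)).const_mul N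

theorem mul_sinc_eq_conjPoissonKernel_add (hN : N ≠ 0) (u : ℝ) :
    N * Real.sinc (N * u) =
      Real.pi * (Real.sin (N * u) * conjPoissonKernel N⁻¹ u) +
        Real.pi * (Real.sinc (N * u) * poissonDensity N⁻¹ u) := by
  have hsin : Real.sin (N * u) = N * u * Real.sinc (N * u) := by
    rcases eq_or_ne (N * u) 0 with h0 | h0
    · simp [h0]
    · rw [Real.sinc_of_ne_zero h0, mul_div_cancel₀ _ h0]
  have : u ^ 2 + N⁻¹ ^ 2 ≠ 0 := by positivity
  have hpi := Real.pi_ne_zero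
  rw [hsin, conjPoissonKernel, poissonDensity]
  field_simp

theorem dirichletOp_eq (hN : 0 < N) (hf : Integrable f) (x : ℝ) :
    dirichletOp N f x =
      Real.pi * Real.sin (N * x) * conjPoissonExt N⁻¹ (fun y => Real.cos (N * y) * f y) x -
      Real.pi * Real.cos (N * x) * conjPoissonExt N⁻¹ (fun y => Real.sin (N * y) * f y) x +
      Real.pi * poissonExt N⁻¹ (fun y => Real.sinc (N * (x - y)) * f y) x := by
  have hη : 0 < N⁻¹ := inv_pos.2 hN
  have hcos : Integrable fun y => Real.cos (N * y) * f y :=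
    hf.bdd_mul (by fun_prop) (ae_of_all _ fun y => Real.abs_cos_le_one _)
  have hsin : Integrable fun y => Real.sin (N * y) * f y :=
    hf.bdd_mul (by fun_prop) (ae_of_all _ fun y => Real.abs_sin_le_one _)
  have hsinc : Integrable fun y => Real.sinc (N * (x - y)) * f y :=
    hf.bdd_mul (Real.continuous_sinc.comp (by fun_prop)).aestronglyMeasurable
      (ae_of_all _ fun y => Real.abs_sinc_le_one _)
  have hC := (integrable_conjPoissonKernel_mul hη hcos x).const_mul (Real.pi * Real.sin (N * x))
  have hS := (integrable_conjPoissonKernel_mul hη hsin x).const_mul (Real.pi * Real.cos (N * x))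
  have hP := (integrable_poissonDensity_mul hη hsinc x).const_mul Real.pi
  have hCS := hC.sub hS
  simp only [Pi.sub_def] at hCS
  rw [conjPoissonExt, conjPoissonExt, poissonExt, ← integral_const_mul, ← integral_const_mul,
    ← integral_const_mul, ← integral_sub hC hS, ← integral_add hCS hP, dirichletOp]
  refine integral_congr_ae (ae_of_all _ fun y => ?_)
  beta_reduce
  rw [mul_sinc_eq_conjPoissonKernel_add hN.ne', mul_sub N x y, Real.sin_sub]
  ring

theorem abs_poissonExt_mul_le {η : ℝ} (hη : 0 < η) (hf : Integrable f) {a : ℝ → ℝ}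
    (ha : ∀ y, |a y| ≤ 1) (x : ℝ) :
    |poissonExt η (fun y => a y * f y) x| ≤ poissonExt η (fun y => |f y|) x := by
  rw [poissonExt, ← Real.norm_eq_abs]
  refine norm_integral_le_of_norm_le (integrable_poissonDensity_mul hη hf.abs x)
    (ae_of_all _ fun y => ?_)
  rw [norm_mul, norm_mul, Real.norm_of_nonneg (poissonDensity_pos hη _).le]
  exact mul_le_mul_of_nonneg_left (mul_le_of_le_one_left (abs_nonneg _) (ha y))
    (poissonDensity_pos hη _).le

theorem abs_dirichletOp_le (hN : 0 < N) (hf : Integrable f) (x : ℝ) :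
    |dirichletOp N f x| ≤ Real.pi * (|conjPoissonExt N⁻¹ (fun y => Real.cos (N * y) * f y) x| +
      |conjPoissonExt N⁻¹ (fun y => Real.sin (N * y) * f y) x| +
      poissonExt N⁻¹ (fun y => |f y|) x) := by
  have hmul : ∀ a Q : ℝ, |a| ≤ 1 → |Real.pi * a * Q| ≤ Real.pi * |Q| := fun a Q ha => by
    rw [abs_mul, abs_mul, abs_of_pos Real.pi_pos]
    exact mul_le_mul_of_nonneg_right (mul_le_of_le_one_right Real.pi_pos.le ha) (abs_nonneg _)
  rw [dirichletOp_eq hN hf, mul_add, mul_add]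
  refine (abs_add_le _ _).trans (add_le_add ((abs_sub _ _).trans (add_le_add ?_ ?_)) ?_)
  · exact hmul _ _ (Real.abs_sin_le_one _)
  · exact hmul _ _ (Real.abs_cos_le_one _)
  · rw [abs_mul, abs_of_pos Real.pi_pos]
    exact mul_le_mul_of_nonneg_left (abs_poissonExt_mul_le (inv_pos.2 hN) hf
      (fun y => Real.abs_sinc_le_one _) x) Real.pi_pos.le

theorem IsRegularYoung.exists_modular_conjPoissonExt_mul_le {φ : ℝ → ℝ} {D c : ℝ}
    (h : IsRegularYoung φ D c) :
    ∃ B : NNReal, ∀ (η : ℝ) (a f : ℝ → ℝ), 0 < η → Continuous a → (∀ y, |a y| ≤ 1) →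
      Measurable f → Integrable f → HasCompactSupport f →
      modular φ (fun x => |conjPoissonExt η (fun y => a y * f y) x|) ≤ B * modular φ f := by
  obtain ⟨B, hB⟩ := h.exists_modular_conjPoissonExt_le
  refine ⟨B, fun η a f hη ha ha1 hf hfi hfs => ?_⟩
  have haf : modular φ (fun y => a y * f y) ≤ modular φ f := h.modular_mono fun y => by
    rw [abs_mul]
    exact mul_le_of_le_one_left (abs_nonneg _) (ha1 y)
  calc modular φ (fun x => |conjPoissonExt η (fun y => a y * f y) x|)
      ≤ modular φ (conjPoissonExt η fun y => a y * f y) := h.modular_mono fun x => (abs_abs _).le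
    _ ≤ B * modular φ (fun y => a y * f y) := hB η _ hη (by fun_prop)
        (hfi.bdd_mul ha.aestronglyMeasurable (ae_of_all _ ha1)) hfs.mul_left
    _ ≤ B * modular φ f := mul_le_mul_right haf _

theorem IsRegularYoung.exists_modular_dirichletOp_le {φ : ℝ → ℝ} {D c : ℝ}
    (h : IsRegularYoung φ D c) :
    ∃ B : NNReal, ∀ (N : ℝ) (f : ℝ → ℝ), 0 < N → Measurable f → Integrable f →
      HasCompactSupport f → modular φ (dirichletOp N f) ≤ B * modular φ f := by
  obtain ⟨B, hB⟩ := h.exists_modular_conjPoissonExt_mul_le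
  obtain ⟨K, hK, hKφ⟩ := h.exists_map_mul_le Real.pi
  set d := D.toNNReal
  refine ⟨K.toNNReal * (d * (d * (B + B) + 1)), fun N f hN hf hfi hfs => ?_⟩
  have hη : 0 < N⁻¹ := inv_pos.2 hN
  set Qc := fun x => |conjPoissonExt N⁻¹ (fun y => Real.cos (N * y) * f y) x|
  set Qs := fun x => |conjPoissonExt N⁻¹ (fun y => Real.sin (N * y) * f y) x|
  have hQc : modular φ Qc ≤ B * modular φ f :=
    hB _ _ _ hη (by fun_prop) (fun _ => Real.abs_cos_le_one _) hf hfi hfs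
  have hQs : modular φ Qs ≤ B * modular φ f :=
    hB _ _ _ hη (by fun_prop) (fun _ => Real.abs_sin_le_one _) hf hfi hfs
  have hP : modular φ (poissonExt N⁻¹ fun y => |f y|) ≤ modular φ f :=
    (h.modular_poissonExt_le hη hf.abs).trans (h.modular_mono fun x => (abs_abs _).le)
  have hmQc : Measurable Qc := (continuous_conjPoissonExt (hfi.bdd_mul (by fun_prop)
    (ae_of_all _ fun y => Real.abs_cos_le_one _)) hη).measurable.abs
  have hmQs : Measurable Qs := (continuous_conjPoissonExt (hfi.bdd_mul (by fun_prop)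
    (ae_of_all _ fun y => Real.abs_sin_le_one _)) hη).measurable.abs
  calc modular φ (dirichletOp N f)
      ≤ modular φ (fun x => Real.pi * (Qc x + Qs x + poissonExt N⁻¹ (fun y => |f y|) x)) :=
        h.modular_mono fun x => (abs_dirichletOp_le hN hfi x).trans (le_abs_self _)
    _ ≤ K.toNNReal * modular φ (fun x => Qc x + Qs x + poissonExt N⁻¹ (fun y => |f y|) x) :=
        modular_mul_le hK hKφ
    _ ≤ K.toNNReal * (d * (d * (B * modular φ f + B * modular φ f) + modular φ f)) := by
        gcongr
        refine (h.modular_add_le (hmQc.add hmQs)).trans (mul_le_mul_right (add_le_add ?_ hP) _)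
        exact (h.modular_add_le hmQc).trans (mul_le_mul_right (add_le_add hQc hQs) _)
    _ = ↑(K.toNNReal * (d * (d * (B + B) + 1))) * modular φ f := by
        push_cast
        ring

end DirichletOp

/-! ### Recurrences for Hermite functions and the Christoffel–Darboux formula -/

section Gaussian

theorem hasDerivAt_iteratedDeriv_exp_neg_sq (k : ℕ) (x : ℝ) :
    HasDerivAt (iteratedDeriv k fun y : ℝ => Real.exp (-y ^ 2))
      (iteratedDeriv (k + 1) (fun y : ℝ => Real.exp (-y ^ 2)) x) x := by
  have hsmooth : ContDiff ℝ ⊤ fun y : ℝ => Real.exp (-y ^ 2) := by fun_prop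
  rw [iteratedDeriv_succ]
  exact (hsmooth.differentiable_iteratedDeriv k (by simp) x).hasDerivAt

theorem iteratedDeriv_one_exp_neg_sq (x : ℝ) :
    iteratedDeriv 1 (fun y : ℝ => Real.exp (-y ^ 2)) x = -2 * x * Real.exp (-x ^ 2) := by
  have h : HasDerivAt (fun y : ℝ => Real.exp (-y ^ 2)) (Real.exp (-x ^ 2) * (-(2 * x))) x := by
    simpa using ((hasDerivAt_pow 2 x).neg).exp
  rw [iteratedDeriv_one, h.deriv]
  ring

theorem iteratedDeriv_exp_neg_sq_add_two (k : ℕ) (x : ℝ) :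
    iteratedDeriv (k + 2) (fun y : ℝ => Real.exp (-y ^ 2)) x =
      -2 * x * iteratedDeriv (k + 1) (fun y : ℝ => Real.exp (-y ^ 2)) x -
        2 * (k + 1) * iteratedDeriv k (fun y : ℝ => Real.exp (-y ^ 2)) x := by
  induction k generalizing x with
  | zero =>
    have h := ((hasDerivAt_id x).const_mul (-2)).mul (hasDerivAt_iteratedDeriv_exp_neg_sq 0 x)
    have hfun : (iteratedDeriv 1 fun y : ℝ => Real.exp (-y ^ 2)) =
        (fun y : ℝ => -2 * id y) * iteratedDeriv 0 (fun y : ℝ => Real.exp (-y ^ 2)) := by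
      ext y
      simp [iteratedDeriv_one_exp_neg_sq]
    rw [← hfun] at h
    rw [(hasDerivAt_iteratedDeriv_exp_neg_sq 1 x).unique h]
    simp only [id, zero_add, Nat.cast_zero]
    ring
  | succ k ih =>
    have h := (((hasDerivAt_id x).const_mul (-2)).mul
      (hasDerivAt_iteratedDeriv_exp_neg_sq (k + 1) x)).sub
      ((hasDerivAt_iteratedDeriv_exp_neg_sq k x).const_mul (2 * ((k : ℝ) + 1)))
    have hfun : (iteratedDeriv (k + 2) fun y : ℝ => Real.exp (-y ^ 2)) =
        (fun y : ℝ => -2 * id y) * iteratedDeriv (k + 1) (fun y : ℝ => Real.exp (-y ^ 2)) -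
        fun y => 2 * ((k : ℝ) + 1) * iteratedDeriv k (fun y : ℝ => Real.exp (-y ^ 2)) y := by
      ext y
      simp [ih]
    rw [← hfun] at h
    rw [(hasDerivAt_iteratedDeriv_exp_neg_sq (k + 2) x).unique h]
    simp only [id, Nat.cast_succ]
    ring

end Gaussian

/-- The frequency `√(2(n+1))` at which `hermiteFun n` and `hermiteFun (n + 1)` oscillate near the
origin. -/
noncomputable def hermiteFreq (n : ℕ) : ℝ := √(2 * (n + 1))

theorem hermiteFreq_pos (n : ℕ) : 0 < hermiteFreq n := by
  unfold hermiteFreq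
  positivity

theorem hermiteFreq_sq (n : ℕ) : hermiteFreq n ^ 2 = 2 * (n + 1) :=
  Real.sq_sqrt (by positivity)

/-- The signed normalising constant `(-1)ᵏ γₖ` of the `k`-th Hermite function. -/
noncomputable def hermiteCoeff (k : ℕ) : ℝ :=
  (-1 : ℝ) ^ k * (Real.pi ^ (-(1 : ℝ) / 4) * (2 : ℝ) ^ (-(k : ℝ) / 2) *
    ((k.factorial : ℝ)) ^ (-(1 : ℝ) / 2))

theorem hermiteFun_eq (k : ℕ) (x : ℝ) : hermiteFun k x = hermiteCoeff k * Real.exp (x ^ 2 / 2) *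
    iteratedDeriv k (fun y : ℝ => Real.exp (-y ^ 2)) x := rfl

theorem hermiteFreq_mul_hermiteCoeff_succ (k : ℕ) :
    hermiteFreq k * hermiteCoeff (k + 1) = -hermiteCoeff k := by
  have hpow : (2 : ℝ) ^ (-((k + 1 : ℕ) : ℝ) / 2) = 2 ^ (-(k : ℝ) / 2) * 2 ^ (-(1 : ℝ) / 2) := by
    rw [← Real.rpow_add two_pos]
    push_cast
    ring_nf
  have hfac : ((k + 1).factorial : ℝ) ^ (-(1 : ℝ) / 2) =
      ((k : ℝ) + 1) ^ (-(1 : ℝ) / 2) * (k.factorial : ℝ) ^ (-(1 : ℝ) / 2) := by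
    rw [Nat.factorial_succ, Nat.cast_mul, Nat.cast_succ,
      Real.mul_rpow (by positivity) (by positivity)]
  have hfreq : hermiteFreq k * (2 ^ (-(1 : ℝ) / 2) * ((k : ℝ) + 1) ^ (-(1 : ℝ) / 2)) = 1 := by
    rw [← Real.mul_rpow (by positivity) (by positivity), hermiteFreq, Real.sqrt_eq_rpow,
      ← Real.rpow_add (by positivity)]
    norm_num
  rw [hermiteCoeff, hermiteCoeff, hpow, hfac, pow_succ]
  linear_combination (-((-1 : ℝ) ^ k * (Real.pi ^ (-(1 : ℝ) / 4) * (2 : ℝ) ^ (-(k : ℝ) / 2) *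
        ((k.factorial : ℝ)) ^ (-(1 : ℝ) / 2)))) * hfreq

theorem hermiteFreq_zero_mul_hermiteFun_one (x : ℝ) :
    hermiteFreq 0 * hermiteFun 1 x = 2 * x * hermiteFun 0 x := by
  have h := hermiteFreq_mul_hermiteCoeff_succ 0
  rw [zero_add] at h
  rw [hermiteFun_eq, hermiteFun_eq, iteratedDeriv_one_exp_neg_sq, iteratedDeriv_zero]
  linear_combination (-2 * x * Real.exp (x ^ 2 / 2) * Real.exp (-x ^ 2)) * h

theorem hermiteFreq_mul_hermiteFun_add_two (k : ℕ) (x : ℝ) :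
    hermiteFreq (k + 1) * hermiteFun (k + 2) x =
      2 * x * hermiteFun (k + 1) x - hermiteFreq k * hermiteFun k x := by
  have hcoeff := hermiteFreq_mul_hermiteCoeff_succ k
  have hcoeff_succ := hermiteFreq_mul_hermiteCoeff_succ (k + 1)
  have hsq := hermiteFreq_sq k
  rw [hermiteFun_eq, hermiteFun_eq, hermiteFun_eq, iteratedDeriv_exp_neg_sq_add_two]
  set g := iteratedDeriv k (fun y : ℝ => Real.exp (-y ^ 2)) x
  set g₁ := iteratedDeriv (k + 1) (fun y : ℝ => Real.exp (-y ^ 2)) x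
  linear_combination (Real.exp (x ^ 2 / 2) * (-2 * x * g₁ - 2 * (k + 1) * g)) * hcoeff_succ +
    Real.exp (x ^ 2 / 2) * g * hermiteFreq k * hcoeff -
    Real.exp (x ^ 2 / 2) * g * hermiteCoeff (k + 1) * hsq

theorem hasDerivAt_hermiteFun (k : ℕ) (x : ℝ) :
    HasDerivAt (hermiteFun k) (x * hermiteFun k x - hermiteFreq k * hermiteFun (k + 1) x) x := by
  have hcoeff := hermiteFreq_mul_hermiteCoeff_succ k
  have hexp : HasDerivAt (fun y : ℝ => Real.exp (y ^ 2 / 2)) (Real.exp (x ^ 2 / 2) * x) x := by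
    simpa using ((hasDerivAt_pow 2 x).div_const 2).exp
  have hderiv := (hexp.const_mul (hermiteCoeff k)).mul (hasDerivAt_iteratedDeriv_exp_neg_sq k x)
  have hfun : hermiteFun k = (fun y => hermiteCoeff k * Real.exp (y ^ 2 / 2)) *
      iteratedDeriv k (fun y : ℝ => Real.exp (-y ^ 2)) := rfl
  rw [← hfun] at hderiv
  refine hderiv.congr_deriv ?_
  rw [hermiteFun_eq, hermiteFun_eq]
  linear_combination Real.exp (x ^ 2 / 2) *
    iteratedDeriv (k + 1) (fun y : ℝ => Real.exp (-y ^ 2)) x * hcoeff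

theorem hasDerivAt_hermiteFun_succ (k : ℕ) (x : ℝ) :
    HasDerivAt (hermiteFun (k + 1))
      (hermiteFreq k * hermiteFun k x - x * hermiteFun (k + 1) x) x := by
  refine (hasDerivAt_hermiteFun (k + 1) x).congr_deriv ?_
  rw [hermiteFreq_mul_hermiteFun_add_two]
  ring

theorem continuous_hermiteFun (k : ℕ) : Continuous (hermiteFun k) :=
  continuous_iff_continuousAt.2 fun x => (hasDerivAt_hermiteFun k x).continuousAt

/-- The integral kernel `∑_{k ≤ n} h_k(x) h_k(y)` of the `n`-th Hermite partial sum operator. -/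
noncomputable def hermiteKernel (n : ℕ) (x y : ℝ) : ℝ :=
  ∑ k ∈ Finset.range (n + 1), hermiteFun k x * hermiteFun k y

theorem continuous_hermiteKernel (n : ℕ) (x : ℝ) : Continuous (hermiteKernel n x) :=
  continuous_finsetSum _ fun k _ => continuous_const.mul (continuous_hermiteFun k)

theorem sub_mul_hermiteKernel (n : ℕ) (x y : ℝ) :
    (x - y) * hermiteKernel n x y = hermiteFreq n / 2 *
      (hermiteFun (n + 1) x * hermiteFun n y - hermiteFun n x * hermiteFun (n + 1) y) := by
  induction n with
  | zero =>
    have hx := hermiteFreq_zero_mul_hermiteFun_one x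
    have hy := hermiteFreq_zero_mul_hermiteFun_one y
    simp only [hermiteKernel, zero_add, Finset.sum_range_one]
    linear_combination -(hermiteFun 0 y / 2) * hx + (hermiteFun 0 x / 2) * hy
  | succ n ih =>
    have hx := hermiteFreq_mul_hermiteFun_add_two n x
    have hy := hermiteFreq_mul_hermiteFun_add_two n y
    rw [hermiteKernel, Finset.sum_range_succ, mul_add, ← hermiteKernel, ih]
    linear_combination -(hermiteFun (n + 1) y / 2) * hx + (hermiteFun (n + 1) x / 2) * hy

theorem integrable_continuous_mul_of_hasCompactSupport {X : Type*} [TopologicalSpace X]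
    [MeasurableSpace X] [OpensMeasurableSpace X] [T2Space X] {μ : Measure X} {g f : X → ℝ}
    (hg : Continuous g) (hf : Integrable f μ) (hfs : HasCompactSupport f) :
    Integrable (fun y => g y * f y) μ := by
  refine (integrableOn_iff_integrable_of_support_subset ?_).1
    (hf.integrableOn.continuousOn_mul hg.continuousOn hfs)
  exact (Function.support_mul_subset_right g f).trans (subset_tsupport f)

theorem hermitePartialSum_eq_integral (n : ℕ) {f : ℝ → ℝ} (hf : Integrable f)
    (hfs : HasCompactSupport f) (x : ℝ) :
    hermitePartialSum n f x = ∫ y, hermiteKernel n x y * f y := by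
  have hint : ∀ k, Integrable fun y => hermiteFun k x * (hermiteFun k y * f y) := fun k =>
    (integrable_continuous_mul_of_hasCompactSupport (continuous_hermiteFun k) hf hfs).const_mul _
  simp only [hermiteKernel, Finset.sum_mul, mul_assoc]
  rw [integral_finsetSum _ fun k _ => hint k, hermitePartialSum]
  refine Finset.sum_congr rfl fun k _ => ?_
  rw [integral_const_mul, mul_comm]
  simp only [mul_comm]

/-! ### The amplitude of the Hermite kernel -/

/-- The amplitude of the oscillations of `hermiteFun n` and `hermiteFun (n + 1)` near the origin. -/
noncomputable def hermiteRadius (n : ℕ) : ℝ :=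
  √(hermiteFun n 0 ^ 2 + hermiteFun (n + 1) 0 ^ 2)

theorem hermiteRadius_nonneg (n : ℕ) : 0 ≤ hermiteRadius n := Real.sqrt_nonneg _

theorem hermiteRadius_sq (n : ℕ) :
    hermiteRadius n ^ 2 = hermiteFun n 0 ^ 2 + hermiteFun (n + 1) 0 ^ 2 :=
  Real.sq_sqrt (by positivity)

/-- The factor by which the Hermite kernel differs from the Dirichlet kernel of the line near the
origin; it tends to `π⁻¹`. -/
noncomputable def hermiteAmplitude (n : ℕ) : ℝ :=
  hermiteFreq n / 2 * hermiteRadius n ^ 2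

theorem hermiteAmplitude_nonneg (n : ℕ) : 0 ≤ hermiteAmplitude n :=
  mul_nonneg (half_pos (hermiteFreq_pos n)).le (sq_nonneg _)

theorem hermiteFun_zero_zero_pow_four : (hermiteFun 0 0 ^ 2) ^ 2 = Real.pi⁻¹ := by
  simp only [hermiteFun, pow_zero, one_mul, Nat.cast_zero, neg_zero, zero_div, Real.rpow_zero,
    mul_one, Nat.factorial_zero, Nat.cast_one, Real.one_rpow, ne_eq, OfNat.ofNat_ne_zero,
    not_false_eq_true, zero_pow, Real.exp_zero, iteratedDeriv_zero, ← pow_mul]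
  rw [← Real.rpow_natCast, ← Real.rpow_mul Real.pi_pos.le]
  norm_num [Real.rpow_neg_one]

theorem add_two_mul_hermiteFun_add_two_zero_sq (n : ℕ) :
    ((n : ℝ) + 2) * hermiteFun (n + 2) 0 ^ 2 = (n + 1) * hermiteFun n 0 ^ 2 := by
  have hrec := congrArg (· ^ 2) (hermiteFreq_mul_hermiteFun_add_two n 0)
  simp only [mul_zero, zero_mul, zero_sub, neg_sq, mul_pow, hermiteFreq_sq, Nat.cast_succ] at hrec
  linear_combination hrec / 2

theorem hermiteFun_odd_zero (m : ℕ) : hermiteFun (2 * m + 1) 0 = 0 := by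
  induction m with
  | zero => simpa [(hermiteFreq_pos 0).ne'] using hermiteFreq_zero_mul_hermiteFun_one 0
  | succ m ih =>
    have hrec := add_two_mul_hermiteFun_add_two_zero_sq (2 * m + 1)
    have hne : 2 * (m : ℝ) + 1 + 2 ≠ 0 := by positivity
    rw [show 2 * (m + 1) + 1 = 2 * m + 1 + 2 by ring]
    simpa [ih, hne] using hrec

theorem hermiteFun_even_zero_pow_four (m : ℕ) :
    (hermiteFun (2 * m) 0 ^ 2) ^ 2 = (Real.pi * Real.Wallis.W m * (2 * m + 1))⁻¹ := by
  induction m with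
  | zero => simpa [Real.Wallis.W] using hermiteFun_zero_zero_pow_four
  | succ m ih =>
    have hrec : hermiteFun (2 * m + 2) 0 ^ 2 =
        (2 * m + 1) / (2 * m + 2) * hermiteFun (2 * m) 0 ^ 2 := by
      have h := add_two_mul_hermiteFun_add_two_zero_sq (2 * m)
      push_cast at h
      field_simp
      linear_combination h
    have hW := Real.Wallis.W_pos m
    have := Real.pi_pos
    rw [show 2 * (m + 1) = 2 * m + 2 by ring, hrec, mul_pow, ih, Real.Wallis.W_succ]
    push_cast
    field_simp
    ring

theorem hermiteAmplitude_sq (n : ℕ) :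
    hermiteAmplitude n ^ 2 = (n + 1) / (2 * ((n + 1) / 2 : ℕ) + 1) *
      (2 * Real.pi * Real.Wallis.W ((n + 1) / 2))⁻¹ := by
  have hradius : hermiteRadius n ^ 2 = hermiteFun (2 * ((n + 1) / 2)) 0 ^ 2 := by
    rw [hermiteRadius_sq]
    rcases Nat.even_or_odd' n with ⟨m, rfl | rfl⟩
    · rw [show (2 * m + 1) / 2 = m by lia, hermiteFun_odd_zero]
      ring
    · rw [show 2 * ((2 * m + 1 + 1) / 2) = 2 * m + 1 + 1 by lia, hermiteFun_odd_zero]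
      ring
  have hW := Real.Wallis.W_pos ((n + 1) / 2)
  rw [hermiteAmplitude, hradius, mul_pow, div_pow, hermiteFreq_sq, hermiteFun_even_zero_pow_four]
  field_simp

theorem tendsto_add_one_div_two_mul_half_add_one :
    Tendsto (fun n : ℕ => ((n : ℝ) + 1) / (2 * ((n + 1) / 2 : ℕ) + 1)) atTop (nhds 1) := by
  have hlow : Tendsto (fun n : ℕ => ((n : ℝ) + 1) / (n + 1 + 1)) atTop (nhds 1) := by
    simpa [Function.comp_def] using
      (tendsto_natCast_div_add_atTop (1 : ℝ)).comp (tendsto_add_atTop_nat 1)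
  refine tendsto_of_tendsto_of_tendsto_of_le_of_le hlow tendsto_const_nhds
    (fun n => ?_) (fun n => ?_)
  · have : (2 * ((n + 1) / 2 : ℕ) : ℝ) ≤ n + 1 := by
      exact_mod_cast (by lia : 2 * ((n + 1) / 2) ≤ n + 1)
    dsimp only
    gcongr
  · have : (n : ℝ) + 1 ≤ 2 * ((n + 1) / 2 : ℕ) + 1 := by
      exact_mod_cast (by lia : n + 1 ≤ 2 * ((n + 1) / 2) + 1)
    exact (div_le_one (by positivity)).2 this

theorem tendsto_hermiteAmplitude : Tendsto hermiteAmplitude atTop (nhds Real.pi⁻¹) := by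
  have hpi := Real.pi_pos
  have hhalf : Tendsto (fun n : ℕ => (n + 1) / 2) atTop atTop :=
    (Nat.tendsto_div_const_atTop two_ne_zero).comp (tendsto_add_atTop_nat 1)
  have hW : Tendsto (fun n : ℕ => (2 * Real.pi * Real.Wallis.W ((n + 1) / 2))⁻¹) atTop
      (nhds (2 * Real.pi * (Real.pi / 2))⁻¹) :=
    ((Real.Wallis.tendsto_W_nhds_pi_div_two.comp hhalf).const_mul _).inv₀ (by positivity)
  have hsq : Tendsto (fun n => hermiteAmplitude n ^ 2) atTop (nhds (Real.pi⁻¹ ^ 2)) := by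
    simp only [hermiteAmplitude_sq]
    convert tendsto_add_one_div_two_mul_half_add_one.mul hW using 2
    field_simp
  simpa only [Real.sqrt_sq (hermiteAmplitude_nonneg _), Real.sqrt_sq (inv_nonneg.2 hpi.le)]
    using hsq.sqrt

/-! ### Harmonic approximation of oscillators -/

section Oscillator

theorem norm_sub_le_of_norm_deriv_le_mul_norm {E : Type*} [NormedAddCommGroup E] [NormedSpace ℝ E]
    {w w' : ℝ → E} {ε T : ℝ} (hε : 0 ≤ ε) (hεT : 2 * (ε * T) ≤ 1)
    (hw : ∀ z, HasDerivAt w (w' z) z) (hw' : ∀ z, |z| ≤ T → ‖w' z‖ ≤ ε * ‖w z‖)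
    {x : ℝ} (hx : |x| ≤ T) : ‖w x - w 0‖ ≤ 2 * (ε * T) * ‖w 0‖ := by
  have hT : 0 ≤ T := (abs_nonneg x).trans hx
  have h0 : (0 : ℝ) ∈ Icc (-T) T := by simpa using hT
  have hcont : Continuous w := continuous_iff_continuousAt.2 fun z => (hw z).continuousAt
  obtain ⟨z₀, hz₀, hmax⟩ := (isCompact_Icc (a := -T) (b := T)).exists_isMaxOn ⟨0, h0⟩
    hcont.norm.continuousOn
  have hstep : ∀ y ∈ Icc (-T) T, ‖w y - w 0‖ ≤ ε * T * ‖w z₀‖ := fun y hy =>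
    calc ‖w y - w 0‖ ≤ ε * ‖w z₀‖ * ‖y - 0‖ :=
          (convex_Icc (-T) T).norm_image_sub_le_of_norm_hasDerivWithin_le
            (fun z _ => (hw z).hasDerivWithinAt)
            (fun z hz => (hw' z (abs_le.2 hz)).trans (mul_le_mul_of_nonneg_left (hmax hz) hε)) h0 hy
      _ ≤ ε * ‖w z₀‖ * T := by
          rw [sub_zero, Real.norm_eq_abs]
          exact mul_le_mul_of_nonneg_left (abs_le.2 hy) (by positivity)
      _ = ε * T * ‖w z₀‖ := by ring
  have hbound : ‖w z₀‖ ≤ 2 * ‖w 0‖ := by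
    nlinarith [hstep z₀ hz₀, norm_sub_norm_le (w z₀) (w 0), norm_nonneg (w z₀)]
  calc ‖w x - w 0‖ ≤ ε * T * ‖w z₀‖ := hstep x (abs_le.1 hx)
    _ ≤ ε * T * (2 * ‖w 0‖) := mul_le_mul_of_nonneg_left hbound (by positivity)
    _ = 2 * (ε * T) * ‖w 0‖ := by ring

theorem hasDerivAt_exp_mul_oscillator {g g' q : ℝ → ℝ} {N : ℝ} (hN : N ≠ 0) {x : ℝ}
    (hg : HasDerivAt g (g' x) x) (hg' : HasDerivAt g' ((q x - N ^ 2) * g x) x) :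
    HasDerivAt
      (fun x => Complex.exp ((N * x : ℝ) * Complex.I) * (g x + (g' x / N : ℝ) * Complex.I))
      (Complex.exp ((N * x : ℝ) * Complex.I) * ((q x * g x / N : ℝ) * Complex.I)) x := by
  have hexp : HasDerivAt (fun x : ℝ => Complex.exp ((N * x : ℝ) * Complex.I))
      (Complex.exp ((N * x : ℝ) * Complex.I) * (((N * 1 : ℝ) : ℂ) * Complex.I)) x :=
    ((((hasDerivAt_id x).const_mul N).ofReal_comp).mul_const Complex.I).cexp
  have hvec := hg.ofReal_comp.add (((hg'.div_const N).ofReal_comp).mul_const Complex.I)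
  refine (hexp.mul hvec).congr_deriv ?_
  have hNc : (N : ℂ) ≠ 0 := by exact_mod_cast hN
  simp only [Pi.add_apply]
  push_cast
  field_simp
  linear_combination (N * g' x : ℂ) * Complex.I_sq

theorem exp_neg_mul_I_mul_add_mul_I (θ a b : ℝ) :
    Complex.exp (-(θ * Complex.I)) * (a + b * Complex.I) =
      ((a * Real.cos θ + b * Real.sin θ : ℝ) : ℂ) +
        ((b * Real.cos θ - a * Real.sin θ : ℝ) : ℂ) * Complex.I := by
  rw [← neg_mul, ← Complex.ofReal_neg, Complex.exp_ofReal_mul_I, Real.cos_neg, Real.sin_neg]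
  push_cast
  linear_combination (-Complex.sin θ * b) * Complex.I_sq

variable {g g' q : ℝ → ℝ} {N Q T x : ℝ}

theorem norm_oscillator_sub_le (hN : 0 < N) (hQ : 0 ≤ Q) (hQT : 2 * (Q * T) ≤ N)
    (hg : ∀ x, HasDerivAt g (g' x) x) (hg' : ∀ x, HasDerivAt g' ((q x - N ^ 2) * g x) x)
    (hq : ∀ x, |x| ≤ T → |q x| ≤ Q) (hx : |x| ≤ T) :
    ‖(g x + (g' x / N : ℝ) * Complex.I : ℂ) -
        Complex.exp (-((N * x : ℝ) * Complex.I)) * (g 0 + (g' 0 / N : ℝ) * Complex.I)‖ ≤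
      2 * (Q * T) / N * √(g 0 ^ 2 + (g' 0 / N) ^ 2) := by
  set v : ℝ → ℂ := fun x => g x + (g' x / N : ℝ) * Complex.I
  have hv : ∀ z, |g z| ≤ ‖v z‖ := fun z => by simpa [v] using Complex.abs_re_le_norm (v z)
  have hw := norm_sub_le_of_norm_deriv_le_mul_norm (ε := Q / N) (by positivity)
    (by rw [div_mul_eq_mul_div, ← mul_div_assoc]; exact (div_le_one hN).2 hQT)
    (fun z => hasDerivAt_exp_mul_oscillator hN.ne' (hg z) (hg' z))
    (fun z hz => by
      rw [norm_mul, norm_mul, norm_mul, Complex.norm_exp_ofReal_mul_I, Complex.norm_I, one_mul,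
        mul_one, one_mul, Complex.norm_real, Real.norm_eq_abs, abs_div, abs_mul, abs_of_pos hN,
        mul_div_right_comm]
      exact mul_le_mul (div_le_div_of_nonneg_right (hq z hz) hN.le) (hv z) (abs_nonneg _)
        (by positivity)) hx
  have hexp : v x - Complex.exp (-((N * x : ℝ) * Complex.I)) * v 0 =
      Complex.exp (-((N * x : ℝ) * Complex.I)) *
        (Complex.exp ((N * x : ℝ) * Complex.I) * v x - v 0) := by
    rw [mul_sub, ← mul_assoc, ← Complex.exp_add, neg_add_cancel, Complex.exp_zero, one_mul]
  calc ‖v x - Complex.exp (-((N * x : ℝ) * Complex.I)) * v 0‖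
      = ‖Complex.exp ((N * x : ℝ) * Complex.I) * v x - v 0‖ := by
        rw [hexp, norm_mul, ← neg_mul, ← Complex.ofReal_neg, Complex.norm_exp_ofReal_mul_I, one_mul]
    _ ≤ 2 * (Q / N * T) * ‖v 0‖ := by simpa [v] using hw
    _ = 2 * (Q * T) / N * √(g 0 ^ 2 + (g' 0 / N) ^ 2) := by
        rw [← Complex.norm_add_mul_I]
        ring

theorem abs_oscillator_sub_le (hN : 0 < N) (hQ : 0 ≤ Q) (hQT : 2 * (Q * T) ≤ N)
    (hg : ∀ x, HasDerivAt g (g' x) x) (hg' : ∀ x, HasDerivAt g' ((q x - N ^ 2) * g x) x)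
    (hq : ∀ x, |x| ≤ T → |q x| ≤ Q) (hx : |x| ≤ T) :
    |g x - (g 0 * Real.cos (N * x) + g' 0 / N * Real.sin (N * x))| ≤
        2 * (Q * T) / N * √(g 0 ^ 2 + (g' 0 / N) ^ 2) ∧
      |g' x / N - (g' 0 / N * Real.cos (N * x) - g 0 * Real.sin (N * x))| ≤
        2 * (Q * T) / N * √(g 0 ^ 2 + (g' 0 / N) ^ 2) := by
  have hdist := norm_oscillator_sub_le hN hQ hQT hg hg' hq hx
  rw [exp_neg_mul_I_mul_add_mul_I] at hdist
  refine ⟨(Complex.abs_re_le_norm _).trans' (le_of_eq ?_) |>.trans hdist,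
    (Complex.abs_im_le_norm _).trans' (le_of_eq ?_) |>.trans hdist⟩
  · simp only [Complex.sub_re, Complex.add_re, Complex.ofReal_re, Complex.re_ofReal_mul,
      Complex.I_re, mul_zero, add_zero]
  · simp only [Complex.sub_im, Complex.add_im, Complex.ofReal_im, Complex.im_ofReal_mul,
      Complex.I_im, mul_one, zero_add]

end Oscillator

/-! ### The Hermite kernel near the origin -/

section HermiteApprox

/-- The harmonic oscillation with the initial data of `hermiteFun n` at the origin. -/
noncomputable def hermiteApprox (n : ℕ) (x : ℝ) : ℝ :=
  hermiteFun n 0 * Real.cos (hermiteFreq n * x) -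
    hermiteFun (n + 1) 0 * Real.sin (hermiteFreq n * x)

/-- The harmonic oscillation with the initial data of `hermiteFun (n + 1)` at the origin, at the
frequency `hermiteFreq n` of its partner `hermiteApprox n`. -/
noncomputable def hermiteApproxSucc (n : ℕ) (x : ℝ) : ℝ :=
  hermiteFun (n + 1) 0 * Real.cos (hermiteFreq n * x) +
    hermiteFun n 0 * Real.sin (hermiteFreq n * x)

/-- A bound on `[-T, T]` for the error of the harmonic approximation of Hermite functions. -/
noncomputable def hermiteError (n : ℕ) (T : ℝ) : ℝ :=
  2 * ((T ^ 2 + 1) * T) / hermiteFreq n * hermiteRadius n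

variable (n : ℕ) {T x y : ℝ}

theorem hermiteApprox_sq_add_hermiteApproxSucc_sq (x : ℝ) :
    hermiteApprox n x ^ 2 + hermiteApproxSucc n x ^ 2 = hermiteRadius n ^ 2 := by
  rw [hermiteRadius_sq, hermiteApprox, hermiteApproxSucc]
  linear_combination (hermiteFun n 0 ^ 2 + hermiteFun (n + 1) 0 ^ 2) *
    Real.sin_sq_add_cos_sq (hermiteFreq n * x)

theorem abs_hermiteApprox_le (x : ℝ) : |hermiteApprox n x| ≤ hermiteRadius n :=
  abs_le_of_sq_le_sq (by nlinarith [hermiteApprox_sq_add_hermiteApproxSucc_sq n x])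
    (hermiteRadius_nonneg n)

theorem abs_hermiteApproxSucc_le (x : ℝ) : |hermiteApproxSucc n x| ≤ hermiteRadius n :=
  abs_le_of_sq_le_sq (by nlinarith [hermiteApprox_sq_add_hermiteApproxSucc_sq n x])
    (hermiteRadius_nonneg n)

theorem hermiteApproxSucc_mul_sub (x y : ℝ) :
    hermiteFreq n / 2 * (hermiteApproxSucc n x * hermiteApprox n y -
      hermiteApprox n x * hermiteApproxSucc n y) =
      hermiteAmplitude n * Real.sin (hermiteFreq n * (x - y)) := by
  rw [mul_sub (hermiteFreq n) x, Real.sin_sub, hermiteAmplitude, hermiteRadius_sq, hermiteApprox,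
    hermiteApprox, hermiteApproxSucc, hermiteApproxSucc]
  ring

theorem hasDerivAt_hermiteApprox (x : ℝ) :
    HasDerivAt (hermiteApprox n) (-hermiteFreq n * hermiteApproxSucc n x) x := by
  have hphase := (hasDerivAt_id x).const_mul (hermiteFreq n)
  refine ((hphase.cos.const_mul (hermiteFun n 0)).sub
    (hphase.sin.const_mul (hermiteFun (n + 1) 0))).congr_deriv ?_
  simp only [id, hermiteApproxSucc]
  ring

theorem hasDerivAt_hermiteApproxSucc (x : ℝ) :
    HasDerivAt (hermiteApproxSucc n) (hermiteFreq n * hermiteApprox n x) x := by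
  have hphase := (hasDerivAt_id x).const_mul (hermiteFreq n)
  refine ((hphase.cos.const_mul (hermiteFun (n + 1) 0)).add
    (hphase.sin.const_mul (hermiteFun n 0))).congr_deriv ?_
  simp only [id, hermiteApprox]
  ring

theorem abs_hermiteFun_sub_le (hT : 2 * ((T ^ 2 + 1) * T) ≤ hermiteFreq n) (hx : |x| ≤ T) :
    |hermiteFun n x - hermiteApprox n x| ≤ hermiteError n T ∧
      |x * hermiteFun n x - hermiteFreq n * hermiteFun (n + 1) x -
        -hermiteFreq n * hermiteApproxSucc n x| ≤ hermiteFreq n * hermiteError n T := by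
  have hN := hermiteFreq_pos n
  have h := abs_oscillator_sub_le (g := hermiteFun n)
    (g' := fun x => x * hermiteFun n x - hermiteFreq n * hermiteFun (n + 1) x)
    (q := fun x => x ^ 2 + 1) hN (by positivity) hT (hasDerivAt_hermiteFun n)
    (fun x => (((hasDerivAt_id x).mul (hasDerivAt_hermiteFun n x)).sub
      ((hasDerivAt_hermiteFun_succ n x).const_mul _)).congr_deriv (by simp only [id]; ring))
    (fun x hx => by
      rw [abs_of_nonneg (by positivity), ← sq_abs x]
      gcongr) hx
  have h0 : (0 * hermiteFun n 0 - hermiteFreq n * hermiteFun (n + 1) 0) / hermiteFreq n =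
      -hermiteFun (n + 1) 0 := by
    field_simp
    ring
  simp only [h0, neg_sq] at h
  refine ⟨le_of_eq_of_le ?_ h.1, le_of_eq_of_le ?_ (mul_le_mul_of_nonneg_left h.2 hN.le)⟩
  · rw [hermiteApprox]
    ring_nf
  · rw [← abs_of_pos hN, ← abs_mul, abs_of_pos hN, hermiteApproxSucc]
    congr 1
    field_simp
    ring

theorem abs_hermiteFun_succ_sub_le (hT : 2 * ((T ^ 2 + 1) * T) ≤ hermiteFreq n) (hx : |x| ≤ T) :
    |hermiteFun (n + 1) x - hermiteApproxSucc n x| ≤ hermiteError n T ∧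
      |hermiteFreq n * hermiteFun n x - x * hermiteFun (n + 1) x -
        hermiteFreq n * hermiteApprox n x| ≤ hermiteFreq n * hermiteError n T := by
  have hN := hermiteFreq_pos n
  have h := abs_oscillator_sub_le (g := hermiteFun (n + 1))
    (g' := fun x => hermiteFreq n * hermiteFun n x - x * hermiteFun (n + 1) x)
    (q := fun x => x ^ 2 - 1) (Q := T ^ 2 + 1) hN (by positivity) hT
    (hasDerivAt_hermiteFun_succ n)
    (fun x => (((hasDerivAt_hermiteFun n x).const_mul _).sub
      ((hasDerivAt_id x).mul (hasDerivAt_hermiteFun_succ n x))).congr_deriv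
      (by simp only [id]; ring))
    (fun x hx => by
      have := sq_le_sq' (abs_le.1 hx).1 (abs_le.1 hx).2
      rw [abs_le]
      constructor <;> nlinarith [sq_nonneg x]) hx
  have h0 : (hermiteFreq n * hermiteFun n 0 - 0 * hermiteFun (n + 1) 0) / hermiteFreq n =
      hermiteFun n 0 := by
    field_simp
    ring
  simp only [h0, add_comm (hermiteFun (n + 1) 0 ^ 2)] at h
  refine ⟨h.1, le_of_eq_of_le ?_ (mul_le_mul_of_nonneg_left h.2 hN.le)⟩
  rw [← abs_of_pos hN, ← abs_mul, abs_of_pos hN, hermiteApprox]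
  congr 1
  field_simp

theorem hermiteError_nonneg (hT0 : 0 ≤ T) : 0 ≤ hermiteError n T :=
  mul_nonneg (div_nonneg (by positivity) (hermiteFreq_pos n).le) (hermiteRadius_nonneg n)

theorem hermiteError_le_hermiteRadius (hT : 2 * ((T ^ 2 + 1) * T) ≤ hermiteFreq n) :
    hermiteError n T ≤ hermiteRadius n :=
  mul_le_of_le_one_left (hermiteRadius_nonneg n) ((div_le_one (hermiteFreq_pos n)).2 hT)

end HermiteApprox

theorem abs_mul_sub_mul_le {a a' b b' α δ ρ : ℝ} (hα : 0 ≤ α) (hδ : 0 ≤ δ) (hδρ : δ ≤ ρ)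
    (ha : |a - a'| ≤ α * δ) (hb : |b - b'| ≤ δ) (ha' : |a'| ≤ α * ρ) (hb' : |b'| ≤ ρ) :
    |a * b - a' * b'| ≤ 3 * (α * (ρ * δ)) := by
  have : 0 ≤ ρ := hδ.trans hδρ
  calc |a * b - a' * b'| = |(a - a') * (b - b') + (a - a') * b' + a' * (b - b')| := by ring_nf
    _ ≤ |(a - a') * (b - b')| + |(a - a') * b'| + |a' * (b - b')| := abs_add_three _ _ _
    _ ≤ (α * δ) * ρ + (α * δ) * ρ + (α * ρ) * δ := by
        rw [abs_mul, abs_mul, abs_mul]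
        gcongr
        exact hb.trans hδρ
    _ = 3 * (α * (ρ * δ)) := by ring

section Numerator

/-- The error made in the numerator of the Christoffel–Darboux formula when the Hermite functions
are replaced by their harmonic approximations. -/
noncomputable def hermiteNumeratorError (n : ℕ) (x y : ℝ) : ℝ :=
  (x - y) * hermiteKernel n x y - hermiteAmplitude n * Real.sin (hermiteFreq n * (x - y))

/-- The Lipschitz constant of `hermiteNumeratorError n` on `[-T, T]`. -/
noncomputable def hermiteNumeratorBound (n : ℕ) (T : ℝ) : ℝ :=
  12 * hermiteAmplitude n * ((T ^ 2 + 1) * T)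

variable (n : ℕ) {T x y : ℝ}

theorem hermiteNumeratorBound_nonneg (hT0 : 0 ≤ T) : 0 ≤ hermiteNumeratorBound n T :=
  mul_nonneg (mul_nonneg (by norm_num) (hermiteAmplitude_nonneg n)) (by positivity)

theorem hermiteNumeratorError_eq (x y : ℝ) :
    hermiteNumeratorError n x y = hermiteFreq n / 2 *
      ((hermiteFun (n + 1) x * hermiteFun n y - hermiteApproxSucc n x * hermiteApprox n y) -
        (hermiteFun n x * hermiteFun (n + 1) y - hermiteApprox n x * hermiteApproxSucc n y)) := by
  rw [hermiteNumeratorError, sub_mul_hermiteKernel, ← hermiteApproxSucc_mul_sub]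
  ring

theorem hermiteNumeratorBound_eq (T : ℝ) :
    hermiteNumeratorBound n T =
      hermiteFreq n * (3 * (hermiteFreq n * (hermiteRadius n * hermiteError n T))) := by
  have := hermiteFreq_pos n
  rw [hermiteNumeratorBound, hermiteAmplitude, hermiteError]
  field_simp
  ring

theorem abs_hermiteNumeratorError_le (hT : 2 * ((T ^ 2 + 1) * T) ≤ hermiteFreq n)
    (hx : |x| ≤ T) (hy : |y| ≤ T) :
    |hermiteNumeratorError n x y| ≤ hermiteNumeratorBound n T / hermiteFreq n := by
  have hN := hermiteFreq_pos n
  have hδ0 := hermiteError_nonneg n ((abs_nonneg x).trans hx)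
  have hδρ := hermiteError_le_hermiteRadius n hT
  have hsucc := abs_mul_sub_mul_le zero_le_one hδ0 hδρ
    (by simpa using (abs_hermiteFun_succ_sub_le n hT hx).1) (abs_hermiteFun_sub_le n hT hy).1
    (by simpa using abs_hermiteApproxSucc_le n x) (abs_hermiteApprox_le n y)
  have hself := abs_mul_sub_mul_le zero_le_one hδ0 hδρ
    (by simpa using (abs_hermiteFun_sub_le n hT hx).1) (abs_hermiteFun_succ_sub_le n hT hy).1
    (by simpa using abs_hermiteApprox_le n x) (abs_hermiteApproxSucc_le n y)
  rw [hermiteNumeratorError_eq, hermiteNumeratorBound_eq, mul_div_cancel_left₀ _ hN.ne', abs_mul,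
    abs_of_pos (half_pos hN)]
  refine (mul_le_mul_of_nonneg_left ((abs_sub _ _).trans (add_le_add hsucc hself))
    (half_pos hN).le).trans_eq ?_
  ring

theorem hasDerivAt_hermiteNumeratorError (y z : ℝ) :
    HasDerivAt (hermiteNumeratorError n · y) (hermiteFreq n / 2 *
      (((hermiteFreq n * hermiteFun n z - z * hermiteFun (n + 1) z) * hermiteFun n y -
          hermiteFreq n * hermiteApprox n z * hermiteApprox n y) -
        ((z * hermiteFun n z - hermiteFreq n * hermiteFun (n + 1) z) * hermiteFun (n + 1) y -
          -hermiteFreq n * hermiteApproxSucc n z * hermiteApproxSucc n y))) z := by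
  simp only [hermiteNumeratorError_eq]
  exact ((((hasDerivAt_hermiteFun_succ n z).mul_const _).sub
    ((hasDerivAt_hermiteApproxSucc n z).mul_const _)).sub
    (((hasDerivAt_hermiteFun n z).mul_const _).sub
    ((hasDerivAt_hermiteApprox n z).mul_const _))).const_mul _

theorem abs_hermiteNumeratorError_le_mul (hT : 2 * ((T ^ 2 + 1) * T) ≤ hermiteFreq n)
    (hx : |x| ≤ T) (hy : |y| ≤ T) :
    |hermiteNumeratorError n x y| ≤ hermiteNumeratorBound n T * |x - y| := by
  have hN := hermiteFreq_pos n
  have hδ0 := hermiteError_nonneg n ((abs_nonneg x).trans hx)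
  have hδρ := hermiteError_le_hermiteRadius n hT
  have hzero : hermiteNumeratorError n y y = 0 := by simp [hermiteNumeratorError]
  have hlip := (convex_Icc (-T) T).norm_image_sub_le_of_norm_hasDerivWithin_le
    (f := (hermiteNumeratorError n · y)) (C := hermiteNumeratorBound n T)
    (fun z _ => (hasDerivAt_hermiteNumeratorError n y z).hasDerivWithinAt) (fun z hz => ?_)
    (abs_le.1 hy) (abs_le.1 hx)
  · simpa [hzero] using hlip
  have hz : |z| ≤ T := abs_le.2 hz
  have hsucc := abs_mul_sub_mul_le hN.le hδ0 hδρ (abs_hermiteFun_succ_sub_le n hT hz).2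
    (abs_hermiteFun_sub_le n hT hy).1
    (by
      rw [abs_mul, abs_of_pos hN]
      exact mul_le_mul_of_nonneg_left (abs_hermiteApprox_le n z) hN.le)
    (abs_hermiteApprox_le n y)
  have hself := abs_mul_sub_mul_le hN.le hδ0 hδρ (abs_hermiteFun_sub_le n hT hz).2
    (abs_hermiteFun_succ_sub_le n hT hy).1
    (by
      rw [abs_mul, abs_neg, abs_of_pos hN]
      exact mul_le_mul_of_nonneg_left (abs_hermiteApproxSucc_le n z) hN.le)
    (abs_hermiteApproxSucc_le n y)
  rw [hermiteNumeratorBound_eq, Real.norm_eq_abs, abs_mul, abs_of_pos (half_pos hN)]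
  refine (mul_le_mul_of_nonneg_left ((abs_sub _ _).trans (add_le_add hsucc hself))
    (half_pos hN).le).trans_eq ?_
  ring

end Numerator

/-- The height of the Poisson kernel that dominates the error of the Hermite kernel on
`[-T, T]²`. -/
noncomputable def hermiteHeight (n : ℕ) (T : ℝ) : ℝ := √(2 * T / hermiteFreq n)

/-- The multiple of the Poisson kernel that dominates the error of the Hermite kernel on
`[-T, T]²`. -/
noncomputable def hermiteRemainder (n : ℕ) (T : ℝ) : ℝ :=
  2 * Real.pi * hermiteNumeratorBound n T * hermiteHeight n T

section HermiteKernel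

variable (n : ℕ) {T x y : ℝ}

theorem hermiteHeight_pos (hT : 0 < T) : 0 < hermiteHeight n T :=
  Real.sqrt_pos.2 (div_pos (by positivity) (hermiteFreq_pos n))

theorem hermiteRemainder_nonneg (hT : 0 < T) : 0 ≤ hermiteRemainder n T :=
  mul_nonneg (mul_nonneg Real.two_pi_pos.le (hermiteNumeratorBound_nonneg n hT.le))
    (hermiteHeight_pos n hT).le

theorem le_two_mul_mul_sq_div_of_abs_mul_le {E L N κ u : ℝ} (hL : 0 ≤ L) (hN : 0 < N) (hu : u ≠ 0)
    (hlip : |u| * E ≤ L * |u|) (hsmall : |u| * E ≤ L / N) (huκ : |u| ≤ N * κ ^ 2) :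
    E ≤ 2 * L * κ ^ 2 / (u ^ 2 + κ ^ 2) := by
  have hu0 : 0 < |u| := abs_pos.2 hu
  have hE : E ≤ L := by
    rw [mul_comm] at hlip
    exact le_of_mul_le_mul_right hlip hu0
  have hEu : E * u ^ 2 ≤ L * κ ^ 2 := by
    have hNE : N * (|u| * E) ≤ L := by rwa [mul_comm, ← le_div_iff₀ hN]
    have hNEu : N * (|u| * E) * |u| ≤ L * (N * κ ^ 2) := mul_le_mul hNE huκ hu0.le hL
    rw [← sq_abs]
    nlinarith
  rw [le_div_iff₀ (by positivity)]
  nlinarith [mul_le_mul_of_nonneg_right hE (sq_nonneg κ)]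

-- The height `κ` is chosen so that the two bounds `L` and `L / (N |u|)` for the error are together
-- equivalent to the single bound `L κ² / (u² + κ²)` on `|u| ≤ 2T`.
theorem abs_hermiteKernel_sub_le (hT0 : 0 < T) (hT : 2 * ((T ^ 2 + 1) * T) ≤ hermiteFreq n)
    (hx : |x| ≤ T) (hy : |y| ≤ T) (hxy : x ≠ y) :
    |hermiteKernel n x y -
        hermiteAmplitude n * (hermiteFreq n * Real.sinc (hermiteFreq n * (x - y)))| ≤
      hermiteRemainder n T * poissonDensity (hermiteHeight n T) (x - y) := by
  have hN := hermiteFreq_pos n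
  have hu : x - y ≠ 0 := sub_ne_zero.2 hxy
  have hκ : hermiteFreq n * hermiteHeight n T ^ 2 = 2 * T := by
    rw [hermiteHeight, Real.sq_sqrt (by positivity)]
    field_simp
  have hnum : hermiteNumeratorError n x y = (x - y) * (hermiteKernel n x y -
      hermiteAmplitude n * (hermiteFreq n * Real.sinc (hermiteFreq n * (x - y)))) := by
    rw [hermiteNumeratorError, Real.sinc_of_ne_zero (mul_ne_zero hN.ne' hu)]
    field_simp
  have hsmall := abs_hermiteNumeratorError_le n hT hx hy
  have hlip := abs_hermiteNumeratorError_le_mul n hT hx hy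
  rw [hnum, abs_mul] at hsmall hlip
  have hR : hermiteRemainder n T * poissonDensity (hermiteHeight n T) (x - y) =
      2 * hermiteNumeratorBound n T * hermiteHeight n T ^ 2 /
        ((x - y) ^ 2 + hermiteHeight n T ^ 2) := by
    have := Real.pi_ne_zero
    rw [hermiteRemainder, poissonDensity]
    field_simp
  rw [hR]
  exact le_two_mul_mul_sq_div_of_abs_mul_le (hermiteNumeratorBound_nonneg n hT0.le) hN hu hlip
    hsmall (hκ ▸ (abs_sub _ _).trans (by linarith))

variable {f : ℝ → ℝ}

theorem abs_hermitePartialSum_sub_le (hT0 : 0 < T) (hT : 2 * ((T ^ 2 + 1) * T) ≤ hermiteFreq n)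
    (hf : Integrable f) (hfT : Function.support f ⊆ Icc (-T) T) (hx : |x| ≤ T) :
    |hermitePartialSum n f x - hermiteAmplitude n * dirichletOp (hermiteFreq n) f x| ≤
      hermiteRemainder n T * poissonExt (hermiteHeight n T) (fun y => |f y|) x := by
  have hfs : HasCompactSupport f := .of_support_subset_isCompact isCompact_Icc hfT
  have hkernel := integrable_continuous_mul_of_hasCompactSupport
    (continuous_hermiteKernel n x) hf hfs
  have hsinc := (integrable_mul_sinc_mul (hermiteFreq n) hf x).const_mul (hermiteAmplitude n)
  have hpoisson := (integrable_poissonDensity_mul (hermiteHeight_pos n hT0) hf.abs x).const_mul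
    (hermiteRemainder n T)
  rw [hermitePartialSum_eq_integral n hf hfs, dirichletOp, poissonExt, ← integral_const_mul,
    ← integral_const_mul, ← integral_sub hkernel hsinc, ← Real.norm_eq_abs]
  refine norm_integral_le_of_norm_le hpoisson ?_
  filter_upwards [compl_mem_ae_iff.2 (measure_singleton x)] with y hy
  by_cases hfy : f y = 0
  · simp [hfy]
  have hpt := mul_le_mul_of_nonneg_right (abs_hermiteKernel_sub_le n hT0 hT hx
    (abs_le.2 (hfT hfy)) (fun h => hy h.symm)) (abs_nonneg (f y))
  rw [← abs_mul, sub_mul, mul_assoc] at hpt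
  simpa only [mul_assoc, Real.norm_eq_abs] using hpt

theorem IsEvenYoung.modular_indicator_hermitePartialSum_sub_le {φ : ℝ → ℝ} (h : IsEvenYoung φ)
    (hT0 : 0 < T) (hT : 2 * ((T ^ 2 + 1) * T) ≤ hermiteFreq n) (hR : hermiteRemainder n T ≤ 1)
    (hm : Measurable f) (hf : Integrable f) (hfT : Function.support f ⊆ Icc (-T) T) :
    modular φ (indicator (Ioo (-T) T) fun x => hermitePartialSum n f x -
        hermiteAmplitude n * dirichletOp (hermiteFreq n) f x) ≤
      ENNReal.ofReal (hermiteRemainder n T) * modular φ f := by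
  have hR0 := hermiteRemainder_nonneg n hT0
  have hκ := hermiteHeight_pos n hT0
  have hpt : ∀ x, |indicator (Ioo (-T) T) (fun x => hermitePartialSum n f x -
        hermiteAmplitude n * dirichletOp (hermiteFreq n) f x) x| ≤
      |hermiteRemainder n T * poissonExt (hermiteHeight n T) (fun y => |f y|) x| := fun x => by
    by_cases hx : x ∈ Ioo (-T) T
    · rw [indicator_of_mem hx]
      exact (abs_hermitePartialSum_sub_le n hT0 hT hf hfT (abs_le.2 ⟨hx.1.le, hx.2.le⟩)).trans
        (le_abs_self _)
    · rw [indicator_of_notMem hx, abs_zero]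
      exact abs_nonneg _
  calc modular φ (indicator (Ioo (-T) T) fun x => hermitePartialSum n f x -
          hermiteAmplitude n * dirichletOp (hermiteFreq n) f x)
      ≤ modular φ (fun x => hermiteRemainder n T *
          poissonExt (hermiteHeight n T) (fun y => |f y|) x) := h.modular_mono hpt
    _ ≤ ENNReal.ofReal (hermiteRemainder n T) *
          modular φ (poissonExt (hermiteHeight n T) fun y => |f y|) :=
        modular_mul_le hR0 (h.map_mul_le hR0 hR)
    _ ≤ ENNReal.ofReal (hermiteRemainder n T) * modular φ f :=
        mul_le_mul_right ((h.modular_poissonExt_le hκ hm.abs).trans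
          (h.modular_mono fun x => (abs_abs _).le)) _

end HermiteKernel

section SlowGrowth

variable {T : ℕ → ℝ}

theorem eventually_two_mul_le_hermiteFreq (hTinf : Tendsto T atTop atTop)
    (hT : Tendsto (fun n => T n ^ 7 / hermiteFreq n) atTop (nhds 0)) :
    ∀ᶠ n : ℕ in atTop, 2 * ((T n ^ 2 + 1) * T n) ≤ hermiteFreq n := by
  filter_upwards [hT.eventually_le_const (by norm_num : (0 : ℝ) < 1 / 4),
    hTinf.eventually_ge_atTop 1] with n hn h1
  rw [div_le_iff₀ (hermiteFreq_pos n)] at hn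
  nlinarith [pow_le_pow_right₀ h1 (by norm_num : 1 ≤ 7), pow_le_pow_right₀ h1
    (by norm_num : 3 ≤ 7)]

theorem hermiteRemainder_le {n : ℕ} {T : ℝ} (hT : 1 ≤ T) :
    hermiteRemainder n T ≤ 96 * Real.pi * hermiteAmplitude n * √(T ^ 7 / hermiteFreq n) := by
  have hN := hermiteFreq_pos n
  have hA := hermiteAmplitude_nonneg n
  have hheight0 : 0 ≤ hermiteHeight n T := Real.sqrt_nonneg _
  have hheight : hermiteHeight n T ≤ 2 * √(T / hermiteFreq n) := by
    rw [hermiteHeight, Real.sqrt_le_left (by positivity), mul_pow, Real.sq_sqrt (by positivity),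
      mul_div_assoc]
    gcongr
    norm_num
  have hcube : (T ^ 2 + 1) * T ≤ 2 * T ^ 3 := by nlinarith
  have hpow : T ^ 3 * √(T / hermiteFreq n) = √(T ^ 7 / hermiteFreq n) := by
    rw [← Real.sqrt_sq (by positivity : 0 ≤ T ^ 3), ← Real.sqrt_mul (by positivity)]
    congr 1
    ring
  calc hermiteRemainder n T
      = 24 * Real.pi * hermiteAmplitude n * (((T ^ 2 + 1) * T) * hermiteHeight n T) := by
        rw [hermiteRemainder, hermiteNumeratorBound]
        ring
    _ ≤ 24 * Real.pi * hermiteAmplitude n * ((2 * T ^ 3) * (2 * √(T / hermiteFreq n))) := by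
        gcongr
    _ = 96 * Real.pi * hermiteAmplitude n * √(T ^ 7 / hermiteFreq n) := by
        rw [← hpow]
        ring

theorem tendsto_hermiteRemainder (hTinf : Tendsto T atTop atTop)
    (hT : Tendsto (fun n => T n ^ 7 / hermiteFreq n) atTop (nhds 0)) :
    Tendsto (fun n => hermiteRemainder n (T n)) atTop (nhds 0) := by
  have hlim : Tendsto (fun n => 96 * Real.pi * hermiteAmplitude n * √(T n ^ 7 / hermiteFreq n))
      atTop (nhds 0) := by
    simpa using (tendsto_hermiteAmplitude.const_mul (96 * Real.pi)).mul hT.sqrt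
  refine squeeze_zero' ?_ ?_ hlim
  · filter_upwards [hTinf.eventually_gt_atTop 0] with n hn using hermiteRemainder_nonneg n hn
  · filter_upwards [hTinf.eventually_ge_atTop 1] with n hn using hermiteRemainder_le hn

end SlowGrowth

/-! ### Dirichlet integrals of test functions -/

section Fourier

variable {N : ℝ}

theorem ofReal_mul_sinc_eq_integral (N u : ℝ) :
    ((N * Real.sinc (N * u) : ℝ) : ℂ) = Real.pi *
      ∫ w in -(N / (2 * Real.pi))..N / (2 * Real.pi),
        Complex.exp (↑(2 * Real.pi * (w * u)) * Complex.I) := by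
  rcases eq_or_ne u 0 with rfl | hu
  · simp only [mul_zero, Complex.ofReal_zero, zero_mul, Complex.exp_zero, Real.sinc_zero, mul_one,
      intervalIntegral.integral_const, sub_neg_eq_add, ← Complex.ofReal_one, Complex.real_smul]
    rw [← Complex.ofReal_mul, ← Complex.ofReal_mul]
    congr 1
    field_simp
    norm_num
  · have hsub := intervalIntegral.integral_comp_mul_left
      (fun t : ℝ => Complex.exp (t * Complex.I)) (a := -(N / (2 * Real.pi)))
      (b := N / (2 * Real.pi)) (c := 2 * Real.pi * u) (by positivity)
    rw [show 2 * Real.pi * u * -(N / (2 * Real.pi)) = -(N * u) by field_simp,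
      show 2 * Real.pi * u * (N / (2 * Real.pi)) = N * u by field_simp,
      integral_exp_mul_I_eq_sinc] at hsub
    simp only [show ∀ w : ℝ, 2 * Real.pi * (w * u) = 2 * Real.pi * u * w from fun w => by ring]
    rw [hsub, Complex.real_smul]
    push_cast
    have hpi : (Real.pi : ℂ) ≠ 0 := by exact_mod_cast Real.pi_ne_zero
    have hu' : (u : ℂ) ≠ 0 := by exact_mod_cast hu
    field_simp

theorem integrable_exp_mul_I_mul {α : Type*} [MeasurableSpace α] {μ : Measure α} {θ : α → ℝ}
    {G : α → ℂ} (hθ : Measurable θ) (hG : Integrable G μ) :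
    Integrable (fun w => Complex.exp (θ w * Complex.I) * G w) μ :=
  hG.bdd_mul (c := 1) (by fun_prop) (ae_of_all _ fun w => (Complex.norm_exp_ofReal_mul_I _).le)

open FourierTransform

theorem integral_exp_mul_eq_exp_mul_fourier (g : ℝ → ℂ) (w x : ℝ) :
    ∫ y, Complex.exp (↑(2 * Real.pi * (w * (x - y))) * Complex.I) * g y =
      Complex.exp (↑(2 * Real.pi * (w * x)) * Complex.I) * 𝓕 g w := by
  rw [Real.fourier_eq', ← integral_const_mul]
  congr with y
  rw [smul_eq_mul, ← mul_assoc (Complex.exp _) (Complex.exp _), ← Complex.exp_add]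
  congr 2
  simp only [RCLike.inner_apply, conj_trivial]
  push_cast
  ring

theorem ofReal_dirichletOp_eq (hN : 0 < N) {g : ℝ → ℝ} (hg : Integrable g) (x : ℝ) :
    ((dirichletOp N g x : ℝ) : ℂ) = Real.pi *
      ∫ w in Ioc (-(N / (2 * Real.pi))) (N / (2 * Real.pi)),
        Complex.exp (↑(2 * Real.pi * (w * x)) * Complex.I) * 𝓕 (fun y => (g y : ℂ)) w := by
  set S := Ioc (-(N / (2 * Real.pi))) (N / (2 * Real.pi))
  have hfubini : Integrable (Function.uncurry fun (y w : ℝ) =>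
      Complex.exp (↑(2 * Real.pi * (w * (x - y))) * Complex.I) * (g y : ℂ))
      (volume.prod (volume.restrict S)) :=
    integrable_exp_mul_I_mul (by fun_prop) (by
      simpa using hg.ofReal.mul_prod (integrable_const (μ := volume.restrict S) (1 : ℂ)))
  rw [dirichletOp, ← integral_complex_ofReal]
  calc ∫ y, ((N * Real.sinc (N * (x - y)) * g y : ℝ) : ℂ)
      = ∫ y, Real.pi * ∫ w in S,
          Complex.exp (↑(2 * Real.pi * (w * (x - y))) * Complex.I) * (g y : ℂ) := by
        congr with y
        rw [Complex.ofReal_mul, ofReal_mul_sinc_eq_integral, integral_mul_const, mul_assoc,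
          intervalIntegral.integral_of_le (neg_le_self (by positivity))]
    _ = Real.pi * ∫ w in S, ∫ y,
          Complex.exp (↑(2 * Real.pi * (w * (x - y))) * Complex.I) * (g y : ℂ) := by
        rw [integral_const_mul, integral_integral_swap hfubini]
    _ = _ := by simp only [integral_exp_mul_eq_exp_mul_fourier]

theorem eq_integral_exp_mul_fourier {g : ℝ → ℂ} (hgc : Continuous g) (hg : Integrable g)
    (hGi : Integrable (𝓕 g)) (x : ℝ) :
    g x = ∫ w, Complex.exp (↑(2 * Real.pi * (w * x)) * Complex.I) * 𝓕 g w := by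
  rw [← congrFun (hgc.fourierInv_fourier_eq hg hGi) x, Real.fourierInv_eq']
  simp [mul_comm]

theorem norm_setIntegral_compl_Ioc_le {E : Type*} [NormedAddCommGroup E] [NormedSpace ℝ E]
    {G : ℝ → E} {a : ℝ} (ha : 0 < a) (hG : Integrable fun w => |w| * ‖G w‖) :
    ‖∫ w in (Ioc (-a) a)ᶜ, G w‖ ≤ a⁻¹ * ∫ w, |w| * ‖G w‖ := by
  have hbound : ‖∫ w in (Ioc (-a) a)ᶜ, G w‖ ≤
      ∫ w in (Ioc (-a) a)ᶜ, a⁻¹ * (|w| * ‖G w‖) := by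
    refine norm_integral_le_of_norm_le (hG.const_mul _).integrableOn ?_
    filter_upwards [ae_restrict_mem measurableSet_Ioc.compl] with w hw
    have haw : a ≤ |w| := by
      by_contra! hlt
      exact hw ⟨(abs_lt.1 hlt).1, (abs_lt.1 hlt).2.le⟩
    rw [← mul_assoc, inv_mul_eq_div]
    exact le_mul_of_one_le_left (norm_nonneg _) ((one_le_div ha).2 haw)
  refine hbound.trans ((setIntegral_le_integral (hG.const_mul _)
    (ae_of_all _ fun w => by positivity)).trans_eq ?_)
  exact integral_const_mul _ _

theorem abs_dirichletOp_sub_le (hN : 0 < N) {g : ℝ → ℝ} (hgc : Continuous g) (hg : Integrable g)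
    (hGi : Integrable (𝓕 fun y => (g y : ℂ)))
    (hGi' : Integrable fun w => |w| * ‖𝓕 (fun y => (g y : ℂ)) w‖) (x : ℝ) :
    |dirichletOp N g x - Real.pi * g x| ≤
      (2 * Real.pi ^ 2 * ∫ w, |w| * ‖𝓕 (fun y => (g y : ℂ)) w‖) / N := by
  set G := 𝓕 fun y => (g y : ℂ)
  set a := N / (2 * Real.pi) with ha
  have hE : Integrable fun w : ℝ => Complex.exp (↑(2 * Real.pi * (w * x)) * Complex.I) * G w :=
    integrable_exp_mul_I_mul (by fun_prop) hGi
  have hdiff : ((dirichletOp N g x - Real.pi * g x : ℝ) : ℂ) = -(Real.pi *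
      ∫ w in (Ioc (-a) a)ᶜ, Complex.exp (↑(2 * Real.pi * (w * x)) * Complex.I) * G w) := by
    rw [Complex.ofReal_sub, Complex.ofReal_mul, ofReal_dirichletOp_eq hN hg,
      eq_integral_exp_mul_fourier (g := fun y => (g y : ℂ)) (by fun_prop) hg.ofReal hGi,
      ← integral_add_compl measurableSet_Ioc hE]
    ring
  have htail := norm_setIntegral_compl_Ioc_le (a := a) (by positivity)
    (G := fun w => Complex.exp (↑(2 * Real.pi * (w * x)) * Complex.I) * G w)
    (by simpa only [norm_mul, Complex.norm_exp_ofReal_mul_I, one_mul] using hGi')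
  simp only [norm_mul, Complex.norm_exp_ofReal_mul_I, one_mul] at htail
  rw [← Real.norm_eq_abs, ← Complex.norm_real, hdiff, norm_neg, norm_mul, Complex.norm_real,
    Real.norm_of_nonneg Real.pi_pos.le]
  refine (mul_le_mul_of_nonneg_left htail Real.pi_pos.le).trans_eq ?_
  rw [ha]
  field_simp

theorem exists_abs_dirichletOp_sub_le {g : ℝ → ℝ} (hg : ContDiff ℝ (⊤ : ℕ∞) g)
    (hgs : HasCompactSupport g) :
    ∃ C, 0 ≤ C ∧ ∀ N, 0 < N → ∀ x, |dirichletOp N g x - Real.pi * g x| ≤ C / N := by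
  have hs : HasCompactSupport fun y => (g y : ℂ) := hgs.comp_left Complex.ofReal_zero
  let F : SchwartzMap ℝ ℂ := hs.toSchwartzMap (Complex.ofRealCLM.contDiff.comp hg)
  let G : SchwartzMap ℝ ℂ := 𝓕 F
  have hG' : Integrable fun w => |w| * ‖G w‖ := by
    simpa using G.integrable_pow_mul volume 1
  exact ⟨_, by positivity, fun N hN => abs_dirichletOp_sub_le hN hg.continuous
    (hg.continuous.integrable_of_hasCompactSupport hgs) G.integrable hG'⟩

end Fourier

/-! ### Density of test functions -/

/-- The restriction of `f` to the set where both the argument and the value are at most `M`, used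
to approximate `f` by bounded integrable functions. -/
noncomputable def truncation (f : ℝ → ℝ) (M : ℝ) : ℝ → ℝ :=
  indicator {x | |f x| ≤ M ∧ |x| ≤ M} f

section Truncation

variable {f : ℝ → ℝ} {M : ℝ}

theorem measurable_truncation (hf : Measurable f) (M : ℝ) : Measurable (truncation f M) :=
  hf.indicator ((measurableSet_le hf.abs measurable_const).inter
    (measurableSet_le measurable_id.abs measurable_const))

theorem abs_truncation_le (hM : 0 ≤ M) (x : ℝ) : |truncation f M x| ≤ M := by
  rw [truncation, indicator_apply]
  split_ifs with hx
  · exact hx.1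
  · simpa using hM

theorem abs_sub_truncation_le (x : ℝ) : |f x - truncation f M x| ≤ |f x| := by
  rw [truncation, indicator_apply]
  split_ifs <;> simp

theorem truncation_of_le {x : ℝ} (hf : |f x| ≤ M) (hx : |x| ≤ M) : truncation f M x = f x :=
  indicator_of_mem (show x ∈ {x | |f x| ≤ M ∧ |x| ≤ M} from ⟨hf, hx⟩) f

theorem integrable_truncation (hm : Measurable f) (hM : 0 ≤ M) : Integrable (truncation f M) := by
  have hsupp : Function.support (truncation f M) ⊆ Icc (-M) M :=
    support_indicator_subset.trans fun x hx => abs_le.1 hx.2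
  rw [← integrableOn_iff_integrable_of_support_subset hsupp]
  exact Measure.integrableOn_of_bounded (M := M) (by simp)
    (measurable_truncation hm M).aestronglyMeasurable (ae_of_all _ (abs_truncation_le hM))

end Truncation

namespace IsEvenYoung

variable {φ : ℝ → ℝ} {f : ℝ → ℝ} {ε : ENNReal}

theorem modular_indicator_const {α : Type*} [MeasurableSpace α] {μ : Measure α}
    (h : IsEvenYoung φ) {s : Set α} (hs : MeasurableSet s) (a : ℝ) :
    modular φ (indicator s fun _ => a) μ = ENNReal.ofReal (φ a) * μ s := by
  rw [modular, ← lintegral_indicator_const hs]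
  congr with x
  by_cases hx : x ∈ s <;> simp [hx, h.zero]

theorem exists_modular_sub_truncation_le (h : IsEvenYoung φ) (hm : Measurable f)
    (hf : modular φ f ≠ ⊤) (hε : ε ≠ 0) :
    ∃ M, 0 ≤ M ∧ modular φ (fun x => f x - truncation f M x) ≤ ε := by
  have hlim : Tendsto (fun k : ℕ => ∫⁻ x, ENNReal.ofReal (φ (f x - truncation f k x))) atTop
      (nhds (∫⁻ _ : ℝ, 0)) := by
    refine tendsto_lintegral_of_dominated_convergence (fun x => ENNReal.ofReal (φ (f x)))
      (fun k => h.measurable_ofReal_comp (hm.sub (measurable_truncation hm k)))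
      (fun k => ae_of_all _ fun x => ?_) hf (ae_of_all _ fun x => ?_)
    · exact ENNReal.ofReal_le_ofReal (h.mono (abs_sub_truncation_le x))
    · refine tendsto_const_nhds.congr' ?_
      filter_upwards [eventually_ge_atTop ⌈max |f x| |x|⌉₊] with k hk
      have hk' := max_le_iff.1 (Nat.ceil_le.1 hk)
      simp [truncation_of_le hk'.1 hk'.2, h.zero]
  rw [lintegral_zero] at hlim
  obtain ⟨k, hk⟩ := (hlim.eventually_le_const (pos_iff_ne_zero.2 hε)).exists
  exact ⟨k, k.cast_nonneg, hk⟩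

theorem modular_le_mul_lintegral_enorm (h : IsEvenYoung φ) {L : ℝ} (hL : 0 < L)
    (hf : ∀ x, |f x| ≤ L) : modular φ f ≤ ENNReal.ofReal (φ L / L) * ∫⁻ x, ‖f x‖ₑ := by
  rw [modular, ← lintegral_const_mul' _ _ ENNReal.ofReal_ne_top]
  refine lintegral_mono fun x => ?_
  rw [Real.enorm_eq_ofReal_abs, ← ENNReal.ofReal_mul (div_nonneg (h.nonneg _) hL.le)]
  exact ENNReal.ofReal_le_ofReal (h.map_le_div_mul hL (hf x))

theorem exists_continuous_modular_sub_le (h : IsEvenYoung φ) (hf : Integrable f) {M : ℝ}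
    (hfM : ∀ x, |f x| ≤ M) (hε : ε ≠ 0) :
    ∃ g : ℝ → ℝ, Continuous g ∧ HasCompactSupport g ∧ modular φ (fun x => f x - g x) ≤ ε := by
  have hM : 0 ≤ M := (abs_nonneg _).trans (hfM 0)
  have hL : 0 < 2 * M + 1 := by positivity
  obtain ⟨δ, hδ, hδε⟩ := ENNReal.exists_nnreal_pos_mul_lt
    (ENNReal.ofReal_ne_top (r := φ (2 * M + 1) / (2 * M + 1))) hε
  have hfL : MemLp f 1 volume := memLp_one_iff_integrable.2 hf
  obtain ⟨g, hgs, hfg, hgc, -⟩ := hfL.exists_hasCompactSupport_eLpNorm_sub_le (ε := δ)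
    ENNReal.one_ne_top (by simpa using hδ.ne')
  have hMM : -M ≤ M := neg_le_self hM
  set clamp : ℝ → ℝ := fun t => projIcc (-M) M hMM t
  have hclamp0 : clamp 0 = 0 := by simp only [clamp, projIcc_of_mem hMM ⟨neg_nonpos.2 hM, hM⟩]
  have hclamp : ∀ x, |f x - clamp (g x)| ≤ |f x - g x| := fun x => by
    have hcontract := abs_projIcc_sub_projIcc hMM (c := f x) (d := g x)
    rwa [projIcc_of_mem hMM (abs_le.1 (hfM x))] at hcontract
  have hbound : ∀ x, |f x - clamp (g x)| ≤ 2 * M + 1 := fun x =>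
    (abs_sub _ _).trans (by linarith [hfM x, abs_le.2 (projIcc (-M) M hMM (g x)).2])
  refine ⟨fun x => clamp (g x), by fun_prop, hgs.comp_left hclamp0, ?_⟩
  calc modular φ (fun x => f x - clamp (g x))
      ≤ ENNReal.ofReal (φ (2 * M + 1) / (2 * M + 1)) * ∫⁻ x, ‖f x - clamp (g x)‖ₑ :=
        h.modular_le_mul_lintegral_enorm hL hbound
    _ ≤ ENNReal.ofReal (φ (2 * M + 1) / (2 * M + 1)) * δ := by
        rw [eLpNorm_one_eq_lintegral_enorm] at hfg
        refine mul_le_mul_right ((lintegral_mono fun x => ?_).trans hfg) _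
        rw [Real.enorm_eq_ofReal_abs, Pi.sub_apply, Real.enorm_eq_ofReal_abs]
        exact ENNReal.ofReal_le_ofReal (hclamp x)
    _ ≤ ε := (mul_comm _ _).trans_le hδε.le

theorem exists_contDiff_modular_sub_le (h : IsEvenYoung φ) (hfc : Continuous f)
    (hfs : HasCompactSupport f) (hε : ε ≠ 0) :
    ∃ g : ℝ → ℝ, ContDiff ℝ (⊤ : ℕ∞) g ∧ HasCompactSupport g ∧
      modular φ (fun x => f x - g x) ≤ ε := by
  set K := tsupport f
  obtain ⟨δ, hδ, hδε⟩ := ENNReal.exists_nnreal_pos_mul_lt (ENNReal.mul_ne_top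
    (ENNReal.ofReal_ne_top (r := φ 1)) (hfs.isCompact.measure_ne_top (μ := volume))) hε
  set τ : ℝ := min 1 δ
  have hτ : 0 < τ := lt_min one_pos hδ
  obtain ⟨g, hg, hfg, hsupp⟩ := hfc.exists_contDiff_approx ⊤ (ε := fun _ => τ) continuous_const
    fun _ => hτ
  have hsub : ∀ x, |f x - g x| ≤ |K.indicator (fun _ => τ) x| := fun x => by
    by_cases hx : x ∈ K
    · rw [indicator_of_mem hx, abs_of_pos hτ, abs_sub_comm, ← Real.dist_eq]
      exact (hfg x).le
    · have hfx : f x = 0 := image_eq_zero_of_notMem_tsupport hx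
      have hgx : g x = 0 := by_contra fun hgx => hsupp hgx hfx
      simp [hfx, hgx]
  have hφτ : φ τ ≤ δ * φ 1 := by
    have hconv := h.map_mul_le hτ.le (min_le_left _ _) 1
    rw [mul_one] at hconv
    exact hconv.trans (mul_le_mul_of_nonneg_right (min_le_right _ _) (h.nonneg 1))
  refine ⟨g, hg, hfs.mono hsupp, ?_⟩
  calc modular φ (fun x => f x - g x) ≤ modular φ (K.indicator fun _ => τ) := h.modular_mono hsub
    _ = ENNReal.ofReal (φ τ) * volume K :=
        h.modular_indicator_const (isClosed_tsupport _).measurableSet τ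
    _ ≤ δ * (ENNReal.ofReal (φ 1) * volume K) := by
        rw [← mul_assoc]
        gcongr
        simpa [ENNReal.ofReal_mul] using ENNReal.ofReal_le_ofReal hφτ
    _ ≤ ε := hδε.le

end IsEvenYoung

theorem IsDelta2Young.exists_contDiff_modular_sub_le {φ : ℝ → ℝ} {D : ℝ} (h : IsDelta2Young φ D)
    {f : ℝ → ℝ} (hm : Measurable f) (hf : modular φ f ≠ ⊤) {ε : ENNReal} (hε : ε ≠ 0) :
    ∃ g : ℝ → ℝ, ContDiff ℝ (⊤ : ℕ∞) g ∧ HasCompactSupport g ∧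
      modular φ (fun x => f x - g x) ≤ ε := by
  set d := ENNReal.ofReal D
  obtain ⟨δ, hδ, hδε⟩ := ENNReal.exists_nnreal_pos_mul_lt (a := d * (1 + d * 2))
    (by simp [d, ENNReal.mul_eq_top]) hε
  have hδ' : (δ : ENNReal) ≠ 0 := by simpa using hδ.ne'
  obtain ⟨M, hM, hfM⟩ := h.exists_modular_sub_truncation_le hm hf hδ'
  obtain ⟨k, hkc, hks, hk⟩ := h.exists_continuous_modular_sub_le (integrable_truncation hm hM)
    (abs_truncation_le hM) hδ'
  obtain ⟨g, hg, hgs, hkg⟩ := h.toIsEvenYoung.exists_contDiff_modular_sub_le hkc hks hδ'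
  have htm := measurable_truncation hm M
  refine ⟨g, hg, hgs, ?_⟩
  calc modular φ (fun x => f x - g x)
      = modular φ (fun x => (f x - truncation f M x) +
          ((truncation f M x - k x) + (k x - g x))) := by
        simp only [sub_add_sub_cancel]
    _ ≤ d * (δ + d * (δ + δ)) :=
        (h.modular_add_le (hm.sub htm)).trans (mul_le_mul_right (add_le_add hfM
          ((h.modular_add_le (htm.sub hkc.measurable)).trans
            (mul_le_mul_right (add_le_add hk hkg) _))) _)
    _ = δ * (d * (1 + d * 2)) := by ring
    _ ≤ ε := hδε.le

/-! ### Convergence of truncated Hermite series -/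

section DirichletOp

variable {f g : ℝ → ℝ} {N : ℝ}

theorem measurable_dirichletOp (N : ℝ) (hf : Measurable f) : Measurable (dirichletOp N f) := by
  have hk : Measurable fun z : ℝ × ℝ => N * Real.sinc (N * (z.1 - z.2)) * f z.2 :=
    (measurable_const.mul (Real.continuous_sinc.measurable.comp (by fun_prop))).mul (by fun_prop)
  exact hk.stronglyMeasurable.integral_prod_right'.measurable

theorem dirichletOp_sub (N : ℝ) (hf : Integrable f) (hg : Integrable g) (x : ℝ) :
    dirichletOp N (fun y => f y - g y) x = dirichletOp N f x - dirichletOp N g x := by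
  rw [dirichletOp, dirichletOp, dirichletOp, ← integral_sub (integrable_mul_sinc_mul N hf x)
    (integrable_mul_sinc_mul N hg x)]
  simp only [← mul_sub]

theorem indicator_sub_eq_dirichletOp_add (S : Set ℝ) (u h : ℝ → ℝ) (a : ℝ) (hf : Integrable f)
    (hg : Integrable g) (hgS : Function.support g ⊆ S) (x : ℝ) :
    indicator S u x - h x = indicator S (fun x => u x - a * dirichletOp N f x) x +
      (indicator S (fun x => a * dirichletOp N (fun y => f y - g y) x) x +
        (indicator S (fun x => a * dirichletOp N g x - g x) x + (g x - h x))) := by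
  by_cases hx : x ∈ S
  · simp only [indicator_of_mem hx, dirichletOp_sub N hf hg]
    ring
  · simp [indicator_of_notMem hx, Function.notMem_support.1 fun hgx => hx (hgS hgx)]

end DirichletOp

theorem measurable_hermitePartialSum (n : ℕ) (f : ℝ → ℝ) : Measurable (hermitePartialSum n f) :=
  (continuous_finsetSum _ fun k _ => continuous_const.mul (continuous_hermiteFun k)).measurable

theorem tendsto_hermiteFreq : Tendsto hermiteFreq atTop atTop :=
  Real.tendsto_sqrt_atTop.comp <| Tendsto.const_mul_atTop two_pos <|
    tendsto_atTop_add_const_right _ _ tendsto_natCast_atTop_atTop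

theorem abs_mul_sub_le_of_abs_sub_pi_mul_le {a d g δ : ℝ} (ha : 0 ≤ a) (ha1 : a ≤ 1)
    (hd : |d - Real.pi * g| ≤ δ) : |a * d - g| ≤ δ + |a * Real.pi - 1| * |g| := by
  calc |a * d - g| = |a * (d - Real.pi * g) + (a * Real.pi - 1) * g| := by ring_nf
    _ ≤ |a * (d - Real.pi * g)| + |(a * Real.pi - 1) * g| := abs_add_le _ _
    _ ≤ δ + |a * Real.pi - 1| * |g| := by
        rw [abs_mul, abs_mul, abs_of_nonneg ha]
        gcongr
        exact (mul_le_of_le_one_left (abs_nonneg _) ha1).trans hd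

section TestFunctions

variable {φ : ℝ → ℝ} {D : ℝ} {T : ℕ → ℝ}

theorem IsEvenYoung.modular_ne_top_of_hasCompactSupport (h : IsEvenYoung φ) {g : ℝ → ℝ}
    (hg : Continuous g) (hgs : HasCompactSupport g) : modular φ g ≠ ⊤ :=
  ((h.continuous.comp hg).integrable_of_hasCompactSupport
    (hgs.comp_left h.zero)).lintegral_lt_top.ne

theorem IsDelta2Young.modular_indicator_mul_dirichletOp_sub_le (h : IsDelta2Young φ D)
    {g : ℝ → ℝ} {a N C R : ℝ} (ha : 0 ≤ a) (ha1 : a ≤ 1) (haπ : |a * Real.pi - 1| ≤ 1)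
    (hN : 1 ≤ N) (hC : ∀ x, |dirichletOp N g x - Real.pi * g x| ≤ C / N) :
    modular φ (indicator (Ioo (-R) R) fun x => a * dirichletOp N g x - g x) ≤
      ENNReal.ofReal D * (ENNReal.ofReal (2 * φ C * (R / N)) +
        ENNReal.ofReal |a * Real.pi - 1| * modular φ g) := by
  have hN0 : 0 < N := one_pos.trans_le hN
  set S := Ioo (-R) R
  have hpt : ∀ x, |indicator S (fun x => a * dirichletOp N g x - g x) x| ≤
      |indicator S (fun _ => C / N) x + |a * Real.pi - 1| * (|g x|)| := fun x => by
    by_cases hx : x ∈ S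
    · rw [indicator_of_mem hx, indicator_of_mem hx]
      exact (abs_mul_sub_le_of_abs_sub_pi_mul_le ha ha1 (hC x)).trans (le_abs_self _)
    · rw [indicator_of_notMem hx, abs_zero]
      exact abs_nonneg _
  have hconst : φ (C / N) ≤ φ C / N := by
    rw [div_eq_inv_mul, div_eq_inv_mul]
    exact h.map_mul_le (by positivity) (inv_le_one_of_one_le₀ hN) C
  have hinterval : modular φ (indicator S fun _ => C / N) ≤
      ENNReal.ofReal (2 * φ C * (R / N)) := by
    rw [h.modular_indicator_const measurableSet_Ioo, Real.volume_Ioo]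
    refine (mul_le_mul_left (ENNReal.ofReal_le_ofReal hconst) _).trans_eq ?_
    rw [← ENNReal.ofReal_mul (div_nonneg (h.nonneg C) hN0.le)]
    congr 1
    ring
  have hscaled : modular φ (fun x => |a * Real.pi - 1| * |g x|) ≤
      ENNReal.ofReal |a * Real.pi - 1| * modular φ g :=
    (modular_mul_le (abs_nonneg _) (h.map_mul_le (abs_nonneg _) haπ)).trans
      (mul_le_mul_right (h.modular_mono fun x => (abs_abs _).le) _)
  exact (h.modular_mono hpt).trans ((h.modular_add_le
    (measurable_const.indicator measurableSet_Ioo)).trans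
      (mul_le_mul_right (add_le_add hinterval hscaled) _))

theorem tendsto_div_hermiteFreq (hTinf : Tendsto T atTop atTop)
    (hT : Tendsto (fun n => T n ^ 7 / hermiteFreq n) atTop (nhds 0)) :
    Tendsto (fun n => T n / hermiteFreq n) atTop (nhds 0) := by
  refine squeeze_zero' ?_ ?_ hT
  · filter_upwards [hTinf.eventually_ge_atTop 0] with n hn using
      div_nonneg hn (hermiteFreq_pos n).le
  · filter_upwards [hTinf.eventually_ge_atTop 1] with n hn using
      div_le_div_of_nonneg_right (le_self_pow₀ hn (by norm_num)) (hermiteFreq_pos n).le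

theorem eventually_hermiteAmplitude_le_one : ∀ᶠ n in atTop, hermiteAmplitude n ≤ 1 :=
  tendsto_hermiteAmplitude.eventually_le_const
    (inv_lt_one_of_one_lt₀ (by linarith [Real.pi_gt_three]))

theorem IsDelta2Young.tendsto_modular_indicator_dirichletOp_sub (h : IsDelta2Young φ D)
    (hTinf : Tendsto T atTop atTop)
    (hT : Tendsto (fun n => T n ^ 7 / hermiteFreq n) atTop (nhds 0))
    {g : ℝ → ℝ} (hg : ContDiff ℝ (⊤ : ℕ∞) g) (hgs : HasCompactSupport g) :
    Tendsto (fun n => modular φ (indicator (Ioo (-(T n)) (T n)) fun x =>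
      hermiteAmplitude n * dirichletOp (hermiteFreq n) g x - g x)) atTop (nhds 0) := by
  obtain ⟨C, -, hC⟩ := exists_abs_dirichletOp_sub_le hg hgs
  have hφg := h.modular_ne_top_of_hasCompactSupport hg.continuous hgs
  have hα : Tendsto (fun n => |hermiteAmplitude n * Real.pi - 1|) atTop (nhds 0) := by
    simpa [Real.pi_ne_zero] using ((tendsto_hermiteAmplitude.mul_const Real.pi).sub_const 1).abs
  have hinterval : Tendsto (fun n => ENNReal.ofReal (2 * φ C * (T n / hermiteFreq n))) atTop
      (nhds 0) := by
    simpa using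
      ENNReal.tendsto_ofReal ((tendsto_div_hermiteFreq hTinf hT).const_mul (2 * φ C))
  have hscaled : Tendsto (fun n => ENNReal.ofReal |hermiteAmplitude n * Real.pi - 1| *
      modular φ g) atTop (nhds 0) := by
    simpa using ENNReal.Tendsto.mul_const (ENNReal.tendsto_ofReal hα) (Or.inr hφg)
  have hbound := ENNReal.Tendsto.const_mul (hinterval.add hscaled)
    (Or.inr (ENNReal.ofReal_ne_top (r := D)))
  rw [add_zero, mul_zero] at hbound
  refine tendsto_of_tendsto_of_tendsto_of_le_of_le' tendsto_const_nhds hbound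
    (Eventually.of_forall fun n => zero_le) ?_
  filter_upwards [eventually_hermiteAmplitude_le_one, hα.eventually_le_const one_pos,
    tendsto_hermiteFreq.eventually_ge_atTop 1] with n hA hα1 hN
  exact h.modular_indicator_mul_dirichletOp_sub_le (hermiteAmplitude_nonneg n) hA hα1 hN
    (hC _ (hermiteFreq_pos n))

end TestFunctions

theorem IsDelta2Young.modular_add_add_add_le {φ : ℝ → ℝ} {D : ℝ} (h : IsDelta2Young φ D)
    {α : Type*} [MeasurableSpace α] {μ : Measure α} {f₁ f₂ f₃ f₄ : α → ℝ} (h₁ : Measurable f₁)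
    (h₂ : Measurable f₂) (h₃ : Measurable f₃) :
    modular φ (fun x => f₁ x + (f₂ x + (f₃ x + f₄ x))) μ ≤ ENNReal.ofReal D ^ 3 *
      (modular φ f₁ μ + modular φ f₂ μ + modular φ f₃ μ + modular φ f₄ μ) := by
  set d := ENNReal.ofReal D
  have hd : 1 ≤ d := ENNReal.one_le_ofReal.2 h.one_le
  calc modular φ (fun x => f₁ x + (f₂ x + (f₃ x + f₄ x))) μ
      ≤ d * (modular φ f₁ μ + d * (modular φ f₂ μ + d * (modular φ f₃ μ + modular φ f₄ μ))) :=
        (h.modular_add_le h₁).trans <| mul_le_mul_right (add_le_add le_rfl <|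
          (h.modular_add_le h₂).trans <| mul_le_mul_right (add_le_add le_rfl <|
            h.modular_add_le h₃) _) _
    _ ≤ d * (d ^ 2 * modular φ f₁ μ + d * (d * modular φ f₂ μ +
          d * (modular φ f₃ μ + modular φ f₄ μ))) := by
        gcongr
        · exact le_mul_of_one_le_left' (one_le_pow₀ hd)
        · exact le_mul_of_one_le_left' hd
    _ = d ^ 3 * (modular φ f₁ μ + modular φ f₂ μ + modular φ f₃ μ + modular φ f₄ μ) := by ring

theorem abs_indicator_sub_le_abs_sub {α : Type*} {S : Set α} (f : α → ℝ) {g : α → ℝ}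
    (hgS : Function.support g ⊆ S) (x : α) : |indicator S f x - g x| ≤ |f x - g x| := by
  by_cases hx : x ∈ S
  · rw [indicator_of_mem hx]
  · simp [indicator_of_notMem hx, Function.notMem_support.1 fun hgx => hx (hgS hgx)]

namespace IsRegularYoung

variable {φ : ℝ → ℝ} {D c : ℝ} {f g : ℝ → ℝ}

theorem exists_modular_indicator_mul_dirichletOp_le (h : IsRegularYoung φ D c) :
    ∃ B : NNReal, ∀ (S : Set ℝ) (a N : ℝ) (f : ℝ → ℝ), |a| ≤ 1 → 0 < N → Measurable f →
      Integrable f → HasCompactSupport f →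
        modular φ (indicator S fun x => a * dirichletOp N f x) ≤ B * modular φ f := by
  obtain ⟨B, hB⟩ := h.exists_modular_dirichletOp_le
  refine ⟨B, fun S a N f ha hN hm hf hfs =>
    (h.modular_mono fun x => ?_).trans (hB N f hN hm hf hfs)⟩
  by_cases hx : x ∈ S
  · rw [indicator_of_mem hx, abs_mul]
    exact mul_le_of_le_one_left (abs_nonneg _) ha
  · simp [indicator_of_notMem hx]

theorem exists_modular_hermitePartialSum_sub_le (h : IsRegularYoung φ D c) (h1 : 0 < φ 1) :
    ∃ K : NNReal, ∀ (n : ℕ) (T : ℝ) (f g : ℝ → ℝ), 0 < T →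
      2 * ((T ^ 2 + 1) * T) ≤ hermiteFreq n → hermiteRemainder n T ≤ 1 →
      hermiteAmplitude n ≤ 1 → Measurable f → modular φ f ≠ ⊤ → Continuous g →
      HasCompactSupport g → Function.support g ⊆ Ioo (-T) T →
      modular φ (fun x =>
          indicator (Ioo (-T) T) (hermitePartialSum n (indicator (Ioo (-T) T) f)) x - f x) ≤
        K * (ENNReal.ofReal (hermiteRemainder n T) * modular φ f +
          modular φ (fun x => f x - g x) + modular φ (indicator (Ioo (-T) T) fun x =>
            hermiteAmplitude n * dirichletOp (hermiteFreq n) g x - g x)) := by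
  obtain ⟨B, hB⟩ := h.exists_modular_indicator_mul_dirichletOp_le
  refine ⟨D.toNNReal ^ 3 * (B + 1), fun n T f g hT0 hT hR hA hm hf hg hgs hgS => ?_⟩
  set S := Ioo (-T) T with hS
  set F := indicator S f
  set a := hermiteAmplitude n
  set N := hermiteFreq n
  have hSm : MeasurableSet S := measurableSet_Ioo
  have hFm : Measurable F := hm.indicator hSm
  have hFi : Integrable F :=
    h.integrable_indicator_of_modular_ne_top h1 hm hf hSm (by simp [hS])
  have hFS : Function.support F ⊆ Icc (-T) T :=
    support_indicator_subset.trans Ioo_subset_Icc_self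
  have hFs : HasCompactSupport F := HasCompactSupport.of_support_subset_isCompact isCompact_Icc hFS
  have hgi := hg.integrable_of_hasCompactSupport (μ := volume) hgs
  have hasymp : modular φ (indicator S fun x => hermitePartialSum n F x - a * dirichletOp N F x) ≤
      ENNReal.ofReal (hermiteRemainder n T) * modular φ f :=
    (h.modular_indicator_hermitePartialSum_sub_le n hT0 hT hR hFm hFi hFS).trans
      (mul_le_mul_right (h.modular_mono (norm_indicator_le_norm_self f)) _)
  have hriesz : modular φ (indicator S fun x => a * dirichletOp N (fun y => F y - g y) x) ≤
      B * modular φ (fun x => f x - g x) :=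
    (hB S a N _ ((abs_of_nonneg (hermiteAmplitude_nonneg n)).trans_le hA) (hermiteFreq_pos n)
      (hFm.sub hg.measurable) (hFi.sub hgi) (hFs.sub hgs)).trans
      (mul_le_mul_right (h.modular_mono (abs_indicator_sub_le_abs_sub f hgS)) _)
  have hswap : modular φ (fun x => g x - f x) ≤ modular φ fun x => f x - g x :=
    h.modular_mono fun x => (abs_sub_comm _ _).le
  simp only [indicator_sub_eq_dirichletOp_add (N := N) S (hermitePartialSum n F) f a hFi hgi hgS]
  refine (h.modular_add_add_add_le
    (((measurable_hermitePartialSum n F).sub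
      ((measurable_dirichletOp N hFm).const_mul a)).indicator hSm)
    (((measurable_dirichletOp N (hFm.sub hg.measurable)).const_mul a).indicator hSm)
    ((((measurable_dirichletOp N hg.measurable).const_mul a).sub hg.measurable).indicator
      hSm)).trans ?_
  push_cast
  rw [mul_assoc]
  refine mul_le_mul_right
    ((add_le_add (add_le_add (add_le_add hasymp hriesz) le_rfl) hswap).trans ?_) _
  set I := ENNReal.ofReal (hermiteRemainder n T) * modular φ f
  set J := modular φ fun x => f x - g x
  set L := modular φ (indicator S fun x => a * dirichletOp N g x - g x)
  calc I + B * J + L + J ≤ I + B * J + L + J + B * (I + L) := le_self_add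
    _ = (B + 1) * (I + J + L) := by ring

theorem tendsto_modular_hermitePartialSum_sub (h : IsRegularYoung φ D c) (h1 : 0 < φ 1)
    {T : ℕ → ℝ} (hTinf : Tendsto T atTop atTop)
    (hT : Tendsto (fun n => T n ^ 7 / hermiteFreq n) atTop (nhds 0))
    (hm : Measurable f) (hf : modular φ f ≠ ⊤) :
    Tendsto (fun n => modular φ fun x => indicator (Ioo (-(T n)) (T n))
      (hermitePartialSum n (indicator (Ioo (-(T n)) (T n)) f)) x - f x) atTop (nhds 0) := by
  obtain ⟨K, hK⟩ := h.exists_modular_hermitePartialSum_sub_le h1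
  refine ENNReal.tendsto_nhds_zero.2 fun ε hε => ?_
  obtain ⟨τ, hτ, hτε⟩ := ENNReal.exists_nnreal_pos_mul_lt (ENNReal.coe_ne_top (r := K)) hε.ne'
  obtain ⟨g, hg, hgs, hfg⟩ := h.exists_contDiff_modular_sub_le hm hf
    (ENNReal.coe_ne_zero.2 hτ.ne')
  have hRlim := tendsto_hermiteRemainder hTinf hT
  have hasymp : Tendsto (fun n => ENNReal.ofReal (hermiteRemainder n (T n)) * modular φ f) atTop
      (nhds 0) := by
    simpa using ENNReal.Tendsto.mul_const (ENNReal.tendsto_ofReal hRlim) (Or.inr hf)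
  have hbound := ENNReal.Tendsto.const_mul (a := K)
    ((hasymp.add_const (modular φ fun x => f x - g x)).add
      (h.tendsto_modular_indicator_dirichletOp_sub hTinf hT hg hgs)) (Or.inr ENNReal.coe_ne_top)
  rw [zero_add, add_zero] at hbound
  have hlim : K * modular φ (fun x => f x - g x) < ε :=
    (mul_le_mul_right hfg _).trans_lt ((mul_comm _ _).trans_lt hτε)
  obtain ⟨r, hr⟩ := hgs.isCompact.isBounded.subset_closedBall 0
  filter_upwards [hbound.eventually_le_const hlim, hRlim.eventually_le_const one_pos,
    eventually_two_mul_le_hermiteFreq hTinf hT, hTinf.eventually_gt_atTop 0,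
    hTinf.eventually_gt_atTop r, eventually_hermiteAmplitude_le_one] with n hn hR hTN hT0 hTr hA
  refine (hK n (T n) f g hT0 hTN hR hA hm hf hg.continuous hgs fun y hy => ?_).trans hn
  have hyr : |y| ≤ r := by simpa using hr (subset_tsupport g hy)
  exact abs_lt.1 (hyr.trans_lt hTr)

end IsRegularYoung

/-! ### Young functions as even real functions -/

namespace YoungFunction

variable {A : YoungFunction}

theorem toFun_mul_le (A : YoungFunction) {k t : ℝ} (hk : 0 ≤ k) (hk1 : k ≤ 1) (ht : 0 ≤ t) :
    A.toFun (k * t) ≤ ENNReal.ofReal k * A.toFun t := by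
  simpa [A.zero'] using A.convex' ht le_rfl hk (sub_nonneg.2 hk1) (add_sub_cancel k 1)

theorem toFun_mono (A : YoungFunction) {s t : ℝ} (hs : 0 ≤ s) (hst : s ≤ t) :
    A.toFun s ≤ A.toFun t := by
  rcases hs.eq_or_lt with rfl | hs
  · simp [A.zero']
  · have ht := hs.trans_le hst
    have hratio : s / t ≤ 1 := (div_le_one ht).2 hst
    calc A.toFun s = A.toFun (s / t * t) := by rw [div_mul_cancel₀ _ ht.ne']
      _ ≤ ENNReal.ofReal (s / t) * A.toFun t := A.toFun_mul_le (by positivity) hratio ht.le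
      _ ≤ A.toFun t := mul_le_of_le_one_left' (ENNReal.ofReal_le_one.2 hratio)

theorem exists_toFun_ne_zero (A : YoungFunction) : ∃ t, 0 < t ∧ A.toFun t ≠ 0 := by
  obtain ⟨s, t, hs, ht, hst⟩ := A.nonconstant'
  by_contra! h
  exact hst ((h s hs).trans (h t ht).symm)

theorem exists_toFun_ne_top (A : YoungFunction) : ∃ t, 0 < t ∧ A.toFun t ≠ ⊤ := by
  obtain ⟨s, t, hs, ht, hst⟩ := A.nonconstant'
  by_contra! h
  exact hst ((h s hs).trans (h t ht).symm)

theorem toFun_lt_top_of_delta2 {C : ℝ}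
    (hC : ∀ t, 0 < t → A.toFun (2 * t) ≤ ENNReal.ofReal C * A.toFun t) {t : ℝ} (ht : 0 ≤ t) :
    A.toFun t < ⊤ := by
  obtain ⟨s, hs, hsfin⟩ := A.exists_toFun_ne_top
  have hpow : ∀ k : ℕ, A.toFun (2 ^ k * s) < ⊤ := fun k => by
    induction k with
    | zero => simpa using hsfin.lt_top
    | succ k ih =>
      rw [pow_succ', mul_assoc]
      exact (hC _ (by positivity)).trans_lt (ENNReal.mul_lt_top ENNReal.ofReal_lt_top ih)
  obtain ⟨k, hk⟩ := pow_unbounded_of_one_lt (t / s) one_lt_two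
  exact (A.toFun_mono ht ((div_lt_iff₀ hs).1 hk).le).trans_lt (hpow k)

/-- The even extension of a Young function, as a real-valued function. It is meant for
finite-valued `A`: infinite values become zero. -/
noncomputable def evenReal (A : YoungFunction) (t : ℝ) : ℝ := (A.toFun |t|).toReal

theorem evenReal_nonneg (A : YoungFunction) (t : ℝ) : 0 ≤ A.evenReal t := ENNReal.toReal_nonneg

theorem ofReal_evenReal (hA : ∀ t, 0 ≤ t → A.toFun t < ⊤) (t : ℝ) :
    ENNReal.ofReal (A.evenReal t) = A.toFun |t| :=
  ENNReal.ofReal_toReal (hA _ (abs_nonneg t)).ne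

theorem modular_evenReal (hA : ∀ t, 0 ≤ t → A.toFun t < ⊤) {α : Type*} [MeasurableSpace α]
    (μ : Measure α) (f : α → ℝ) : modular A.evenReal f μ = ∫⁻ x, A.toFun |f x| ∂μ := by
  simp only [modular, ofReal_evenReal hA]

theorem isEvenYoung_evenReal (hA : ∀ t, 0 ≤ t → A.toFun t < ⊤) : IsEvenYoung A.evenReal where
  even t := by simp [evenReal]
  zero := by simp [evenReal, A.zero']
  convex := by
    refine ⟨convex_univ, fun x _ y _ a b ha hb hab => ?_⟩
    have hx := A.evenReal_nonneg x
    have hy := A.evenReal_nonneg y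
    have hle : |a * x + b * y| ≤ a * |x| + b * |y| := by
      simpa only [abs_mul, abs_of_nonneg ha, abs_of_nonneg hb] using abs_add_le (a * x) (b * y)
    rw [smul_eq_mul, smul_eq_mul, smul_eq_mul, smul_eq_mul,
      ← ENNReal.ofReal_le_ofReal_iff (by positivity), ENNReal.ofReal_add (by positivity)
      (by positivity), ENNReal.ofReal_mul ha, ENNReal.ofReal_mul hb, ofReal_evenReal hA,
      ofReal_evenReal hA, ofReal_evenReal hA]
    exact (A.toFun_mono (abs_nonneg _) hle).trans
      (A.convex' (abs_nonneg x) (abs_nonneg y) ha hb hab)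

theorem isDelta2Young_evenReal {C : ℝ}
    (hC : ∀ t, 0 < t → A.toFun (2 * t) ≤ ENNReal.ofReal C * A.toFun t) :
    IsDelta2Young A.evenReal (max C 1) where
  toIsEvenYoung := isEvenYoung_evenReal fun _ => toFun_lt_top_of_delta2 hC
  one_le := le_max_right _ _
  map_two_mul_le t := by
    have hA : ∀ t, 0 ≤ t → A.toFun t < ⊤ := fun _ => toFun_lt_top_of_delta2 hC
    have hC1 : 0 ≤ max C 1 := zero_le_one.trans (le_max_right _ _)
    rcases eq_or_ne t 0 with rfl | ht
    · simp [evenReal, A.zero']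
    · rw [← ENNReal.ofReal_le_ofReal_iff (mul_nonneg hC1 (A.evenReal_nonneg t)),
        ENNReal.ofReal_mul hC1, ofReal_evenReal hA, ofReal_evenReal hA, abs_mul, abs_two]
      exact (hC _ (abs_pos.2 ht)).trans
        (mul_le_mul_left (ENNReal.ofReal_le_ofReal (le_max_left _ _)) _)

theorem one_lt_of_nabla2 (hA : ∀ t, 0 ≤ t → A.toFun t < ⊤) {c : ℝ} (hc : 0 < c)
    (h : ∀ t, 0 < t → A.toFun t ≤ ENNReal.ofReal (1 / (2 * c)) * A.toFun (c * t)) : 1 < c := by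
  by_contra! hc1
  obtain ⟨t, ht, ht0⟩ := A.exists_toFun_ne_zero
  have hhalf : A.toFun t ≤ ENNReal.ofReal (1 / 2) * A.toFun t := by
    calc A.toFun t ≤ ENNReal.ofReal (1 / (2 * c)) * (ENNReal.ofReal c * A.toFun t) :=
          (h t ht).trans (mul_le_mul_right (A.toFun_mul_le hc.le hc1 ht.le) _)
      _ = ENNReal.ofReal (1 / 2) * A.toFun t := by
          rw [← mul_assoc, ← ENNReal.ofReal_mul (by positivity)]
          congr 2
          field_simp
  have hreal := ENNReal.toReal_mono (ENNReal.mul_ne_top ENNReal.ofReal_ne_top (hA t ht.le).ne) hhalf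
  rw [ENNReal.toReal_mul, ENNReal.toReal_ofReal (by norm_num)] at hreal
  linarith [ENNReal.toReal_pos ht0 (hA t ht.le).ne]

theorem isNabla2Young_evenReal (hA : ∀ t, 0 ≤ t → A.toFun t < ⊤) {c : ℝ} (hc : 0 < c)
    (h : ∀ t, 0 < t → A.toFun t ≤ ENNReal.ofReal (1 / (2 * c)) * A.toFun (c * t)) :
    IsNabla2Young A.evenReal c where
  toIsEvenYoung := isEvenYoung_evenReal hA
  one_lt := one_lt_of_nabla2 hA hc h
  two_mul_le_map t := by
    have hct := A.evenReal_nonneg (c * t)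
    rcases eq_or_ne t 0 with rfl | ht
    · simp [evenReal, A.zero']
    · rw [← le_div_iff₀' (by positivity), ← one_div_mul_eq_div,
        ← ENNReal.ofReal_le_ofReal_iff (by positivity), ENNReal.ofReal_mul (by positivity),
        ofReal_evenReal hA, ofReal_evenReal hA, abs_mul, abs_of_pos hc]
      exact h _ (abs_pos.2 ht)

theorem evenReal_one_pos {C : ℝ}
    (hC : ∀ t, 0 < t → A.toFun (2 * t) ≤ ENNReal.ofReal C * A.toFun t) : 0 < A.evenReal 1 := by
  obtain ⟨t, ht, ht0⟩ := A.exists_toFun_ne_zero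
  refine (isDelta2Young_evenReal hC).pos_of_ne_zero (s := t) ?_ one_ne_zero
  rw [evenReal, abs_of_pos ht]
  exact (ENNReal.toReal_pos ht0 (toFun_lt_top_of_delta2 hC ht.le).ne).ne'

end YoungFunction

section Growth

variable {T : ℕ → ℝ}

theorem tendsto_pow_div_hermiteFreq
    (hT : Tendsto (fun n : ℕ => T n / (n : ℝ) ^ ((1 : ℝ) / 14)) atTop (nhds 0)) :
    Tendsto (fun n => T n ^ 7 / hermiteFreq n) atTop (nhds 0) := by
  have hpow := (hT.pow 7).norm
  rw [zero_pow (by norm_num), norm_zero] at hpow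
  refine squeeze_zero_norm' ?_ hpow
  filter_upwards [eventually_gt_atTop 0] with n hn
  have hn' : (0 : ℝ) < n := by exact_mod_cast hn
  have hle : ((n : ℝ) ^ ((1 : ℝ) / 14)) ^ 7 ≤ hermiteFreq n := by
    rw [← Real.rpow_mul_natCast n.cast_nonneg, hermiteFreq, show (1 : ℝ) / 14 * (7 : ℕ) = 1 / 2 by
      norm_num, ← Real.sqrt_eq_rpow]
    exact Real.sqrt_le_sqrt (by linarith)
  rw [div_pow, norm_div, norm_div, Real.norm_of_nonneg (hermiteFreq_pos n).le,
    Real.norm_of_nonneg (by positivity : 0 ≤ ((n : ℝ) ^ ((1 : ℝ) / 14)) ^ 7)]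
  gcongr

theorem tendsto_div_rpow_of_le {a b : ℝ} (hab : a ≤ b)
    (hT : Tendsto (fun n : ℕ => T n / (n : ℝ) ^ a) atTop (nhds 0)) :
    Tendsto (fun n : ℕ => T n / (n : ℝ) ^ b) atTop (nhds 0) := by
  have hnorm := hT.norm
  rw [norm_zero] at hnorm
  refine squeeze_zero_norm' ?_ hnorm
  filter_upwards [eventually_ge_atTop 1] with n hn
  have hn' : (1 : ℝ) ≤ n := by exact_mod_cast hn
  rw [norm_div, norm_div, Real.norm_of_nonneg (by positivity : 0 ≤ (n : ℝ) ^ a),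
    Real.norm_of_nonneg (by positivity : 0 ≤ (n : ℝ) ^ b)]
  gcongr

end Growth

theorem hermite_orlicz_modular_convergence_delta2_nabla2_general (A : YoungFunction)
    (hDelta2 : ∃ C : ℝ, ∀ t, 0 < t → A.toFun (2 * t) ≤ ENNReal.ofReal C * A.toFun t)
    (hNabla2 : ∃ c : ℝ, 0 < c ∧ ∀ t, 0 < t →
      A.toFun t ≤ ENNReal.ofReal (1 / (2 * c)) * A.toFun (c * t))
    {T : ℕ → ℝ} (hTinf : Tendsto T atTop atTop)
    (hTslow : Tendsto (fun n : ℕ => T n / (n : ℝ) ^ ((1 : ℝ) / 14)) atTop (nhds 0))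
    {f : ℝ → ℝ} (hmeas : Measurable f)
    (hf : ∃ c' : ℝ, 0 < c' ∧ ∫⁻ x, A.toFun (c' * |f x|) < ⊤) :
    Tendsto (fun n => ∫⁻ x, A.toFun |indicator (Ioo (-(T n)) (T n))
      (hermitePartialSum n (indicator (Ioo (-(T n)) (T n)) f)) x - f x|) atTop (nhds 0) := by
  obtain ⟨C, hC⟩ := hDelta2
  obtain ⟨c, hc, hN⟩ := hNabla2
  obtain ⟨c', hc', hf⟩ := hf
  have hA : ∀ t, 0 ≤ t → A.toFun t < ⊤ := fun _ => YoungFunction.toFun_lt_top_of_delta2 hC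
  have hφ : IsRegularYoung A.evenReal (max C 1) c :=
    { YoungFunction.isDelta2Young_evenReal hC, YoungFunction.isNabla2Young_evenReal hA hc hN with }
  have hmod : modular A.evenReal f ≠ ⊤ := by
    refine hφ.modular_ne_top_of_mul hc'.ne' ?_
    simpa only [YoungFunction.modular_evenReal hA, abs_mul, abs_of_pos hc'] using hf.ne
  simpa only [YoungFunction.modular_evenReal hA] using hφ.tendsto_modular_hermitePartialSum_sub
    (YoungFunction.evenReal_one_pos hC) hTinf (tendsto_pow_div_hermiteFreq hTslow) hmeas hmod

/-- **Modular convergence for `Δ₂ ∩ ∇₂` Young functions.**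
If a finite-valued Young function `A` satisfies the `Δ₂` and `∇₂` conditions, then the
truncated partial Hermite sums converge in the `A`-modular for every `f ∈ L^A(ℝ)`. -/
theorem hermite_orlicz_modular_convergence_delta2_nabla2
    (A : YoungFunction)
    (hAfin : ∀ t : ℝ, 0 ≤ t → A.toFun t < ⊤)
    (hDelta2 : ∃ C : ℝ, 0 < C ∧ ∀ t : ℝ, 0 < t →
      A.toFun (2 * t) ≤ ENNReal.ofReal C * A.toFun t)
    (hNabla2 : ∃ c : ℝ, 0 < c ∧ ∀ t : ℝ, 0 < t →
      A.toFun t ≤ ENNReal.ofReal (1 / (2 * c)) * A.toFun (c * t))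
    (T : ℕ → ℝ) (hTpos : ∀ n, 0 < T n)
    (hTinf : Tendsto T atTop atTop)
    (hTslow : Tendsto (fun n : ℕ => T n / (n : ℝ) ^ ((1 : ℝ) / 34)) atTop (nhds 0))
    (f : ℝ → ℝ) (hmeas : Measurable f)
    (hf : ∃ c' : ℝ, 0 < c' ∧ (∫⁻ x : ℝ, A.toFun (c' * |f x|)) < ⊤) :
    Tendsto (fun n : ℕ =>
        ∫⁻ x : ℝ, A.toFun
          (|Set.indicator (Set.Ioo (-(T n)) (T n))
              (hermitePartialSum n (Set.indicator (Set.Ioo (-(T n)) (T n)) f)) x - f x|))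
      atTop (nhds 0) := by
  obtain ⟨C, -, hC⟩ := hDelta2
  exact hermite_orlicz_modular_convergence_delta2_nabla2_general A ⟨C, hC⟩ hNabla2 hTinf
    (tendsto_div_rpow_of_le (by norm_num) hTslow) hmeas hf
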